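/- For every integer j with 0 ≤ j < 54 one has dim S_{j,2}(Γ₂) ≤ 1, and for every integer j with 0 ≤ j < 66 one has dim S_{j,2}(Γ₂) ≤ 2. -/

import Mathlib

noncomputable section

open Matrix Complex Filter Topology

/-- The standard symplectic form matrix of size 4. -/
def J4 : Matrix (Fin 4) (Fin 4) ℤ := !![0,0,1,0; 0,0,0,1; -1,0,0,0; 0,-1,0,0]

/-- The Siegel modular group `Γ₂ = Sp(4,ℤ)`, as a set of 4×4 integer matrices. -/
def Sp4Z : Set (Matrix (Fin 4) (Fin 4) ℤ) := {γ | γᵀ * J4 * γ = J4}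

/-- The principal congruence subgroup `Γ₂[2]` of level 2. -/
def Sp4Z2 : Set (Matrix (Fin 4) (Fin 4) ℤ) :=
  {γ | γ ∈ Sp4Z ∧ ∀ i j, ((γ i j : ZMod 2) = if i = j then 1 else 0)}

/-- The Siegel upper half space of degree 2: symmetric 2×2 complex matrices with
positive definite imaginary part (encoded as functions `Fin 2 → Fin 2 → ℂ`). -/
def H2 : Set (Fin 2 → Fin 2 → ℂ) :=
  {τ | (Matrix.of τ).IsSymm ∧ (Matrix.of fun i j => (τ i j).im).PosDef}

/-- The four 2×2 blocks of a 4×4 integer matrix, as complex matrices. -/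
def blk (γ : Matrix (Fin 4) (Fin 4) ℤ) (r s : Fin 2) : Matrix (Fin 2) (Fin 2) ℂ :=
  Matrix.of fun i j =>
    ((γ ⟨2 * (r : ℕ) + (i : ℕ), by have h1 := r.isLt; have h2 := i.isLt; omega⟩
        ⟨2 * (s : ℕ) + (j : ℕ), by have h1 := s.isLt; have h2 := j.isLt; omega⟩ : ℤ) : ℂ)

/-- The factor `cτ + d`. -/
def den (γ : Matrix (Fin 4) (Fin 4) ℤ) (τ : Fin 2 → Fin 2 → ℂ) : Matrix (Fin 2) (Fin 2) ℂ :=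
  blk γ 1 0 * Matrix.of τ + blk γ 1 1

/-- The action `γ·τ = (aτ+b)(cτ+d)⁻¹` of `Sp(4)` on the Siegel upper half space. -/
def moeb (γ : Matrix (Fin 4) (Fin 4) ℤ) (τ : Fin 2 → Fin 2 → ℂ) : Fin 2 → Fin 2 → ℂ :=
  fun i j => ((blk γ 0 0 * Matrix.of τ + blk γ 0 1) * (den γ τ)⁻¹) i j

/-- Matrix coefficients of the `j`-th symmetric power of the standard representation of
`GL(2,ℂ)`, in the basis `x₁^(j-i) x₂^i`. -/
def symCoeff (j : ℕ) (m : Matrix (Fin 2) (Fin 2) ℂ) (l i : Fin (j + 1)) : ℂ :=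
  (((Polynomial.C (m 0 0) + Polynomial.C (m 1 0) * Polynomial.X) ^ (j - (l : ℕ)) *
    (Polynomial.C (m 0 1) + Polynomial.C (m 1 1) * Polynomial.X) ^ (l : ℕ)).coeff i)

/-- The `j`-th symmetric power `Sym^j(m)` acting on coordinate vectors. -/
def symAct (j : ℕ) (m : Matrix (Fin 2) (Fin 2) ℂ) (v : Fin (j + 1) → ℂ) : Fin (j + 1) → ℂ :=
  fun i => ∑ l, symCoeff j m l i * v l

lemma symAct_add (j : ℕ) (m : Matrix (Fin 2) (Fin 2) ℂ) (v w : Fin (j + 1) → ℂ) :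
    symAct j m (v + w) = symAct j m v + symAct j m w := by
  funext i
  simp [symAct, mul_add, Finset.sum_add_distrib]

lemma symAct_smul (j : ℕ) (m : Matrix (Fin 2) (Fin 2) ℂ) (a : ℂ) (v : Fin (j + 1) → ℂ) :
    symAct j m (a • v) = a • symAct j m v := by
  funext i
  simp only [symAct, Pi.smul_apply, smul_eq_mul, Finset.mul_sum]
  exact Finset.sum_congr rfl fun l _ => by ring

lemma symAct_zero (j : ℕ) (m : Matrix (Fin 2) (Fin 2) ℂ) : symAct j m 0 = 0 := by
  funext i; simp [symAct]

/-- The weight `(j,k)` automorphy action `Sym^j(m) ⊗ det(m)^k`. -/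
def wt (j : ℕ) (k : ℤ) (m : Matrix (Fin 2) (Fin 2) ℂ) (v : Fin (j + 1) → ℂ) :
    Fin (j + 1) → ℂ :=
  (m.det ^ k) • symAct j m v

lemma wt_add (j : ℕ) (k : ℤ) (m : Matrix (Fin 2) (Fin 2) ℂ) (v w : Fin (j + 1) → ℂ) :
    wt j k m (v + w) = wt j k m v + wt j k m w := by
  simp [wt, symAct_add, smul_add]

lemma wt_smul (j : ℕ) (k : ℤ) (m : Matrix (Fin 2) (Fin 2) ℂ) (a : ℂ) (v : Fin (j + 1) → ℂ) :
    wt j k m (a • v) = a • wt j k m v := by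
  rw [wt, wt, symAct_smul, smul_comm]

lemma wt_zero (j : ℕ) (k : ℤ) (m : Matrix (Fin 2) (Fin 2) ℂ) : wt j k m 0 = 0 := by
  simp [wt, symAct_zero]

/-- The slash operation `(F|γ)(τ) = Sym^j(cτ+d)⁻¹ det(cτ+d)⁻ᵏ F(γ·τ)`. -/
def slashS (j : ℕ) (k : ℤ) (γ : Matrix (Fin 4) (Fin 4) ℤ)
    (F : (Fin 2 → Fin 2 → ℂ) → (Fin (j + 1) → ℂ)) (τ : Fin 2 → Fin 2 → ℂ) :
    Fin (j + 1) → ℂ :=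
  ((den γ τ).det ^ (-k)) • symAct j ((den γ τ)⁻¹) (F (moeb γ τ))

lemma slashS_add (j : ℕ) (k : ℤ) (γ : Matrix (Fin 4) (Fin 4) ℤ)
    (F G : (Fin 2 → Fin 2 → ℂ) → (Fin (j + 1) → ℂ)) (τ : Fin 2 → Fin 2 → ℂ) :
    slashS j k γ (F + G) τ = slashS j k γ F τ + slashS j k γ G τ := by
  simp [slashS, symAct_add, smul_add]

lemma slashS_smul (j : ℕ) (k : ℤ) (γ : Matrix (Fin 4) (Fin 4) ℤ) (a : ℂ)
    (F : (Fin 2 → Fin 2 → ℂ) → (Fin (j + 1) → ℂ)) (τ : Fin 2 → Fin 2 → ℂ) :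
    slashS j k γ (a • F) τ = a • slashS j k γ F τ := by
  simp only [slashS, Pi.smul_apply, symAct_smul]
  rw [smul_comm]

lemma slashS_zero (j : ℕ) (k : ℤ) (γ : Matrix (Fin 4) (Fin 4) ℤ) (τ : Fin 2 → Fin 2 → ℂ) :
    slashS j k γ (0 : (Fin 2 → Fin 2 → ℂ) → (Fin (j + 1) → ℂ)) τ = 0 := by
  simp [slashS, symAct_zero]

/-- The diagonal point `diag(τ₁,τ₂)` of the Siegel upper half space. -/
def diagH (τ₁ τ₂ : ℂ) : Fin 2 → Fin 2 → ℂ :=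
  fun i j => if i = j then (if i = 0 then τ₁ else τ₂) else 0

/-- `F` is a Siegel cusp form of degree 2 and weight `(j,k)` on `Γ`, with character `χ`:
holomorphic on `ℍ₂`, transforming by `F(γ·τ) = χ(γ) Sym^j(cτ+d) det(cτ+d)^k F(τ)` for `γ ∈ Γ`,
with `(F|γ)(diag(τ₁,it)) → 0` as `t → ∞` for every `γ ∈ Γ₂`, and (normalization) vanishing
off `ℍ₂`. -/
def IsSiegelCuspForm (j : ℕ) (k : ℤ) (Γ : Set (Matrix (Fin 4) (Fin 4) ℤ))
    (χ : Matrix (Fin 4) (Fin 4) ℤ → ℂ)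
    (F : (Fin 2 → Fin 2 → ℂ) → (Fin (j + 1) → ℂ)) : Prop :=
  DifferentiableOn ℂ F H2 ∧
  (∀ γ ∈ Γ, ∀ τ ∈ H2, F (moeb γ τ) = χ γ • wt j k (den γ τ) (F τ)) ∧
  (∀ γ ∈ Sp4Z, ∀ τ₁ : ℂ, 0 < τ₁.im →
    Tendsto (fun t : ℝ => slashS j k γ F (diagH τ₁ (t * Complex.I))) atTop (𝓝 0)) ∧
  (∀ τ, τ ∉ H2 → F τ = 0)

/-- The space `S_{j,k}(Γ, χ)` of Siegel cusp forms of degree 2 and weight `(j,k)` on `Γ`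
with character `χ`, as a complex vector space. -/
def SiegelCusp (j : ℕ) (k : ℤ) (Γ : Set (Matrix (Fin 4) (Fin 4) ℤ))
    (χ : Matrix (Fin 4) (Fin 4) ℤ → ℂ) :
    Submodule ℂ ((Fin 2 → Fin 2 → ℂ) → (Fin (j + 1) → ℂ)) where
  carrier := {F | IsSiegelCuspForm j k Γ χ F}
  add_mem' := by
    rintro F G hF hG
    refine ⟨hF.1.add hG.1, ?_, ?_, ?_⟩
    · intro γ hγ τ hτ
      show F (moeb γ τ) + G (moeb γ τ) = χ γ • wt j k (den γ τ) (F τ + G τ)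
      rw [wt_add, smul_add, hF.2.1 γ hγ τ hτ, hG.2.1 γ hγ τ hτ]
    · intro γ hγ τ₁ hτ
      have h := (hF.2.2.1 γ hγ τ₁ hτ).add (hG.2.2.1 γ hγ τ₁ hτ)
      rw [add_zero] at h
      exact h.congr fun t => (slashS_add j k γ F G _).symm
    · intro τ hτ
      show F τ + G τ = 0
      rw [hF.2.2.2 τ hτ, hG.2.2.2 τ hτ, add_zero]
  zero_mem' := by
    refine ⟨?_, ?_, ?_, ?_⟩
    · exact differentiableOn_const 0
    · intro γ hγ τ hτ
      show (0 : Fin (j + 1) → ℂ) = χ γ • wt j k (den γ τ) 0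
      rw [wt_zero, smul_zero]
    · intro γ hγ τ₁ hτ
      have : (fun t : ℝ => slashS j k γ (0 : (Fin 2 → Fin 2 → ℂ) → (Fin (j + 1) → ℂ))
          (diagH τ₁ (t * Complex.I))) = fun _ => 0 := by
        funext t; exact slashS_zero j k γ _
      rw [this]
      exact tendsto_const_nhds
    · intro τ _; rfl
  smul_mem' := by
    rintro a F hF
    refine ⟨hF.1.const_smul a, ?_, ?_, ?_⟩
    · intro γ hγ τ hτ
      show a • F (moeb γ τ) = χ γ • wt j k (den γ τ) (a • F τ)
      rw [hF.2.1 γ hγ τ hτ, wt_smul, smul_comm]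
    · intro γ hγ τ₁ hτ
      have h := (hF.2.2.1 γ hγ τ₁ hτ).const_smul a
      rw [smul_zero] at h
      exact h.congr fun t => (slashS_smul j k γ a F _).symm
    · intro τ hτ
      show a • F τ = 0
      rw [hF.2.2.2 τ hτ, smul_zero]

/-- `ε` is (on `Γ₂`) the unique nontrivial homomorphism `Γ₂ → {±1}`. -/
def IsEps (ε : Matrix (Fin 4) (Fin 4) ℤ → ℂ) : Prop :=
  (∀ γ ∈ Sp4Z, ε γ = 1 ∨ ε γ = -1) ∧
  (∀ γ ∈ Sp4Z, ∀ δ ∈ Sp4Z, ε (γ * δ) = ε γ * ε δ) ∧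
  (∃ γ ∈ Sp4Z, ε γ ≠ 1)

section partB1
/-- e(z)=exp(2πiz) -/
noncomputable def ee (z : ℂ) : ℂ := Complex.exp (2 * Real.pi * Complex.I * z)

lemma ee_add (z w : ℂ) : ee (z + w) = ee z * ee w := by
  simp only [ee, mul_add, Complex.exp_add]
lemma ee_zero : ee 0 = 1 := by simp [ee]
lemma ee_ne_zero (z : ℂ) : ee z ≠ 0 := Complex.exp_ne_zero _
lemma ee_neg (z : ℂ) : ee (-z) = (ee z)⁻¹ := by simp [ee, Complex.exp_neg]
lemma ee_int (n : ℤ) : ee n = 1 := by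
  rw [ee, show (2 * Real.pi * Complex.I * n : ℂ) = n * (2 * Real.pi * Complex.I) by ring]
  exact Complex.exp_int_mul_two_pi_mul_I n
lemma ee_add_int (z : ℂ) (n : ℤ) : ee (z + n) = ee z := by rw [ee_add, ee_int, mul_one]
lemma norm_ee (z : ℂ) : ‖ee z‖ = Real.exp (-2 * Real.pi * z.im) := by
  rw [ee, Complex.norm_exp]; congr 1; simp
lemma differentiable_ee : Differentiable ℂ ee := by unfold ee; fun_prop
lemma continuous_ee : Continuous ee := differentiable_ee.continuous
lemma ee_zero_re : ee (1 / 2) = -1 := by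
  rw [ee, show (2 * Real.pi * Complex.I * (1 / 2) : ℂ) = Real.pi * Complex.I by ring]
  exact Complex.exp_pi_mul_I
lemma ee_pow (z : ℂ) (n : ℕ) : ee z ^ n = ee (n * z) := by
  simp only [ee, ← Complex.exp_nat_mul]; congr 1; ring
lemma ee_zpow (z : ℂ) (n : ℤ) : ee z ^ n = ee (n * z) := by
  simp only [ee, ← Complex.exp_int_mul]; congr 1; ring

section torus
open MeasureTheory UnitAddTorus
variable {d : Type} [Fintype d]

lemma mFourier_coe (n : d → ℤ) (x : d → ℝ) :
    mFourier n (fun i => (x i : UnitAddCircle)) = ee (∑ i, (n i : ℂ) * x i) := by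
  simp only [mFourier, ContinuousMap.coe_mk, fourier_coe_apply, ee]
  rw [← Complex.exp_sum]; congr 1
  rw [Finset.mul_sum]; refine Finset.sum_congr rfl fun i _ => ?_
  simp; ring

lemma torus_surj (x : UnitAddTorus d) : ∃ y : d → ℝ, (fun i => (y i : UnitAddCircle)) = x := by
  refine ⟨fun i => (AddCircle.equivIoc 1 0 (x i)).1, ?_⟩
  funext i
  exact (AddCircle.equivIoc 1 0).symm_apply_apply (x i)

theorem torus_uniq (b : (d → ℤ) → ℂ) (hb : Summable b)
    (h : ∀ x : d → ℝ, HasSum (fun T => b T * ee (∑ i, (T i : ℂ) * x i)) 0) : b = 0 := by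
  letI : MeasureSpace UnitAddCircle := ⟨AddCircle.haarAddCircle⟩
  haveI : Measure.IsAddHaarMeasure (volume : Measure UnitAddCircle) :=
    inferInstanceAs (Measure.IsAddHaarMeasure AddCircle.haarAddCircle)
  haveI : IsProbabilityMeasure (volume : Measure UnitAddCircle) :=
    inferInstanceAs (IsProbabilityMeasure AddCircle.haarAddCircle)
  have hs : Summable (fun T => b T • (mFourier T : C(UnitAddTorus d, ℂ))) := by
    apply Summable.of_norm
    simpa only [norm_smul, mFourier_norm, mul_one] using hb.norm
  obtain ⟨g, hg⟩ := hs
  have hg0 : g = 0 := by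
    ext x
    obtain ⟨y, rfl⟩ := torus_surj x
    have h1 := ((ContinuousMap.hasSum_apply hg) (fun i => (y i : UnitAddCircle)))
    refine h1.unique ?_
    have := h y
    simp only [← mFourier_coe] at this
    exact this
  subst hg0
  have h2 := hg.mapL (ContinuousMap.toLp (E := ℂ) 2 (volume : Measure (UnitAddTorus d)) ℂ)
  funext S
  have h3 := h2.mapL (innerSL ℂ (mFourierLp (d := d) 2 S))
  have ho := (orthonormal_iff_ite.mp (orthonormal_mFourier (d := d))) S
  have h4 : HasSum (fun T => if S = T then b T else 0) 0 := by
    simp only [map_zero] at h3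
    refine h3.congr_fun ?_
    intro T
    have := ho T
    simp only [map_smul, smul_eq_mul]
    rw [innerSL_apply_apply]
    erw [this]
    by_cases hST : S = T <;> simp [hST]
  have h5 : HasSum (fun T => if S = T then b T else 0) (b S) := by
    have := hasSum_single (f := fun T => if S = T then b T else 0) S (by intro T hT; simp [Ne.symm hT])
    simpa using this
  exact h5.unique h4

end torus
end partB1

section partB2
section torus2
open MeasureTheory UnitAddTorus Set

def box3 (a : Fin 3 → ℝ) : Set (Fin 3 → ℝ) := {x | ∀ i, x i ∈ Ioc (a i) (a i + 1)}

lemma torus_lift (g : (Fin 3 → ℝ) → ℂ) (hg : Continuous g)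
    (hp : ∀ x, ∀ n : Fin 3 → ℤ, g (fun i => x i + n i) = g x) :
    ∃ G : C(UnitAddTorus (Fin 3), ℂ), ∀ x : Fin 3 → ℝ, G (fun i => (x i : UnitAddCircle)) = g x := by
  let rep : UnitAddTorus (Fin 3) → (Fin 3 → ℝ) := fun x => Classical.choose (torus_surj x)
  have hrep : ∀ x, (fun i => (rep x i : UnitAddCircle)) = x := fun x => Classical.choose_spec (torus_surj x)
  have key : ∀ x : Fin 3 → ℝ, g (rep (fun i => (x i : UnitAddCircle))) = g x := by
    intro x
    have h := hrep (fun i => (x i : UnitAddCircle))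
    have h2 : ∀ i, ∃ n : ℤ, rep (fun i => (x i : UnitAddCircle)) i = x i + n := by
      intro i
      have := congrFun h i
      have h3 : ((rep (fun i => (x i : UnitAddCircle)) i - x i : ℝ) : UnitAddCircle) = 0 := by
        push_cast; exact sub_eq_zero.mpr this
      rw [AddCircle.coe_eq_zero_iff] at h3
      obtain ⟨n, hn⟩ := h3
      refine ⟨n, ?_⟩
      simp at hn; linarith
    choose n hn using h2
    rw [← hp x n]; congr 1; funext i; exact hn i
  have hq : IsOpenQuotientMap (fun x : Fin 3 → ℝ => (fun i => (x i : UnitAddCircle) : UnitAddTorus (Fin 3))) :=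
    IsOpenQuotientMap.piMap (fun i => QuotientAddGroup.isOpenQuotientMap_mk)
  refine ⟨⟨fun x => g (rep x), ?_⟩, key⟩
  rw [← hq.continuous_comp_iff]
  exact hg.congr (fun x => (key x).symm)

lemma box_indep (g : (Fin 3 → ℝ) → ℂ) (hg : Continuous g)
    (hp : ∀ x, ∀ n : Fin 3 → ℤ, g (fun i => x i + n i) = g x) (a b : Fin 3 → ℝ) :
    ∫ x in box3 a, g x = ∫ x in box3 b, g x := by
  obtain ⟨G, hG⟩ := torus_lift g hg hp
  have h1 := integral_preimage (fun x => G x) a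
  have h2 := integral_preimage (fun x => G x) b
  simp only [hG] at h1 h2
  exact h1.symm.trans h2

lemma box_shift (g : (Fin 3 → ℝ) → ℂ) (hg : Continuous g)
    (hp : ∀ x, ∀ n : Fin 3 → ℤ, g (fun i => x i + n i) = g x) (v : Fin 3 → ℝ) :
    ∫ x in box3 0, g (x + v) = ∫ x in box3 0, g x := by
  rw [box_indep g hg hp 0 v]
  have : box3 0 = (fun x => x + v) ⁻¹' box3 v := by
    ext x; simp only [box3, mem_ofPred_eq, mem_preimage, Pi.add_apply, mem_Ioc, Pi.zero_apply]
    refine forall_congr' fun i => ?_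
    constructor <;> rintro ⟨h1, h2⟩ <;> constructor <;> linarith
  rw [this]
  exact (measurePreserving_add_right volume v).setIntegral_preimage_emb
    (MeasurableEquiv.addRight v).measurableEmbedding g _

def Cone : Set (Fin 3 → ℝ) := {Y | 0 < Y 0 ∧ 0 < Y 2 ∧ Y 1 ^ 2 < Y 0 * Y 2}
def Tube : Set (Fin 3 → ℂ) := {p | (fun i => (p i).im) ∈ Cone}

lemma isOpen_Cone : IsOpen Cone := by
  have h : Cone = {Y : Fin 3 → ℝ | 0 < Y 0} ∩ ({Y : Fin 3 → ℝ | 0 < Y 2} ∩ {Y : Fin 3 → ℝ | Y 1 ^ 2 < Y 0 * Y 2}) := by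
    ext Y; simp [Cone]
  rw [h]
  refine IsOpen.inter (isOpen_lt (by fun_prop) (by fun_prop)) (IsOpen.inter (isOpen_lt (by fun_prop) (by fun_prop)) (isOpen_lt (by fun_prop) (by fun_prop)))
lemma isOpen_Tube : IsOpen Tube := isOpen_Cone.preimage (by fun_prop)

def pt (X Y : Fin 3 → ℝ) : Fin 3 → ℂ := fun i => X i + Y i * Complex.I
lemma pt_mem {X Y : Fin 3 → ℝ} (hY : Y ∈ Cone) : pt X Y ∈ Tube := by
  simpa [Tube, pt] using hY

variable (g : (Fin 3 → ℂ) → ℂ) (hg : DifferentiableOn ℂ g Tube)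
  (hp : ∀ p, ∀ n : Fin 3 → ℤ, g (fun i => p i + n i) = g p)
include hg
lemma cont_line {α : Type*} [TopologicalSpace α] (φ : α → Fin 3 → ℂ) (hφ : Continuous φ)
    (h : ∀ x, φ x ∈ Tube) : Continuous (fun x => g (φ x)) :=
  hg.continuousOn.comp_continuous hφ h

include hp
lemma box_avg (Y : Fin 3 → ℝ) (hY : Y ∈ Cone) (i : Fin 3) :
    ∫ x in box3 0, g (pt x Y) =
      ∫ x in box3 0, ∫ t in (0:ℝ)..1, g (pt x Y + Pi.single i (t : ℂ)) := by
  have hpt : ∀ (x : Fin 3 → ℝ) (t : ℝ), pt x Y + Pi.single i (t : ℂ) = pt (x + Pi.single i t) Y := by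
    intro x t; funext k
    by_cases hk : k = i
    · subst hk; simp [pt]; ring
    · simp [pt, hk]
  have hc : Continuous (fun x => g (pt x Y)) :=
    cont_line g hg _ (by unfold pt; fun_prop) (fun x => pt_mem hY)
  have hper : ∀ x, ∀ n : Fin 3 → ℤ, g (pt (fun i => x i + n i) Y) = g (pt x Y) := by
    intro x n
    rw [← hp (pt x Y) n]; congr 1; funext k; simp [pt]; ring
  have h1 : ∀ t : ℝ, ∫ x in box3 0, g (pt x Y + Pi.single i (t : ℂ)) = ∫ x in box3 0, g (pt x Y) := by
    intro t
    simp only [hpt]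
    exact box_shift (fun x => g (pt x Y)) hc hper (Pi.single i t)
  have h2 : ∫ t in (0:ℝ)..1, ∫ x in box3 0, g (pt x Y + Pi.single i (t : ℂ)) = ∫ x in box3 0, g (pt x Y) := by
    simp only [h1]; simp
  rw [← h2]
  apply intervalIntegral_integral_swap
  rw [Measure.prod_restrict]
  have hc2 : Continuous (Function.uncurry fun (t : ℝ) (x : Fin 3 → ℝ) => g (pt x Y + Pi.single i (t : ℂ))) := by
    simp only [hpt]
    have : Continuous (fun q : ℝ × (Fin 3 → ℝ) => q.2 + Pi.single i q.1) := by
      refine continuous_snd.add ?_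
      exact (continuous_single i).comp continuous_fst
    exact hc.comp this
  have hK : IsCompact ((Icc (0:ℝ) 1) ×ˢ (Icc (0 : Fin 3 → ℝ) 1)) := isCompact_Icc.prod isCompact_Icc
  refine (hc2.continuousOn.integrableOn_compact hK).mono_set ?_
  refine prod_mono ?_ ?_
  · rw [uIoc_of_le zero_le_one]; exact Ioc_subset_Icc_self
  · intro x hx
    simp only [box3, mem_ofPred_eq, Pi.zero_apply, mem_Ioc, zero_add] at hx
    exact ⟨fun i => (hx i).1.le, fun i => (hx i).2⟩

lemma box_Yindep (Y : Fin 3 → ℝ) (i : Fin 3) (s : ℝ)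
    (hY : ∀ u ∈ uIcc 0 s, Y + Pi.single i u ∈ Cone) :
    ∫ x in box3 0, g (pt x Y) = ∫ x in box3 0, g (pt x (Y + Pi.single i s)) := by
  have hY0 : Y ∈ Cone := by simpa using hY 0 left_mem_uIcc
  have hYs : Y + Pi.single i s ∈ Cone := hY s right_mem_uIcc
  rw [box_avg g hg hp Y hY0 i, box_avg g hg hp _ hYs i]
  congr 1; funext x
  let h : ℂ → ℂ := fun z => g (pt x Y + Pi.single i z)
  have hmem : ∀ z : ℂ, z.im ∈ uIcc 0 s → pt x Y + Pi.single i z ∈ Tube := by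
    intro z hz
    have := hY _ hz
    simp only [Tube, mem_ofPred_eq]
    convert this using 1
    funext k
    by_cases hk : k = i
    · subst hk; simp [pt]
    · simp [pt, hk]
  have hd : DifferentiableOn ℂ h ((uIcc (0:ℂ).re (1 + s * I : ℂ).re) ×ℂ (uIcc (0:ℂ).im (1 + s * I:ℂ).im)) := by
    refine hg.comp ?_ ?_
    · have : Differentiable ℂ (fun z : ℂ => (pt x Y + Pi.single i z : Fin 3 → ℂ)) := by
        refine (differentiable_const _).add ?_
        rw [differentiable_pi]
        intro k
        by_cases hk : k = i
        · subst hk; simp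
        · simp [hk]
      exact this.differentiableOn
    · intro z hz
      apply hmem
      have := hz.2
      simpa using this
  have := Complex.integral_boundary_rect_eq_zero_of_differentiableOn h 0 (1 + s * I) hd
  simp only [zero_re, add_re, one_re, mul_re, ofReal_re, I_re, mul_zero, ofReal_im, I_im, mul_one, sub_self, add_zero,
    zero_im, add_im, one_im, mul_im, zero_add, ofReal_zero, zero_mul, ofReal_one] at this
  have hper : ∀ y : ℝ, h (1 + y * I) = h (y * I) := by
    intro y
    simp only [h]
    refine Eq.trans ?_ (hp (pt x Y + Pi.single i ((y:ℂ) * I)) (Pi.single i 1))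
    congr 1; funext k
    by_cases hk : k = i
    · subst hk; simp; ring
    · simp [hk]
  simp only [hper, add_sub_cancel_right] at this
  rw [sub_eq_zero] at this
  rw [this]
  congr 1; funext t
  simp only [h]
  congr 1; funext k
  by_cases hk : k = i
  · subst hk; simp [pt]; ring
  · simp [pt, hk]

lemma box_Yconst (Y Y' : Fin 3 → ℝ) (hY : Y ∈ Cone) (hY' : Y' ∈ Cone) :
    ∫ x in box3 0, g (pt x Y) = ∫ x in box3 0, g (pt x Y') := by
  suffices H : ∀ Y ∈ Cone, ∀ a : ℝ, Y 0 ≤ a → Y 2 ≤ a → |Y 1| < a →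
      ∫ x in box3 0, g (pt x Y) = ∫ x in box3 0, g (pt x ![a, 0, a]) by
    set a := Y 0 + Y 2 + |Y 1| + Y' 0 + Y' 2 + |Y' 1| + 1
    have h1 := hY.1; have h2 := hY.2.1; have h3 := hY'.1; have h4 := hY'.2.1
    have := abs_nonneg (Y 1); have := abs_nonneg (Y' 1)
    rw [H Y hY a (by simp only [a]; linarith) (by simp only [a]; linarith) (by simp only [a]; linarith),
      H Y' hY' a (by simp only [a]; linarith) (by simp only [a]; linarith) (by simp only [a]; linarith)]
  clear hY hY' Y Y'
  intro Y hY a h0 h2 h1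
  obtain ⟨c0, c2, c1⟩ := hY
  have ha : 0 < a := by linarith
  have e1 : Y + Pi.single 0 (a - Y 0) = ![a, Y 1, Y 2] := by
    funext k; fin_cases k <;> simp
  have e2 : ![a, Y 1, Y 2] + Pi.single 2 (a - Y 2) = ![a, Y 1, a] := by
    funext k; fin_cases k <;> simp
  have e3 : ![a, 0, a] + Pi.single 1 (Y 1) = ![a, Y 1, a] := by
    funext k; fin_cases k <;> simp
  have s1 := box_Yindep g hg hp Y 0 (a - Y 0) (by
    intro u hu; rw [uIcc_of_le (by linarith)] at hu
    refine ⟨?_, ?_, ?_⟩ <;> simp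
    · linarith [hu.1]
    · exact c2
    · nlinarith [hu.1])
  have s2 := box_Yindep g hg hp ![a, Y 1, Y 2] 2 (a - Y 2) (by
    intro u hu; rw [uIcc_of_le (by linarith)] at hu
    refine ⟨?_, ?_, ?_⟩ <;> simp
    · exact ha
    · linarith [hu.1]
    · nlinarith [hu.1])
  have s3 := box_Yindep g hg hp ![a, 0, a] 1 (Y 1) (by
    intro u hu
    have hu' : |u| ≤ |Y 1| := by
      have := abs_sub_left_of_mem_uIcc hu; simpa using this
    refine ⟨?_, ?_, ?_⟩ <;> simp
    · exact ha
    · exact ha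
    · rw [← sq_abs]; nlinarith [abs_nonneg u])
  rw [s1, e1, s2, e2, s3, e3]

end torus2
end partB2

section partB3
section FEsec
open MeasureTheory UnitAddTorus Set

lemma summable_exp_abs (c : ℝ) (hc : 0 < c) : Summable (fun n : ℤ => Real.exp (-c * |(n:ℝ)|)) := by
  have h : Summable (fun n : ℕ => Real.exp (-c * n)) := by
    have := Real.summable_exp_nat_mul_iff (a := -c)
    have h2 := this.2 (by linarith)
    refine h2.congr fun n => ?_
    ring_nf
  refine Summable.of_nat_of_neg ?_ ?_
  · simpa using h
  · simpa using h

def e3 : ℤ × ℤ × ℤ ≃ (Fin 3 → ℤ) where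
  toFun t := ![t.1, t.2.1, t.2.2]
  invFun T := (T 0, T 1, T 2)
  left_inv := by rintro ⟨a, b, c⟩; rfl
  right_inv := by intro T; funext k; fin_cases k <;> rfl

lemma summable_exp_abs3 (c : ℝ) (hc : 0 < c) :
    Summable (fun T : Fin 3 → ℤ => Real.exp (-c * ∑ i, |(T i:ℝ)|)) := by
  rw [← e3.summable_iff]
  have h := summable_exp_abs c hc
  have h2 := h.mul_of_nonneg (h.mul_of_nonneg h (fun _ => (Real.exp_pos _).le) (fun _ => (Real.exp_pos _).le))
    (fun _ => (Real.exp_pos _).le) (fun _ => mul_nonneg (Real.exp_pos _).le (Real.exp_pos _).le)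
  refine h2.congr ?_
  rintro ⟨a, b, c⟩
  simp only [Function.comp, e3, Equiv.coe_fn_mk, Fin.sum_univ_three, ← Real.exp_add]
  congr 1
  simp; ring

def dotp (T : Fin 3 → ℤ) (p : Fin 3 → ℂ) : ℂ := ∑ i, (T i : ℂ) * p i

theorem FE (f : (Fin 3 → ℂ) → ℂ) (hf : DifferentiableOn ℂ f Tube)
    (hp : ∀ p, ∀ n : Fin 3 → ℤ, f (fun i => p i + n i) = f p) :
    ∃ a : (Fin 3 → ℤ) → ℂ, ∀ p ∈ Tube, Summable (fun T => ‖a T * ee (dotp T p)‖) ∧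
      HasSum (fun T => a T * ee (dotp T p)) (f p) := by
  let g : (Fin 3 → ℤ) → (Fin 3 → ℂ) → ℂ := fun T p => f p * ee (-dotp T p)
  have hg : ∀ T, DifferentiableOn ℂ (g T) Tube := by
    intro T
    refine hf.mul (Differentiable.differentiableOn ?_)
    refine differentiable_ee.comp ?_
    unfold dotp; fun_prop
  have hgp : ∀ T, ∀ p, ∀ n : Fin 3 → ℤ, g T (fun i => p i + n i) = g T p := by
    intro T p n
    simp only [g, hp]
    congr 1
    have : -dotp T (fun i => p i + n i) = -dotp T p + ((-∑ i, T i * n i : ℤ) : ℂ) := by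
      simp only [dotp, mul_add, Finset.sum_add_distrib]; push_cast; ring
    rw [this, ee_add_int]
  let a : (Fin 3 → ℤ) → ℂ := fun T => ∫ x in box3 0, g T (pt x ![1, 0, 1])
  have ha : ∀ T, ∀ Y ∈ Cone, ∫ x in box3 0, g T (pt x Y) = a T := fun T Y hY =>
    box_Yconst (g T) (hg T) (hgp T) Y _ hY (by simp [Cone])
  have hdot : ∀ T (x Y : Fin 3 → ℝ), dotp T (pt x Y) = (∑ i, (T i : ℂ) * x i) + (∑ i, (T i : ℝ) * Y i : ℝ) * Complex.I := by
    intro T x Y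
    simp only [dotp, pt, mul_add, Finset.sum_add_distrib]; push_cast
    rw [Finset.sum_mul]; congr 1; refine Finset.sum_congr rfl fun i _ => by ring
  have hvol : volume.real (box3 0) = 1 := by
    have : box3 0 = Set.pi univ (fun i : Fin 3 => Ioc (0:ℝ) 1) := by
      ext x; simp [box3]
    rw [this, Measure.real, Real.volume_pi_Ioc]; simp
  have hmeas : MeasurableSet (box3 0) := MeasurableSet.univ_pi' (fun i => measurableSet_Ioc)
  have hbox : ∀ x ∈ box3 0, x ∈ Icc (0 : Fin 3 → ℝ) 1 := by
    intro x hx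
    simp only [box3, mem_ofPred_eq, Pi.zero_apply, mem_Ioc, zero_add] at hx
    exact ⟨fun i => (hx i).1.le, fun i => (hx i).2⟩
  have hfin : volume (box3 0) < ⊤ := by
    refine lt_of_le_of_lt (measure_mono hbox) isCompact_Icc.measure_lt_top
  -- summability
  have hsum : ∀ Y ∈ Cone, Summable (fun T => ‖a T‖ * Real.exp (-2 * Real.pi * ∑ i, (T i : ℝ) * Y i)) := by
    intro Y hY
    obtain ⟨ε, hε, hball⟩ := Metric.nhds_basis_closedBall.mem_iff.1 (isOpen_Cone.mem_nhds hY)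
    have hK : IsCompact ((Icc (0 : Fin 3 → ℝ) 1) ×ˢ (Metric.closedBall Y ε)) :=
      isCompact_Icc.prod (isCompact_closedBall Y ε)
    have hcont : ContinuousOn (fun q : (Fin 3 → ℝ) × (Fin 3 → ℝ) => f (pt q.1 q.2))
        ((Icc (0 : Fin 3 → ℝ) 1) ×ˢ (Metric.closedBall Y ε)) := by
      refine hf.continuousOn.comp ?_ ?_
      · unfold pt; fun_prop
      · intro q hq; exact pt_mem (hball hq.2)
    obtain ⟨M, hM⟩ := hK.exists_bound_of_continuousOn hcont
    have hM0 : 0 ≤ M := (norm_nonneg _).trans (hM (0, Y) ⟨⟨le_rfl, zero_le_one⟩, Metric.mem_closedBall_self hε.le⟩)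
    have hb := (summable_exp_abs3 (2 * Real.pi * ε) (by positivity)).mul_left M
    refine Summable.of_nonneg_of_le (fun T => by positivity) (fun T => ?_) hb
    let Y' : Fin 3 → ℝ := fun i => Y i - ε * SignType.sign (T i : ℝ)
    have hY' : Y' ∈ Metric.closedBall Y ε := by
      rw [Metric.mem_closedBall, dist_pi_le_iff hε.le]
      intro i
      rw [Real.dist_eq]; simp only [Y']
      rw [show Y i - ε * (SignType.sign (T i : ℝ) : ℝ) - Y i = -(ε * (SignType.sign (T i : ℝ) : ℝ)) by ring, abs_neg, abs_mul, abs_of_pos hε]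
      have : |((SignType.sign (T i : ℝ) : SignType) : ℝ)| ≤ 1 := by
        cases SignType.sign (T i : ℝ) <;> simp
      nlinarith
    have hTY' : ∑ i, (T i : ℝ) * Y' i = ∑ i, (T i : ℝ) * Y i - ε * ∑ i, |(T i : ℝ)| := by
      rw [Finset.mul_sum, ← Finset.sum_sub_distrib]
      refine Finset.sum_congr rfl fun i _ => ?_
      simp only [Y']
      have := self_mul_sign (T i : ℝ)
      rw [← this]; ring
    have hbd : ‖a T‖ ≤ M * Real.exp (2 * Real.pi * ∑ i, (T i : ℝ) * Y' i) := by
      rw [← ha T Y' (hball hY')]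
      have := norm_setIntegral_le_of_norm_le_const (f := fun x => g T (pt x Y')) (C := M * Real.exp (2 * Real.pi * ∑ i, (T i : ℝ) * Y' i)) hfin ?_
      · rwa [hvol, mul_one] at this
      · intro x hx
        simp only [g, norm_mul, norm_ee, neg_im]
        rw [hdot]
        refine mul_le_mul (hM (x, Y') ⟨hbox x hx, hY'⟩) (le_of_eq ?_) (Real.exp_pos _).le hM0
        congr 1
        simp [← Complex.ofReal_intCast, ← Complex.ofReal_mul, ← Complex.ofReal_sum]
    calc ‖a T‖ * Real.exp (-2 * Real.pi * ∑ i, (T i : ℝ) * Y i)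
        ≤ (M * Real.exp (2 * Real.pi * ∑ i, (T i : ℝ) * Y' i)) * Real.exp (-2 * Real.pi * ∑ i, (T i : ℝ) * Y i) :=
          mul_le_mul_of_nonneg_right hbd (Real.exp_pos _).le
      _ = _ := by
          rw [mul_assoc, ← Real.exp_add, hTY']; congr 2; ring
  refine ⟨a, fun p hpT => ?_⟩
  obtain ⟨X, Y, hY, rfl⟩ : ∃ X Y, Y ∈ Cone ∧ p = pt X Y :=
    ⟨fun i => (p i).re, fun i => (p i).im, hpT, by funext i; simp [pt]⟩
  have hnorm : ∀ T, ‖a T * ee (dotp T (pt X Y))‖ = ‖a T‖ * Real.exp (-2 * Real.pi * ∑ i, (T i : ℝ) * Y i) := by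
    intro T
    rw [norm_mul, norm_ee, hdot]; congr 2
    simp [← Complex.ofReal_intCast, ← Complex.ofReal_mul, ← Complex.ofReal_sum]
  refine ⟨(hsum Y hY).congr fun T => (hnorm T).symm, ?_⟩
  have hc : Continuous (fun x => f (pt x Y)) :=
    cont_line f hf _ (by unfold pt; fun_prop) (fun x => pt_mem hY)
  have hper : ∀ x, ∀ n : Fin 3 → ℤ, f (pt (fun i => x i + n i) Y) = f (pt x Y) := by
    intro x n
    rw [← hp (pt x Y) n]; congr 1; funext k; simp [pt]; ring
  obtain ⟨G, hG⟩ := torus_lift _ hc hper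
  have hcoef : ∀ T, mFourierCoeff G T = a T * ee ((∑ i, (T i : ℝ) * Y i : ℝ) * Complex.I) := by
    intro T
    rw [mFourierCoeff_eq_integral G T 0, ← ha T Y hY, ← MeasureTheory.integral_mul_const]
    congr 1; funext x
    rw [hG, mFourier_coe, smul_eq_mul]
    simp only [g]
    rw [hdot, mul_assoc, ← ee_add, mul_comm]; congr 2
    simp only [Pi.neg_apply, Int.cast_neg, neg_mul, Finset.sum_neg_distrib]; ring
  have hs : Summable (mFourierCoeff G) := by
    apply Summable.of_norm
    refine (hsum Y hY).congr fun T => ?_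
    rw [hcoef, norm_mul, norm_ee]; simp
  have := hasSum_mFourier_series_apply_of_summable hs (fun i => (X i : UnitAddCircle))
  rw [hG] at this
  refine this.congr_fun fun T => ?_
  rw [hcoef, mFourier_coe, smul_eq_mul, mul_assoc, ← ee_add, hdot, add_comm]

end FEsec
end partB3

section partC1
noncomputable def hom {j : ℕ} (v : Fin (j + 1) → ℂ) (x y : ℂ) : ℂ :=
  ∑ l : Fin (j + 1), v l * (x ^ (j - (l : ℕ)) * y ^ (l : ℕ))

lemma hom_symAct {j : ℕ} (m : Matrix (Fin 2) (Fin 2) ℂ) (v : Fin (j + 1) → ℂ) (x y : ℂ) :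
    hom (symAct j m v) x y = hom v (m 0 0 * x + m 1 0 * y) (m 0 1 * x + m 1 1 * y) := by
  have hc1 : Continuous (fun x => hom (symAct j m v) x y) := by unfold hom; fun_prop
  have hc2 : Continuous (fun x => hom v (m 0 0 * x + m 1 0 * y) (m 0 1 * x + m 1 1 * y)) := by
    unfold hom; fun_prop
  refine congrFun (hc1.ext_on (dense_compl_singleton (0:ℂ)) hc2 ?_) x
  intro x hx
  have hx0 : x ≠ 0 := hx
  simp only [hom, symAct, Finset.sum_mul]
  rw [Finset.sum_comm]
  refine Finset.sum_congr rfl fun l _ => ?_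
  have hl : (l : ℕ) ≤ j := Nat.lt_succ_iff.mp l.2
  set Q : Polynomial ℂ := ((Polynomial.C (m 0 0) + Polynomial.C (m 1 0) * Polynomial.X) ^ (j - (l : ℕ)) *
    (Polynomial.C (m 0 1) + Polynomial.C (m 1 1) * Polynomial.X) ^ (l : ℕ)) with hQ
  have hdeg : Q.natDegree < j + 1 := by
    have h1 : ∀ a b : ℂ, (Polynomial.C a + Polynomial.C b * Polynomial.X).natDegree ≤ 1 := by
      intro a b
      rw [add_comm]; exact Polynomial.natDegree_linear_le
    have := Polynomial.natDegree_mul_le_of_le (Polynomial.natDegree_pow_le_of_le (j - (l:ℕ)) (h1 (m 0 0) (m 1 0)))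
      (Polynomial.natDegree_pow_le_of_le (l:ℕ) (h1 (m 0 1) (m 1 1)))
    rw [← hQ] at this
    omega
  have hev := Polynomial.eval_eq_sum_range' hdeg (y / x)
  have hev2 : Q.eval (y / x) = (m 0 0 + m 1 0 * (y / x)) ^ (j - (l : ℕ)) * (m 0 1 + m 1 1 * (y / x)) ^ (l:ℕ) := by
    simp [hQ]
  have e1 : ∀ a b : ℂ, a * x + b * y = x * (a + b * (y / x)) := by intro a b; field_simp
  have hxj : x ^ j = x ^ (j - (l:ℕ)) * x ^ (l:ℕ) := by rw [← pow_add]; congr 1; omega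
  rw [e1, e1, mul_pow, mul_pow, show v l * (x ^ (j - (l:ℕ)) * (m 0 0 + m 1 0 * (y / x)) ^ (j - (l:ℕ)) * (x ^ (l:ℕ) * (m 0 1 + m 1 1 * (y / x)) ^ (l:ℕ)))
    = v l * (x ^ j * ((m 0 0 + m 1 0 * (y / x)) ^ (j - (l:ℕ)) * (m 0 1 + m 1 1 * (y / x)) ^ (l:ℕ))) by rw [hxj]; ring, ← hev2, hev,
    Finset.sum_range, Finset.mul_sum, Finset.mul_sum]
  refine Finset.sum_congr rfl fun i _ => ?_
  have hi : (i : ℕ) ≤ j := Nat.lt_succ_iff.mp i.2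
  have hxi : x ^ j = x ^ (j - (i:ℕ)) * x ^ (i:ℕ) := by rw [← pow_add]; congr 1; omega
  simp only [symCoeff]
  rw [← hQ, hxi, div_pow]
  field_simp

lemma hom_smul {j : ℕ} (c : ℂ) (v : Fin (j + 1) → ℂ) (x y : ℂ) : hom (c • v) x y = c * hom v x y := by
  simp [hom, Finset.mul_sum, mul_assoc]

def mat (p : Fin 3 → ℂ) : Fin 2 → Fin 2 → ℂ := ![![p 0, p 1], ![p 1, p 2]]

lemma mat_mem {p : Fin 3 → ℂ} : mat p ∈ H2 ↔ p ∈ Tube := by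
  have hs : (Matrix.of (mat p)).IsSymm := by
    ext i k; fin_cases i <;> fin_cases k <;> simp [mat]
  have e : (Matrix.of fun i k => (mat p i k).im) = !![(p 0).im, (p 1).im; (p 1).im, (p 2).im] := by
    ext i k; fin_cases i <;> fin_cases k <;> simp [mat]
  simp only [H2, Tube, Cone, Set.mem_ofPred_eq, hs, true_and, e]
  constructor
  · intro h
    have h0 := h.diag_pos (i := 0)
    have h2 := h.diag_pos (i := 1)
    have hd := h.det_pos
    simp [Matrix.det_fin_two] at h0 h2 hd
    exact ⟨h0, h2, by nlinarith⟩
  · rintro ⟨h0, h2, hd⟩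
    refine Matrix.PosDef.of_dotProduct_mulVec_pos ?_ ?_
    · ext i k; fin_cases i <;> fin_cases k <;> simp
    · intro x hx
      simp [Matrix.mulVec, dotProduct, Fin.sum_univ_two]
      have hx' : x 0 ≠ 0 ∨ x 1 ≠ 0 := by
        by_contra h; push Not at h; apply hx; funext i; fin_cases i <;> simp [h.1, h.2]
      have key : (p 0).im * (x 0 * ((p 0).im * x 0 + (p 1).im * x 1) + x 1 * ((p 1).im * x 0 + (p 2).im * x 1))
        = ((p 0).im * x 0 + (p 1).im * x 1) ^ 2 + ((p 0).im * (p 2).im - (p 1).im ^ 2) * x 1 ^ 2 := by ring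
      by_contra hneg
      push Not at hneg
      have h3 : ((p 0).im * x 0 + (p 1).im * x 1) ^ 2 + ((p 0).im * (p 2).im - (p 1).im ^ 2) * x 1 ^ 2 ≤ 0 := by
        rw [← key]; exact mul_nonpos_of_nonneg_of_nonpos h0.le hneg
      have h4 : x 1 ^ 2 ≤ 0 := by
        by_contra h5; push Not at h5
        have := mul_pos (sub_pos.mpr hd) h5
        nlinarith [sq_nonneg ((p 0).im * x 0 + (p 1).im * x 1)]
      have h5 : x 1 = 0 := by nlinarith [sq_nonneg (x 1)]
      rcases hx' with h | h
      · rw [h5] at h3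
        have : 0 < ((p 0).im * x 0) ^ 2 := by positivity
        nlinarith
      · exact h h5

lemma mat_differentiable : Differentiable ℂ mat := by
  rw [differentiable_pi]; intro i
  rw [differentiable_pi]; intro k
  fin_cases i <;> fin_cases k <;> simp [mat] <;> fun_prop

section laws
variable {j : ℕ} {F : (Fin 2 → Fin 2 → ℂ) → (Fin (j + 1) → ℂ)}

lemma law_gen (hF : IsSiegelCuspForm j 2 Sp4Z (fun _ => 1) F) (γ : Matrix (Fin 4) (Fin 4) ℤ) (hγ : γ ∈ Sp4Z)
    (p : Fin 3 → ℂ) (hp : p ∈ Tube) (q : Fin 3 → ℂ) (D : Matrix (Fin 2) (Fin 2) ℂ)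
    (hD : den γ (mat p) = D) (hdet : D.det ≠ 0)
    (hq : blk γ 0 0 * Matrix.of (mat p) + blk γ 0 1 = Matrix.of (mat q) * D) (x y : ℂ) :
    hom (F (mat q)) x y = D.det ^ 2 * hom (F (mat p)) (D 0 0 * x + D 1 0 * y) (D 0 1 * x + D 1 1 * y) := by
  have h := hF.2.1 γ hγ (mat p) (mat_mem.2 hp)
  have hm : moeb γ (mat p) = mat q := by
    funext i k
    simp only [moeb]
    rw [hD, hq, Matrix.mul_assoc, Matrix.mul_nonsing_inv _ (isUnit_iff_ne_zero.mpr hdet), Matrix.mul_one]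
    rfl
  rw [hm, hD, one_smul, wt] at h
  rw [h, hom_smul, hom_symAct]
  norm_cast

lemma hom_inj {j : ℕ} {v w : Fin (j + 1) → ℂ} (h : ∀ x y, hom v x y = hom w x y) : v = w := by
  have h1 : (∑ l : Fin (j+1), Polynomial.monomial (l:ℕ) (v l)) = ∑ l : Fin (j+1), Polynomial.monomial (l:ℕ) (w l) := by
    apply Polynomial.funext
    intro y
    have := h 1 y
    simpa [hom, Polynomial.eval_finsetSum] using this
  funext l
  have h2 := congrArg (fun P => Polynomial.coeff P (l:ℕ)) h1
  simpa [Polynomial.finsetSum_coeff, Polynomial.coeff_monomial, Fin.val_inj] using h2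

lemma law_trans (hF : IsSiegelCuspForm j 2 Sp4Z (fun _ => 1) F) (n : Fin 3 → ℤ) (p : Fin 3 → ℂ) :
    F (mat (fun i => p i + n i)) = F (mat p) := by
  by_cases hp : p ∈ Tube
  · apply hom_inj; intro x y
    have := law_gen hF !![1,0,n 0,n 1; 0,1,n 1,n 2; 0,0,1,0; 0,0,0,1] (by
      simp only [Sp4Z, J4, Set.mem_ofPred_eq]
      ext i k; fin_cases i <;> fin_cases k <;> simp [Matrix.mul_apply, Fin.sum_univ_four]) p hp (fun i => p i + n i) 1
      (by ext i k; fin_cases i <;> fin_cases k <;> simp [den, blk, Matrix.mul_apply]) (by simp)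
      (by ext i k; fin_cases i <;> fin_cases k <;> simp [mat, blk, Matrix.mul_apply]) x y
    simpa using this
  · have h2 : (fun i => p i + n i) ∉ Tube := by simpa [Tube] using hp
    rw [hF.2.2.2 _ (fun h => hp (mat_mem.1 h)), hF.2.2.2 _ (fun h => h2 (mat_mem.1 h))]

lemma law_unip (hF : IsSiegelCuspForm j 2 Sp4Z (fun _ => 1) F) (a b c d e : ℤ) (he : a * d - b * c = e) (he2 : e * e = 1)
    (p : Fin 3 → ℂ) (hp : p ∈ Tube) (x y : ℂ) :
    hom (F (mat ![a * a * p 0 + 2 * a * b * p 1 + b * b * p 2, a * c * p 0 + (a * d + b * c) * p 1 + b * d * p 2,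
      c * c * p 0 + 2 * c * d * p 1 + d * d * p 2])) x y
    = hom (F (mat p)) (e * (d * x - b * y)) (e * (-c * x + a * y)) := by
  have he' : (a * d - b * c : ℂ) = e := by exact_mod_cast he
  have he2' : (e * e : ℂ) = 1 := by exact_mod_cast he2
  have := law_gen hF !![a,b,0,0; c,d,0,0; 0,0,e*d,-(e*c); 0,0,-(e*b),e*a] (by
      simp only [Sp4Z, J4, Set.mem_ofPred_eq]
      ext i k; fin_cases i <;> fin_cases k <;> simp [Matrix.mul_apply, Fin.sum_univ_four]
      all_goals first | ring1 | linear_combination e * he + he2 | linear_combination -e * he - he2) p hp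
      ![a * a * p 0 + 2 * a * b * p 1 + b * b * p 2, a * c * p 0 + (a * d + b * c) * p 1 + b * d * p 2,
      c * c * p 0 + 2 * c * d * p 1 + d * d * p 2] !![(e*d : ℂ), -(e*c); -(e*b), e*a]
      (by ext i k; fin_cases i <;> fin_cases k <;> simp [den, blk, Matrix.mul_apply])
      (by
        have : (e * d * (e * a) - -(e * c) * -(e * b) : ℂ) = e := by linear_combination (e * e : ℂ) * he' + (e:ℂ) * he2'
        rw [Matrix.det_fin_two_of, this]; intro h; rw [h] at he2'; simp at he2')
      (by
        ext i k; fin_cases i <;> fin_cases k <;> simp [mat, blk, Matrix.mul_apply, Fin.sum_univ_two]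
        · linear_combination -(a * p 0 + b * p 1) * ((e:ℂ) * he' + he2')
        · linear_combination -(a * p 1 + b * p 2) * ((e:ℂ) * he' + he2')
        · linear_combination -(c * p 0 + d * p 1) * ((e:ℂ) * he' + he2')
        · linear_combination -(c * p 1 + d * p 2) * ((e:ℂ) * he' + he2')) x y
  rw [this]
  have h1 : (!![(e*d : ℂ), -(e*c); -(e*b), e*a]).det ^ 2 = 1 := by
    have : (e * d * (e * a) - -(e * c) * -(e * b) : ℂ) = e := by linear_combination (e * e : ℂ) * he' + (e:ℂ) * he2'
    rw [Matrix.det_fin_two_of, this, sq, he2']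
  rw [h1, one_mul]
  congr 1 <;> simp <;> ring

lemma law_S (hF : IsSiegelCuspForm j 2 Sp4Z (fun _ => 1) F) (p : Fin 3 → ℂ) (hp : p ∈ Tube) (x y : ℂ) :
    hom (F (mat ![-1 / p 0, p 1 / p 0, p 2 - p 1 ^ 2 / p 0])) x y
    = p 0 ^ 2 * hom (F (mat p)) (p 0 * x) (p 1 * x + y) := by
  have h0 : p 0 ≠ 0 := by
    intro h; have := hp.1; simp [h] at this
  have := law_gen hF !![0,0,-1,0; 0,1,0,0; 1,0,0,0; 0,0,0,1] (by
      simp only [Sp4Z, J4, Set.mem_ofPred_eq]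
      ext i k; fin_cases i <;> fin_cases k <;> simp [Matrix.mul_apply, Fin.sum_univ_four]) p hp
      ![-1 / p 0, p 1 / p 0, p 2 - p 1 ^ 2 / p 0] !![p 0, p 1; 0, 1]
      (by ext i k; fin_cases i <;> fin_cases k <;> simp [den, blk, mat, Matrix.mul_apply])
      (by rw [Matrix.det_fin_two_of]; simpa using h0)
      (by
        ext i k; fin_cases i <;> fin_cases k <;> simp [mat, blk, Matrix.mul_apply, Fin.sum_univ_two]
        all_goals field_simp
        all_goals ring) x y
  rw [this, Matrix.det_fin_two_of]
  simp

lemma S_mem (p : Fin 3 → ℂ) (hp : p ∈ Tube) : ![-1 / p 0, p 1 / p 0, p 2 - p 1 ^ 2 / p 0] ∈ Tube := by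
  obtain ⟨h0, h2, h1⟩ := hp
  have hn : 0 < Complex.normSq (p 0) := Complex.normSq_pos.2 (by intro h; simp [h] at h0)
  have hN : Complex.normSq (p 0) = (p 0).re ^ 2 + (p 0).im ^ 2 := by rw [Complex.normSq_apply]; ring
  have hk : ((p 1).im * (p 0).re - (p 1).re * (p 0).im) ^ 2 <
     (p 0).im * ((p 2).im * Complex.normSq (p 0) - (2 * (p 1).re * (p 1).im * (p 0).re - ((p 1).re ^ 2 - (p 1).im ^ 2) * (p 0).im)) := by
    have := mul_lt_mul_of_pos_right h1 hn
    rw [hN] at this ⊢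
    nlinarith
  have e0 : (-1 / p 0).im = (p 0).im / Complex.normSq (p 0) := by
    rw [Complex.div_im]; simp; ring
  have e1 : (p 1 / p 0).im = ((p 1).im * (p 0).re - (p 1).re * (p 0).im) / Complex.normSq (p 0) := by
    rw [Complex.div_im]; ring
  have e2 : (p 2 - p 1 ^ 2 / p 0).im = ((p 2).im * Complex.normSq (p 0) - (2 * (p 1).re * (p 1).im * (p 0).re - ((p 1).re ^ 2 - (p 1).im ^ 2) * (p 0).im)) / Complex.normSq (p 0) := by
    rw [Complex.sub_im, Complex.div_im, sq, Complex.mul_im, Complex.mul_re]; field_simp; ring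
  have hpos : 0 < (p 2).im * Complex.normSq (p 0) - (2 * (p 1).re * (p 1).im * (p 0).re - ((p 1).re ^ 2 - (p 1).im ^ 2) * (p 0).im) := by
    by_contra hneg; push Not at hneg
    nlinarith [mul_nonpos_of_nonneg_of_nonpos h0.le hneg, sq_nonneg ((p 1).im * (p 0).re - (p 1).re * (p 0).im)]
  refine ⟨?_, ?_, ?_⟩
  · simp only [Matrix.cons_val_zero]; rw [e0]; positivity
  · simp only [Matrix.cons_val]; rw [e2]; positivity
  · simp only [Matrix.cons_val, Matrix.cons_val_zero, Matrix.cons_val_one]; rw [e0, e1, e2, div_pow, div_mul_div_comm, sq (Complex.normSq (p 0))]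
    exact div_lt_div_of_pos_right hk (by positivity)

lemma law_cusp (hF : IsSiegelCuspForm j 2 Sp4Z (fun _ => 1) F) (t : ℂ) (ht : 0 < t.im) (l : Fin (j + 1)) :
    Tendsto (fun s : ℝ => F (mat ![t, 0, s * Complex.I]) l) atTop (𝓝 0) := by
  have h := hF.2.2.1 1 (by simp [Sp4Z]) t ht
  have h2 := (tendsto_pi_nhds.1 h) l
  have key : ∀ s : ℝ, slashS j 2 1 F (diagH t (s * Complex.I)) = F (mat ![t, 0, s * Complex.I]) := by
    intro s
    have hd : diagH t (s * Complex.I) = mat ![t, 0, s * Complex.I] := by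
      funext i k; fin_cases i <;> fin_cases k <;> simp [diagH, mat]
    have hden : ∀ τ, den 1 τ = 1 := by
      intro τ; ext i k; fin_cases i <;> fin_cases k <;> simp [den, blk, Matrix.mul_apply, Matrix.one_apply]
    have hm : ∀ τ, moeb 1 τ = τ := by
      intro τ; funext i k; simp only [moeb, hden]
      fin_cases i <;> fin_cases k <;> simp [blk, Matrix.mul_apply, Matrix.one_apply]
    apply hom_inj; intro x y
    rw [slashS, hden, hm, hd, hom_smul, inv_one, hom_symAct]
    simp
  simpa only [key, Pi.zero_apply] using h2
end laws
end partC1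

section partC2
/-- index (m,(n,r)) -/
noncomputable def ex3 (t : ℤ × ℤ × ℤ) (p : Fin 3 → ℂ) : ℂ := ee (t.2.1 * p 0 + t.2.2 * p 1 + t.1 * p 2)

def IsCoef {j : ℕ} (F : (Fin 2 → Fin 2 → ℂ) → (Fin (j + 1) → ℂ)) (a : ℤ → ℤ → ℤ → Fin (j + 1) → ℂ) : Prop :=
  ∀ l, ∀ p ∈ Tube, Summable (fun t : ℤ × ℤ × ℤ => ‖a t.2.1 t.2.2 t.1 l * ex3 t p‖) ∧
    HasSum (fun t : ℤ × ℤ × ℤ => a t.2.1 t.2.2 t.1 l * ex3 t p) (F (mat p) l)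

def e3' : ℤ × ℤ × ℤ ≃ (Fin 3 → ℤ) where
  toFun t := ![t.2.1, t.2.2, t.1]
  invFun T := (T 2, T 0, T 1)
  left_inv := by rintro ⟨a, b, c⟩; rfl
  right_inv := by intro T; funext k; fin_cases k <;> rfl

lemma ex3_eq (t : ℤ × ℤ × ℤ) (p : Fin 3 → ℂ) : ee (dotp (e3' t) p) = ex3 t p := by
  simp [ex3, dotp, e3', Fin.sum_univ_three]

lemma ex3_eq' (T : Fin 3 → ℤ) (p : Fin 3 → ℂ) : ex3 (e3'.symm T) p = ee (dotp T p) := by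
  rw [← ex3_eq]; simp

lemma exists_coef {j : ℕ} {F : (Fin 2 → Fin 2 → ℂ) → (Fin (j + 1) → ℂ)}
    (hF : IsSiegelCuspForm j 2 Sp4Z (fun _ => 1) F) : ∃ a, IsCoef F a := by
  have h : ∀ l : Fin (j + 1), ∃ a : (Fin 3 → ℤ) → ℂ, ∀ p ∈ Tube, Summable (fun T => ‖a T * ee (dotp T p)‖) ∧
      HasSum (fun T => a T * ee (dotp T p)) (F (mat p) l) := by
    intro l
    refine FE (fun p => F (mat p) l) ?_ ?_
    · have h1 : DifferentiableOn ℂ (fun p => F (mat p)) Tube :=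
        hF.1.comp mat_differentiable.differentiableOn (fun p hp => mat_mem.2 hp)
      exact (differentiableOn_pi.1 h1) l
    · intro p n
      simp only [law_trans hF]
  choose a ha using h
  refine ⟨fun n r m l => a l ![n, r, m], fun l p hp => ?_⟩
  obtain ⟨h1, h2⟩ := ha l p hp
  refine ⟨?_, ?_⟩
  · have := e3'.summable_iff.2 h1
    refine this.congr fun t => ?_
    simp only [Function.comp, ex3_eq]; rfl
  · have := e3'.hasSum_iff.2 h2
    refine this.congr_fun fun t => ?_
    simp only [Function.comp, ex3_eq]; rfl

lemma uniq3 (b : ℤ × ℤ × ℤ → ℂ) (h : ∀ p ∈ Tube, HasSum (fun t => b t * ex3 t p) 0) : b = 0 := by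
  obtain ⟨Y, hY⟩ : ∃ Y, Y ∈ Cone := ⟨![1, 0, 1], by simp [Cone]⟩
  let c : (Fin 3 → ℤ) → ℂ := fun T => b (e3'.symm T) * ee (dotp T (pt 0 Y))
  have hpt : ∀ T (x : Fin 3 → ℝ), ee (dotp T (pt x Y)) = ee (dotp T (pt 0 Y)) * ee (∑ i, (T i : ℂ) * x i) := by
    intro T x
    rw [← ee_add]; congr 1
    simp only [dotp, pt]
    rw [← Finset.sum_add_distrib]
    refine Finset.sum_congr rfl fun i _ => ?_
    have h0 : (((0 : Fin 3 → ℝ) i : ℝ) : ℂ) = 0 := by norm_num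
    rw [h0]
    ring
  have hs : ∀ x : Fin 3 → ℝ, HasSum (fun T => c T * ee (∑ i, (T i : ℂ) * x i)) 0 := by
    intro x
    have h1 := e3'.symm.hasSum_iff.2 (h (pt x Y) (pt_mem hY))
    refine h1.congr_fun fun T => ?_
    simp only [Function.comp, c, ex3_eq']; rw [hpt T x]; ring
  have hc : c = 0 := by
    refine torus_uniq c ?_ hs
    have := (hs 0).summable
    simpa [ee_zero] using this
  funext t
  have := congrFun hc (e3' t)
  simpa [c, ee_ne_zero] using this

section coefs
variable {j : ℕ} {F : (Fin 2 → Fin 2 → ℂ) → (Fin (j + 1) → ℂ)} {a : ℤ → ℤ → ℤ → Fin (j + 1) → ℂ}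

lemma IsCoef.hasSum_hom (ha : IsCoef F a) (p : Fin 3 → ℂ) (hp : p ∈ Tube) (x y : ℂ) :
    HasSum (fun t : ℤ × ℤ × ℤ => hom (a t.2.1 t.2.2 t.1) x y * ex3 t p) (hom (F (mat p)) x y) := by
  have := hasSum_sum (s := Finset.univ) (fun l (_ : l ∈ Finset.univ) => ((ha l p hp).2.mul_right (x ^ (j - (l:ℕ)) * y ^ (l:ℕ))))
  refine this.congr_fun fun t => ?_
  simp only [hom, Finset.sum_mul]
  refine Finset.sum_congr rfl fun l _ => by ring

lemma IsCoef.unique {b : ℤ → ℤ → ℤ → Fin (j + 1) → ℂ} (ha : IsCoef F a) (hb : IsCoef F b) : a = b := by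
  funext n r m l
  have := uniq3 (fun t => a t.2.1 t.2.2 t.1 l - b t.2.1 t.2.2 t.1 l) (fun p hp => by
    have := (ha l p hp).2.sub (hb l p hp).2
    rw [sub_self] at this
    refine this.congr_fun fun t => by ring)
  have := congrFun this (m, n, r)
  exact sub_eq_zero.1 this

lemma hom_zero_all {v : Fin (j + 1) → ℂ} (h : ∀ x y, hom v x y = 0) : v = 0 :=
  hom_inj (fun x y => by rw [h]; simp [hom])

/-- u^T T u -/
def tf (a b c d : ℤ) (t : ℤ × ℤ × ℤ) : ℤ × ℤ × ℤ :=
  (t.2.1 * b * b + t.2.2 * b * d + t.1 * d * d,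
   t.2.1 * a * a + t.2.2 * a * c + t.1 * c * c, 2 * t.2.1 * a * b + t.2.2 * (a * d + b * c) + 2 * t.1 * c * d)

lemma tf_inv (a b c d : ℤ) (h : (a * d - b * c) * (a * d - b * c) = 1) (t : ℤ × ℤ × ℤ) :
    tf d (-b) (-c) a (tf a b c d t) = t := by
  obtain ⟨m, n, r⟩ := t
  simp only [tf, Prod.mk.injEq]
  refine ⟨?_, ?_, ?_⟩
  · linear_combination m * h
  · linear_combination n * h
  · linear_combination r * h

def tfE (a b c d : ℤ) (h : (a * d - b * c) * (a * d - b * c) = 1) : ℤ × ℤ × ℤ ≃ ℤ × ℤ × ℤ where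
  toFun := tf a b c d
  invFun := tf d (-b) (-c) a
  left_inv := tf_inv a b c d h
  right_inv := by
    intro t
    have := tf_inv d (-b) (-c) a (by rw [← h]; ring) t
    simpa using this

lemma unip_mem (a b c d : ℤ) (h : (a * d - b * c) * (a * d - b * c) = 1) (p : Fin 3 → ℂ) (hp : p ∈ Tube) :
    ![a * a * p 0 + 2 * a * b * p 1 + b * b * p 2, a * c * p 0 + (a * d + b * c) * p 1 + b * d * p 2,
      c * c * p 0 + 2 * c * d * p 1 + d * d * p 2] ∈ Tube := by
  obtain ⟨h0, h2, h1⟩ := hp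
  have hr : ((a * d - b * c) * (a * d - b * c) : ℝ) = 1 := by exact_mod_cast h
  have him : ∀ (n : ℤ) (z : ℂ), (n * z).im = n * z.im := by intro n z; simp
  have e0 : (a * a * p 0 + 2 * a * b * p 1 + b * b * p 2 : ℂ).im = a * a * (p 0).im + 2 * a * b * (p 1).im + b * b * (p 2).im := by
    have := him (a * a) (p 0); have := him (2 * a * b) (p 1); have := him (b * b) (p 2)
    push_cast at *
    simp only [Complex.add_im, *]
  have e1 : (a * c * p 0 + (a * d + b * c) * p 1 + b * d * p 2 : ℂ).im = a * c * (p 0).im + (a * d + b * c) * (p 1).im + b * d * (p 2).im := by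
    have := him (a * c) (p 0); have := him (a * d + b * c) (p 1); have := him (b * d) (p 2)
    push_cast at *
    simp only [Complex.add_im, *]
  have e2 : (c * c * p 0 + 2 * c * d * p 1 + d * d * p 2 : ℂ).im = c * c * (p 0).im + 2 * c * d * (p 1).im + d * d * (p 2).im := by
    have := him (c * c) (p 0); have := him (2 * c * d) (p 1); have := him (d * d) (p 2)
    push_cast at *
    simp only [Complex.add_im, *]
  have hpos : ∀ u v : ℝ, (u ≠ 0 ∨ v ≠ 0) → 0 < u * u * (p 0).im + 2 * u * v * (p 1).im + v * v * (p 2).im := by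
    intro u v huv
    have key : (p 0).im * (u * u * (p 0).im + 2 * u * v * (p 1).im + v * v * (p 2).im)
      = ((p 0).im * u + (p 1).im * v) ^ 2 + ((p 0).im * (p 2).im - (p 1).im ^ 2) * v ^ 2 := by ring
    have : 0 < (p 0).im * (u * u * (p 0).im + 2 * u * v * (p 1).im + v * v * (p 2).im) := by
      rw [key]
      by_cases hv : v = 0
      · subst hv
        have hu : u ≠ 0 := by simpa using huv
        have : 0 < ((p 0).im * u) ^ 2 := by
          have : (p 0).im ≠ 0 := ne_of_gt h0
          positivity
        simpa using this
      · have : 0 < ((p 0).im * (p 2).im - (p 1).im ^ 2) * v ^ 2 := mul_pos (sub_pos.2 h1) (by positivity)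
        have := sq_nonneg ((p 0).im * u + (p 1).im * v)
        linarith
    exact pos_of_mul_pos_right this h0.le
  refine ⟨?_, ?_, ?_⟩
  · simp only [Matrix.cons_val_zero]; rw [e0]
    apply hpos
    by_contra hcon; push Not at hcon; rw [hcon.1, hcon.2] at hr; simp at hr
  · simp only [Matrix.cons_val]; rw [e2]
    apply hpos
    by_contra hcon; push Not at hcon; rw [hcon.1, hcon.2] at hr; simp at hr
  · simp only [Matrix.cons_val, Matrix.cons_val_zero, Matrix.cons_val_one]; rw [e0, e1, e2]
    have h1' := sub_pos.2 h1
    simp only at h1'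
    rw [← sub_pos]
    calc (0:ℝ) < ((p 0).im * (p 2).im - (p 1).im ^ 2) := h1'
      _ = ((p 0).im * (p 2).im - (p 1).im ^ 2) * (((a:ℝ) * d - b * c) * (a * d - b * c)) := by rw [hr, mul_one]
      _ = _ := by ring

lemma IsCoef.equiv (hF : IsSiegelCuspForm j 2 Sp4Z (fun _ => 1) F) (ha : IsCoef F a) (α β γ δ : ℤ)
    (h : (α * δ - β * γ) * (α * δ - β * γ) = 1) (n r m : ℤ) (x y : ℂ) :
    hom (a (n * α * α + r * α * γ + m * γ * γ) (2 * n * α * β + r * (α * δ + β * γ) + 2 * m * γ * δ)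
      (n * β * β + r * β * δ + m * δ * δ)) x y = hom (a n r m) (α * x + β * y) (γ * x + δ * y) := by
  set e := α * δ - β * γ with he
  have he' : (α * δ - β * γ : ℂ) = e := by rw [he]; push_cast; ring
  have he2 : (e * e : ℂ) = 1 := by exact_mod_cast h
  set X := α * x + β * y with hX
  set Z := γ * x + δ * y with hZ
  have hx : (e * (δ * X - β * Z) : ℂ) = x := by
    rw [hX, hZ]; linear_combination (e * x : ℂ) * he' + x * he2
  have hy : (e * (-γ * X + α * Z) : ℂ) = y := by
    rw [hX, hZ]; linear_combination (e * y : ℂ) * he' + y * he2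
  let σ := tfE α β γ δ h
  have := uniq3 (fun t => hom (a (σ.symm t).2.1 (σ.symm t).2.2 (σ.symm t).1) X Z - hom (a t.2.1 t.2.2 t.1) x y) (by
    intro p hp
    have h1 := ha.hasSum_hom p hp x y
    have h2 := ha.hasSum_hom _ (unip_mem α β γ δ h p hp) X Z
    rw [law_unip hF α β γ δ e rfl h p hp, hx, hy] at h2
    rw [← σ.symm.hasSum_iff] at h2
    have h3 := h2.sub h1
    rw [sub_self] at h3
    refine h3.congr_fun fun t => ?_
    obtain ⟨s, rfl⟩ := σ.surjective t
    simp only [Function.comp, Equiv.symm_apply_apply, sub_mul]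
    congr 2
    simp only [ex3]
    congr 1
    simp only [σ, tfE, Equiv.coe_fn_mk, tf]
    push_cast
    ring)
  have h4 := congrFun this (σ (m, n, r))
  simp only [Equiv.symm_apply_apply] at h4
  exact (sub_eq_zero.1 h4).symm

lemma IsCoef.equiv_zero (hF : IsSiegelCuspForm j 2 Sp4Z (fun _ => 1) F) (ha : IsCoef F a) (α β γ δ : ℤ)
    (h : (α * δ - β * γ) * (α * δ - β * γ) = 1) (n r m : ℤ)
    (h0 : a (n * α * α + r * α * γ + m * γ * γ) (2 * n * α * β + r * (α * δ + β * γ) + 2 * m * γ * δ)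
      (n * β * β + r * β * δ + m * δ * δ) = 0) : a n r m = 0 := by
  apply hom_zero_all
  intro X Z
  set e := α * δ - β * γ with he
  have he' : (α * δ - β * γ : ℂ) = e := by rw [he]; push_cast; ring
  have he2 : (e * e : ℂ) = 1 := by exact_mod_cast h
  have := ha.equiv hF α β γ δ h n r m (e * (δ * X - β * Z)) (e * (-γ * X + α * Z))
  rw [h0] at this
  have hX : (α * (e * (δ * X - β * Z)) + β * (e * (-γ * X + α * Z)) : ℂ) = X := by
    linear_combination (e * X : ℂ) * he' + X * he2
  have hZ : (γ * (e * (δ * X - β * Z)) + δ * (e * (-γ * X + α * Z)) : ℂ) = Z := by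
    linear_combination (e * Z : ℂ) * he' + Z * he2
  rw [hX, hZ] at this
  rw [← this]; simp [hom]
end coefs
end partC2

section partC3
lemma hom_bound {j : ℕ} (v : Fin (j + 1) → ℂ) (x y : ℂ) (B : ℝ) (hx : ‖x‖ ≤ B) (hy : ‖y‖ ≤ B) :
    ‖hom v x y‖ ≤ (∑ l, ‖v l‖) * B ^ j := by
  rw [hom, Finset.sum_mul]
  refine (norm_sum_le _ _).trans (Finset.sum_le_sum fun l _ => ?_)
  have hB : 0 ≤ B := (norm_nonneg x).trans hx
  have hl : (l : ℕ) ≤ j := Nat.lt_succ_iff.1 l.2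
  simp only [norm_mul, norm_pow]
  have h1 : ‖x‖ ^ (j - (l:ℕ)) ≤ B ^ (j - (l:ℕ)) := pow_le_pow_left₀ (norm_nonneg _) hx _
  have h2 : ‖y‖ ^ (l:ℕ) ≤ B ^ (l:ℕ) := pow_le_pow_left₀ (norm_nonneg _) hy _
  have h3 : B ^ j = B ^ (j - (l:ℕ)) * B ^ (l:ℕ) := by rw [← pow_add]; congr 1; omega
  rw [h3]
  gcongr

section coefs
variable {j : ℕ} {F : (Fin 2 → Fin 2 → ℂ) → (Fin (j + 1) → ℂ)} {a : ℤ → ℤ → ℤ → Fin (j + 1) → ℂ}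

lemma IsCoef.bound (ha : IsCoef F a) : ∃ M : ℝ, 0 ≤ M ∧ ∀ n r m : ℤ, ∑ l, ‖a n r m l‖ ≤ M * Real.exp (2 * Real.pi * (n + m)) := by
  let p : Fin 3 → ℂ := ![I, 0, I]
  have hp : p ∈ Tube := by simp [Tube, Cone, p]
  refine ⟨∑ l, ∑' t : ℤ × ℤ × ℤ, ‖a t.2.1 t.2.2 t.1 l * ex3 t p‖, ?_, ?_⟩
  · exact Finset.sum_nonneg fun l _ => tsum_nonneg fun _ => norm_nonneg _
  · intro n r m
    rw [Finset.sum_mul]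
    refine Finset.sum_le_sum fun l _ => ?_
    have h := (ha l p hp).1.le_tsum (m, n, r) (fun _ _ => norm_nonneg _)
    simp only [norm_mul, ex3, norm_ee] at h
    have e : (n * p 0 + r * p 1 + m * p 2 : ℂ).im = n + m := by simp [p]
    rw [e] at h
    have h2 : ‖a n r m l‖ = (‖a n r m l‖ * Real.exp (-2 * Real.pi * (n + m))) * Real.exp (2 * Real.pi * (n + m)) := by
      rw [mul_assoc, ← Real.exp_add]; ring_nf; simp
    rw [h2]
    gcongr
    simpa only [norm_mul, ex3, norm_ee] using h

lemma IsCoef.K (hF : IsSiegelCuspForm j 2 Sp4Z (fun _ => 1) F) (ha : IsCoef F a) (n r m : ℤ)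
    (h : m < 0 ∨ (m = 0 ∧ r ≠ 0)) : a n r m = 0 := by
  obtain ⟨M, hM, hb⟩ := ha.bound
  obtain ⟨s, hs, hs1, hrs⟩ : ∃ s : ℤ, s * s = 1 ∧ |(s:ℝ)| = 1 ∧ ∀ k : ℕ, r * (s * k) + m * (s * k) * (s * k) ≤ -k := by
    have key : ∀ s : ℤ, s * s = 1 → (r * s ≤ 0) → (r ≠ 0 → r * s ≤ -1) → ∀ k : ℕ, r * (s * k) + m * (s * k) * (s * k) ≤ -k := by
      intro s hs h1 h2 k
      have e : r * (s * k) + m * (s * k) * (s * k) = (r * s) * k + m * (k * k) := by linear_combination m * k * k * hs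
      rw [e]
      have hk : (0:ℤ) ≤ k := by positivity
      have hkk : (k:ℤ) ≤ k * k := by exact_mod_cast Nat.le_mul_self k
      rcases h with h | ⟨h, h'⟩
      · nlinarith
      · rw [h]; nlinarith [h2 h']
    rcases le_or_gt r 0 with hr | hr
    · exact ⟨1, by norm_num, by norm_num, key 1 (by norm_num) (by linarith) (fun h => by have := lt_of_le_of_ne hr h; linarith)⟩
    · exact ⟨-1, by norm_num, by norm_num, key (-1) (by norm_num) (by linarith) (fun h => by linarith)⟩
  apply hom_zero_all
  intro x y
  set B := ‖x‖ + ‖y‖ with hB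
  have hB0 : 0 ≤ B := by positivity
  have hk : ∀ k : ℕ, ‖hom (a n r m) x y‖ ≤ (M * Real.exp (2 * Real.pi * (n + m)) * B ^ j * Real.exp 1) *
      (((k:ℝ) + 1) ^ j * Real.exp (-((k:ℝ) + 1))) := by
    intro k
    have h1 := ha.equiv hF 1 0 (s * k) 1 (by norm_num) n r m x (y - (s * k : ℤ) * x)
    have e2 : hom (a n r m) ((1:ℤ) * x + (0:ℤ) * (y - (s * k : ℤ) * x)) ((s * k : ℤ) * x + (1:ℤ) * (y - (s * k : ℤ) * x)) = hom (a n r m) x y := by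
      congr 1 <;> push_cast <;> ring
    rw [e2] at h1
    rw [← h1]
    have hsk : ‖((s * k : ℤ) : ℂ)‖ = k := by
      push_cast; rw [norm_mul]; simp [hs1]
    refine (hom_bound _ _ _ (B * ((k:ℝ) + 1)) ?_ ?_).trans ?_
    · nlinarith [norm_nonneg x, norm_nonneg y, (Nat.cast_nonneg k : (0:ℝ) ≤ k)]
    · refine (norm_sub_le _ _).trans ?_
      rw [norm_mul, hsk]
      nlinarith [norm_nonneg x, norm_nonneg y, (Nat.cast_nonneg k : (0:ℝ) ≤ k)]
    · refine (mul_le_mul_of_nonneg_right (hb _ _ _) (by positivity)).trans ?_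
      rw [mul_pow]
      have h3 : (((n * 1 * 1 + r * 1 * (s * k) + m * (s * k) * (s * k) : ℤ) : ℝ) + ((n * 0 * 0 + r * 0 * 1 + m * 1 * 1 : ℤ) : ℝ)) ≤ n + m - k := by
        have := hrs k
        have : ((r * (s * k) + m * (s * k) * (s * k) : ℤ) : ℝ) ≤ ((-k : ℤ) : ℝ) := by exact_mod_cast this
        push_cast at this ⊢
        linarith
      have h4 : Real.exp (2 * Real.pi * (((n * 1 * 1 + r * 1 * (s * k) + m * (s * k) * (s * k) : ℤ) : ℝ) + ((n * 0 * 0 + r * 0 * 1 + m * 1 * 1 : ℤ) : ℝ)))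
          ≤ Real.exp (2 * Real.pi * (n + m)) * Real.exp 1 * Real.exp (-((k:ℝ) + 1)) := by
        rw [← Real.exp_add, ← Real.exp_add]
        apply Real.exp_le_exp.2
        have := Real.pi_gt_three
        nlinarith [(Nat.cast_nonneg k : (0:ℝ) ≤ k)]
      calc _ ≤ M * (Real.exp (2 * Real.pi * (n + m)) * Real.exp 1 * Real.exp (-((k:ℝ) + 1))) * (B ^ j * ((k:ℝ) + 1) ^ j) := by gcongr
        _ = _ := by ring
  have ht : Tendsto (fun k : ℕ => (M * Real.exp (2 * Real.pi * (n + m)) * B ^ j * Real.exp 1) *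
      (((k:ℝ) + 1) ^ j * Real.exp (-((k:ℝ) + 1)))) atTop (𝓝 0) := by
    rw [← mul_zero (M * Real.exp (2 * Real.pi * (n + m)) * B ^ j * Real.exp 1)]
    refine Tendsto.const_mul _ ?_
    exact (Real.tendsto_pow_mul_exp_neg_atTop_nhds_zero j).comp
      (tendsto_atTop_add_const_right _ _ tendsto_natCast_atTop_atTop)
  have := ge_of_tendsto' ht hk
  exact norm_le_zero_iff.1 this

lemma tube_diag (t : ℂ) (ht : 0 < t.im) (s : ℝ) (hs : 0 < s) : ![t, 0, s * I] ∈ Tube := by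
  simp [Tube, Cone, ht, hs]

lemma IsCoef.K2 (hF : IsSiegelCuspForm j 2 Sp4Z (fun _ => 1) F) (ha : IsCoef F a) (n : ℤ) : a n 0 0 = 0 := by
  funext l
  have h := uniq3 (fun t => if t.1 = 0 then a t.2.1 t.2.2 t.1 l else 0) (by
    intro p hp
    set τ := p 0 with hτ
    have hτ0 : 0 < τ.im := hp.1
    have hterm : ∀ t : ℤ × ℤ × ℤ, ∀ s : ℝ, a t.2.1 t.2.2 t.1 l * ex3 t ![τ, 0, s * I]
      = a t.2.1 t.2.2 t.1 l * ee (t.2.1 * τ) * (Real.exp (-(2 * Real.pi * t.1) * s) : ℝ) := by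
      intro t s
      simp only [ex3, Matrix.cons_val_zero, Matrix.cons_val_one, Matrix.cons_val, mul_zero, add_zero, ee_add]
      rw [mul_assoc]; congr 2
      simp only [ee]; rw [Complex.ofReal_exp]; congr 1
      push_cast
      linear_combination (2 * Real.pi * t.1 * s : ℂ) * I_sq
    have hm : ∀ t : ℤ × ℤ × ℤ, t.1 < 0 → a t.2.1 t.2.2 t.1 l = 0 := fun t ht => by
      rw [ha.K hF _ _ _ (Or.inl ht)]; rfl
    have hs1 := (ha l _ (tube_diag τ hτ0 1 one_pos)).1
    have hlim := tendsto_tsum_of_dominated_convergence (𝓕 := (atTop : Filter ℝ))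
      (f := fun s (t : ℤ × ℤ × ℤ) => a t.2.1 t.2.2 t.1 l * ex3 t ![τ, 0, s * I])
      (g := fun t => (if t.1 = 0 then a t.2.1 t.2.2 t.1 l else 0) * ee (t.2.1 * τ)) hs1
      (by
        intro t
        simp only [hterm]
        rcases lt_trichotomy t.1 0 with h0 | h0 | h0
        · simp only [hm t h0, zero_mul, ite_self]; exact tendsto_const_nhds
        · simp [h0]
        · rw [if_neg h0.ne', zero_mul]
          have h1 : Tendsto (fun s : ℝ => Real.exp (-(2 * Real.pi * t.1) * s)) atTop (𝓝 0) := by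
            apply Real.tendsto_exp_atBot.comp
            apply Tendsto.const_mul_atTop_of_neg _ tendsto_id
            have : (0:ℝ) < t.1 := by exact_mod_cast h0
            have := Real.pi_pos
            have : 0 < 2 * Real.pi * t.1 := by positivity
            linarith
          have h2 := ((Complex.continuous_ofReal.tendsto 0).comp h1).const_mul (a t.2.1 t.2.2 t.1 l * ee (t.2.1 * τ))
          simpa using h2)
      (by
        filter_upwards [eventually_ge_atTop (1:ℝ)] with s hs t
        rw [hterm, hterm, norm_mul, norm_mul _ ((Real.exp _ : ℝ) : ℂ)]
        rcases lt_or_ge t.1 0 with h0 | h0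
        · simp [hm t h0]
        · gcongr
          simp only [Complex.norm_real, Real.norm_eq_abs, Real.abs_exp]
          apply Real.exp_le_exp.2
          have : (0:ℝ) ≤ t.1 := by exact_mod_cast h0
          have := Real.pi_pos
          have : 0 ≤ 2 * Real.pi * t.1 := by positivity
          nlinarith)
    have hlim2 : Tendsto (fun s : ℝ => ∑' t : ℤ × ℤ × ℤ, a t.2.1 t.2.2 t.1 l * ex3 t ![τ, 0, s * I]) atTop (𝓝 0) := by
      refine (law_cusp hF τ hτ0 l).congr' ?_
      filter_upwards [eventually_gt_atTop (0:ℝ)] with s hs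
      exact ((ha l _ (tube_diag τ hτ0 s hs)).2.tsum_eq).symm
    have h0 := tendsto_nhds_unique hlim hlim2
    have hsum : Summable (fun t : ℤ × ℤ × ℤ => (if t.1 = 0 then a t.2.1 t.2.2 t.1 l else 0) * ee (t.2.1 * τ)) := by
      refine Summable.of_norm_bounded hs1 fun t => ?_
      rw [hterm]
      by_cases h1 : t.1 = 0
      · simp [h1]
      · rw [if_neg h1]; simp only [zero_mul, norm_zero]; exact norm_nonneg _
    have := hsum.hasSum
    rw [h0] at this
    refine this.congr_fun fun t => ?_
    by_cases h1 : t.1 = 0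
    · rw [if_pos h1]
      by_cases h2 : t.2.2 = 0
      · simp [ex3, h1, h2, hτ]
      · rw [ha.K hF _ _ _ (Or.inr ⟨h1, h2⟩)]; simp
    · rw [if_neg h1]; simp)
  have := congrFun h (0, n, 0)
  simpa using this

lemma IsCoef.supp (hF : IsSiegelCuspForm j 2 Sp4Z (fun _ => 1) F) (ha : IsCoef F a) (n r m : ℤ)
    (hne : a n r m ≠ 0) : 0 < m ∧ 0 < n ∧ r * r < 4 * n * m := by
  have hK : ∀ n r m, m ≤ 0 → a n r m = 0 := by
    intro n r m hm
    rcases hm.lt_or_eq with h | h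
    · exact ha.K hF _ _ _ (Or.inl h)
    · by_cases hr : r = 0
      · subst h hr; exact ha.K2 hF n
      · exact ha.K hF _ _ _ (Or.inr ⟨h, hr⟩)
  have hm : 0 < m := by
    by_contra hcon; exact hne (hK n r m (not_lt.1 hcon))
  have hD : r * r < 4 * n * m := by
    by_contra hcon
    push Not at hcon
    apply hne
    obtain ⟨g, β, δ, hg, hco, h1, h2⟩ : ∃ (g : ℤ) (β δ : ℤ), 0 < g ∧ IsCoprime β δ ∧ 2 * m = g * β ∧ -r = g * δ := by
      have hpos : 0 < Int.gcd (2 * m) (-r) := Int.gcd_pos_of_ne_zero_left _ (by omega)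
      obtain ⟨β, δ, hg, h1, h2⟩ := Int.exists_gcd_one (m := 2 * m) (n := -r) hpos
      exact ⟨(Int.gcd (2 * m) (-r) : ℤ), β, δ, by exact_mod_cast hpos, Int.isCoprime_iff_gcd_eq_one.2 hg, h1.trans (mul_comm _ _), h2.trans (mul_comm _ _)⟩
    obtain ⟨u, v, huv⟩ := hco
    refine ha.equiv_zero hF v β (-u) δ (by
      have : v * δ - β * (-u) = 1 := by rw [← huv]; ring
      rw [this]; norm_num) n r m (hK _ _ _ ?_)
    have key : g * g * (n * β * β + r * β * δ + m * δ * δ) = m * (4 * n * m - r * r) := by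
      have : g * g * (n * β * β + r * β * δ + m * δ * δ) = n * (g * β) * (g * β) + r * (g * β) * (g * δ) + m * (g * δ) * (g * δ) := by ring
      rw [this, ← h1, ← h2]; ring
    by_contra hc
    push Not at hc
    have h5 : 0 < g * g * (n * β * β + r * β * δ + m * δ * δ) := by positivity
    rw [key] at h5
    nlinarith
  refine ⟨hm, ?_, hD⟩
  by_contra hc
  nlinarith [mul_self_nonneg r]

lemma odd_zero (hF : IsSiegelCuspForm j 2 Sp4Z (fun _ => 1) F) (ha : IsCoef F a) (hj : Odd j) (n r m : ℤ) : a n r m = 0 := by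
  apply hom_zero_all
  intro x y
  have h := ha.equiv hF (-1) 0 0 (-1) (by norm_num) n r m x y
  have e1 : n * -1 * -1 + r * -1 * 0 + m * 0 * 0 = n := by ring
  have e2 : 2 * n * -1 * 0 + r * (-1 * -1 + 0 * 0) + 2 * m * 0 * -1 = r := by ring
  have e3 : n * 0 * 0 + r * 0 * -1 + m * -1 * -1 = m := by ring
  rw [e1, e2, e3] at h
  have h2 : hom (a n r m) (((-1:ℤ):ℂ) * x + ((0:ℤ):ℂ) * y) (((0:ℤ):ℂ) * x + ((-1:ℤ):ℂ) * y) = - hom (a n r m) x y := by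
    simp only [hom]
    rw [← Finset.sum_neg_distrib]
    refine Finset.sum_congr rfl fun l _ => ?_
    have hl : (l : ℕ) ≤ j := Nat.lt_succ_iff.1 l.2
    have e4 : (((-1:ℤ):ℂ) * x + ((0:ℤ):ℂ) * y) = (-1) * x := by push_cast; ring
    have e5 : (((0:ℤ):ℂ) * x + ((-1:ℤ):ℂ) * y) = (-1) * y := by push_cast; ring
    rw [e4, e5, mul_pow, mul_pow]
    have : (-1:ℂ) ^ (j - (l:ℕ)) * (-1) ^ (l:ℕ) = -1 := by
      rw [← pow_add, Nat.sub_add_cancel hl]; exact hj.neg_one_pow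
    linear_combination (a n r m l * x ^ (j - (l:ℕ)) * y ^ (l:ℕ)) * this
  rw [h2] at h
  linear_combination h / 2

lemma zero_of_coef (hF : IsSiegelCuspForm j 2 Sp4Z (fun _ => 1) F) (ha : IsCoef F a) (h0 : ∀ n r m, a n r m = 0) : F = 0 := by
  funext τ
  by_cases hτ : τ ∈ H2
  · have e : τ = mat ![τ 0 0, τ 0 1, τ 1 1] := by
      have hs := hτ.1
      have : τ 1 0 = τ 0 1 := by
        have := hs.apply 0 1
        simpa using this
      funext i k
      fin_cases i <;> fin_cases k <;> simp [mat, this]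
    have hp : ![τ 0 0, τ 0 1, τ 1 1] ∈ Tube := by rw [← mat_mem, ← e]; exact hτ
    funext l
    have := (ha l _ hp).2
    simp only [h0, Pi.zero_apply, zero_mul] at this
    rw [e]
    exact this.unique hasSum_zero
  · rw [hF.2.2.2 τ hτ]; rfl
end coefs
end partC3

section partC4
section coefs
variable {j : ℕ} {F : (Fin 2 → Fin 2 → ℂ) → (Fin (j + 1) → ℂ)} {a : ℤ → ℤ → ℤ → Fin (j + 1) → ℂ}

lemma tube_big (τ z : ℂ) (hτ : 0 < τ.im) (x : ℝ) (y : ℝ) (hy : y = (z.im ^ 2 + 1) / τ.im) : ![τ, z, x + y * I] ∈ Tube := by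
  have : 0 < y := by rw [hy]; positivity
  refine ⟨by simpa using hτ, by simpa using this, ?_⟩
  simp only [Matrix.cons_val_zero, Matrix.cons_val_one, Matrix.cons_val]
  have : τ.im * y = z.im ^ 2 + 1 := by rw [hy]; field_simp
  have e : ((x:ℂ) + y * I).im = y := by simp
  rw [e, this]; linarith

lemma IsCoef.summable2 (ha : IsCoef F a) (m : ℤ) (l : Fin (j+1)) (τ z : ℂ) (hτ : 0 < τ.im) :
    Summable (fun q : ℤ × ℤ => ‖a q.1 q.2 m l * ee (q.1 * τ + q.2 * z)‖) := by
  have h := (ha l _ (tube_big τ z hτ 0 _ rfl)).1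
  have h2 := h.prod_factor m
  set Y : ℂ := ((0:ℝ):ℂ) + ((z.im ^ 2 + 1) / τ.im : ℝ) * I
  have h3 := h2.mul_right (‖ee (m * Y)‖⁻¹)
  refine h3.congr fun q => ?_
  simp only [ex3, Matrix.cons_val_zero, Matrix.cons_val_one, Matrix.cons_val]
  rw [ee_add _ (m * Y), ← mul_assoc, norm_mul _ (ee (m * Y)), mul_assoc, mul_inv_cancel₀ (norm_ne_zero_iff.2 (ee_ne_zero _)), mul_one]

/-- vector-valued Jacobi coefficient -/
noncomputable def phi (a : ℤ → ℤ → ℤ → Fin (j + 1) → ℂ) (m : ℤ) (τ z : ℂ) : Fin (j + 1) → ℂ :=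
  fun l => ∑' q : ℤ × ℤ, a q.1 q.2 m l * ee (q.1 * τ + q.2 * z)

lemma IsCoef.hasSum_phi (ha : IsCoef F a) (m : ℤ) (τ z : ℂ) (hτ : 0 < τ.im) (x y : ℂ) :
    HasSum (fun q : ℤ × ℤ => hom (a q.1 q.2 m) x y * ee (q.1 * τ + q.2 * z)) (hom (phi a m τ z) x y) := by
  have := hasSum_sum (s := Finset.univ) (fun l (_ : l ∈ Finset.univ) =>
    ((ha.summable2 m l τ z hτ).of_norm.hasSum.mul_right (x ^ (j - (l:ℕ)) * y ^ (l:ℕ))))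
  refine this.congr_fun fun t => ?_
  simp only [hom, Finset.sum_mul]
  refine Finset.sum_congr rfl fun l _ => by ring

lemma IsCoef.phi_S (hF : IsSiegelCuspForm j 2 Sp4Z (fun _ => 1) F) (ha : IsCoef F a) (m : ℤ) (τ z : ℂ) (hτ : 0 < τ.im) (x y : ℂ) :
    hom (phi a m (-1 / τ) (z / τ)) x y = τ ^ 2 * ee (m * z ^ 2 / τ) * hom (phi a m τ z) (τ * x) (z * x + y) := by
  have hτ' : 0 < (-1 / τ).im := by
    rw [neg_div, one_div, Complex.neg_im, Complex.inv_im, neg_div, neg_neg]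
    exact div_pos hτ (Complex.normSq_pos.2 (fun h => by rw [h] at hτ; simp at hτ))
  set y0 := (z.im ^ 2 + 1) / τ.im with hy0
  let B : ℤ → ℂ := fun m => ee (-(m * z ^ 2 / τ)) * hom (phi a m (-1 / τ) (z / τ)) x y - τ ^ 2 * hom (phi a m τ z) (τ * x) (z * x + y)
  have hB : ∀ s : ℝ, HasSum (fun m : ℤ => B m * ee (m * (s + y0 * I))) 0 := by
    intro s
    set p : Fin 3 → ℂ := ![τ, z, s + y0 * I] with hp
    have hpt : p ∈ Tube := tube_big τ z hτ s y0 hy0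
    have h1 := ha.hasSum_hom _ (S_mem p hpt) x y
    have h2 := (ha.hasSum_hom p hpt (p 0 * x) (p 1 * x + y)).mul_left (p 0 ^ 2)
    rw [law_S hF p hpt] at h1
    have h3 := h1.sub h2
    rw [sub_self] at h3
    refine h3.prod_fiberwise fun m => ?_
    have g1 := ((ha.hasSum_phi m (-1 / τ) (z / τ) hτ' x y).mul_left (ee (-(m * z ^ 2 / τ)))).sub
      ((ha.hasSum_phi m τ z hτ (τ * x) (z * x + y)).mul_left (τ ^ 2))
    refine (g1.mul_right (ee (m * (s + y0 * I)))).congr_fun fun q => ?_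
    simp only [ex3, hp, Matrix.cons_val_zero, Matrix.cons_val_one, Matrix.cons_val]
    rw [show (q.1 * (-1 / τ) + q.2 * (z / τ) + m * (s + y0 * I - z ^ 2 / τ) : ℂ) =
      (-(m * z ^ 2 / τ)) + (q.1 * (-1 / τ) + q.2 * (z / τ)) + m * (s + y0 * I) by ring, ee_add, ee_add, ee_add _ (m * (s + y0 * I))]
    ring
  have h0 : (fun T : Fin 1 → ℤ => B (T 0) * ee (T 0 * (y0 * I))) = 0 := by
    have hh : ∀ x : Fin 1 → ℝ, HasSum (fun T : Fin 1 → ℤ => B (T 0) * ee (T 0 * (y0 * I)) * ee (∑ i, (T i : ℂ) * x i)) 0 := by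
      intro x
      have := (Equiv.funUnique (Fin 1) ℤ).hasSum_iff.2 (hB (x 0))
      refine this.congr_fun fun T => ?_
      simp only [Function.comp, Equiv.funUnique_apply, Finset.univ_unique, Finset.sum_singleton, Fin.default_eq_zero]
      rw [mul_assoc, ← ee_add]; congr 2; ring
    refine torus_uniq _ ?_ hh
    have := (hh 0).summable
    simpa [ee_zero] using this
  have h1 : B m = 0 := by
    have := congrFun h0 (fun _ => m)
    simpa [ee_ne_zero] using this
  have h2 := sub_eq_zero.1 h1
  have h3 : ee (m * z ^ 2 / τ) * ee (-(m * z ^ 2 / τ)) = 1 := by rw [← ee_add, add_neg_cancel, ee_zero]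
  linear_combination ee (m * z ^ 2 / τ) * h2 - hom (phi a m (-1 / τ) (z / τ)) x y * h3

lemma lead_vec {A B : Fin (j + 1) → ℂ} {τ z c : ℂ} (h : ∀ x y, hom A x y = c * hom B (τ * x) (z * x + y))
    (i : ℕ) (l0 : Fin (j+1)) (hi : i = j - l0) (hB : ∀ l : Fin (j + 1), j - (l:ℕ) < i → B l = 0) :
    A l0 = c * τ ^ i * B l0 := by
  have hl0 : (l0 : ℕ) ≤ j := Nat.lt_succ_iff.1 l0.2
  have hP : (∑ l, Polynomial.C (A l) * Polynomial.X ^ (j - (l:ℕ)) : Polynomial ℂ) =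
      ∑ l, Polynomial.C (c * B l * τ ^ (j - (l:ℕ))) * (Polynomial.X ^ (j - (l:ℕ)) * (Polynomial.C z * Polynomial.X + 1) ^ (l:ℕ)) := by
    apply Polynomial.funext
    intro x
    have := h x 1
    simp only [hom, one_pow, mul_one] at this
    simp only [Polynomial.eval_finsetSum, Polynomial.eval_mul, Polynomial.eval_C, Polynomial.eval_pow, Polynomial.eval_X, Polynomial.eval_add, Polynomial.eval_one]
    rw [this, Finset.mul_sum]
    refine Finset.sum_congr rfl fun l _ => ?_
    rw [mul_pow]; ring
  have h2 := congrArg (fun P => Polynomial.coeff P i) hP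
  simp only [Polynomial.finsetSum_coeff, Polynomial.coeff_C_mul] at h2
  rw [Finset.sum_eq_single l0, Finset.sum_eq_single l0] at h2
  · rw [Polynomial.coeff_X_pow, if_pos hi, mul_one, Polynomial.coeff_X_pow_mul', if_pos hi.ge, hi, Nat.sub_self] at h2
    rw [h2, Polynomial.coeff_zero_eq_eval_zero, hi]
    simp; ring
  · intro l _ hl
    have hl' : (l : ℕ) ≤ j := Nat.lt_succ_iff.1 l.2
    have hne : (l:ℕ) ≠ l0 := fun hh => hl (Fin.ext hh)
    rcases lt_or_gt_of_ne hne with h3 | h3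
    · rw [Polynomial.coeff_X_pow_mul', if_neg (by omega), mul_zero]
    · rw [hB l (by omega)]; simp
  · simp
  · intro l _ hl
    have hl' : (l : ℕ) ≤ j := Nat.lt_succ_iff.1 l.2
    have hne : (l:ℕ) ≠ l0 := fun hh => hl (Fin.ext hh)
    rw [Polynomial.coeff_X_pow, if_neg (by omega), mul_zero]
  · simp
end coefs
end partC4

section partD1
section modS
open UpperHalfPlane ModularForm EisensteinSeries MatrixGroups ModularGroup SlashInvariantForm
open scoped Manifold

abbrev HH : Set ℂ := {z : ℂ | 0 < z.im}

lemma S_smul_coe (z : ℍ) : ((S • z : ℍ) : ℂ) = -1 / (z : ℂ) := by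
  rw [UpperHalfPlane.modular_S_smul]; simp [neg_div]

lemma T_smul_coe (z : ℍ) : ((T • z : ℍ) : ℂ) = (z : ℂ) + 1 := by
  rw [UpperHalfPlane.modular_T_smul]; simp [add_comm]

lemma denom_T' (z : ℍ) : denom (T : GL (Fin 2) ℝ) z = 1 := by
  rw [ModularGroup.denom_apply]; simp [ModularGroup.T]

lemma neg_inv_mem {z : ℂ} (hz : z ∈ HH) : -1 / z ∈ HH := by
  have := (S • (⟨z, hz⟩ : ℍ)).2
  rwa [S_smul_coe] at this

lemma modS (f : ℂ → ℂ) (hd : DifferentiableOn ℂ f HH) (w s : ℕ) (hT : ∀ τ ∈ HH, f (τ + 1) = f τ)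
    (hS : ∀ τ ∈ HH, f (-1 / τ) = τ ^ w * f τ)
    (hb : ∃ K Y : ℝ, ∀ τ : ℂ, 0 < τ.im → Y ≤ τ.im → ‖f τ‖ ≤ K * Real.exp (-2 * Real.pi * τ.im) ^ s)
    (hw : w < 12 * s ∨ w = 12 * s + 2) : ∀ τ ∈ HH, f τ = 0 := by
  let k : ℤ := w - 12 * s
  let g : ℍ → ℂ := fun z => f z / ModularForm.discriminant z ^ s
  have hDS : ∀ z : ℍ, ModularForm.discriminant (S • z) = (z : ℂ) ^ 12 * ModularForm.discriminant z := by
    intro z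
    have h := congrFun ModularForm.discriminant_S_invariant z
    rw [SL_slash_apply, denom_S] at h
    rw [← h]
    have hz := z.ne_zero
    rw [_root_.zpow_neg]
    field_simp
  have hDT : ∀ z : ℍ, ModularForm.discriminant (T • z) = ModularForm.discriminant z := by
    intro z
    have h := congrFun ModularForm.discriminant_T_invariant z
    rw [SL_slash_apply] at h
    rw [← h]
    simp [denom_T']
  have hgS : g ∣[k] S = g := by
    funext z
    rw [SL_slash_apply, denom_S]
    simp only [g, S_smul_coe, hDS, hS z z.2]
    have hz := z.ne_zero
    have hD := ModularForm.discriminant_ne_zero z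
    have e : (z : ℂ) ^ (-k) = (z : ℂ) ^ (12 * s) / (z : ℂ) ^ w := by
      have : -k = ((12 * s : ℕ) : ℤ) - (w : ℕ) := by simp [k]
      rw [this, zpow_sub₀ hz, zpow_natCast, zpow_natCast]
    rw [e, mul_pow, ← pow_mul]
    field_simp
  have hgT : g ∣[k] T = g := by
    funext z
    rw [SL_slash_apply]
    have : denom (T : GL (Fin 2) ℝ) z = 1 := denom_T' _
    rw [this, _root_.one_zpow, mul_one]
    simp only [g, T_smul_coe, hDT, hT z z.2]
  have hg := slash_action_generators_SL2Z hgS hgT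
  have hbd : IsBoundedAtImInfty g := by
    obtain ⟨K, Y, hK⟩ := hb
    have h1 : (fun z : ℍ => f z) =O[atImInfty] (fun z : ℍ => Real.exp (-2 * Real.pi * z.im) ^ s) := by
      rw [Asymptotics.isBigO_iff]
      refine ⟨K, ?_⟩
      have : {z : ℍ | Y ≤ z.im} ∈ atImInfty := (atImInfty_mem _).2 ⟨Y, fun z hz => hz⟩
      filter_upwards [this] with z hz
      rw [Real.norm_of_nonneg (by positivity)]
      exact hK z z.2 hz
    have h2 := h1.trans (ModularForm.exp_isBigO_discriminant.pow s)
    exact (Asymptotics.div_isBoundedUnder_of_isBigO h2).isBigO_one ℝ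
  let G : ModularForm 𝒮ℒ k :=
    { toFun := g
      slash_action_eq' := fun _ ⟨γ, hγ⟩ => hγ ▸ hg γ
      holo' := by
        have h1 : MDiff (fun z : ℍ => f z) := by
          rw [UpperHalfPlane.mdifferentiable_iff]
          refine hd.congr fun z hz => ?_
          simp [ofComplex_apply_of_im_pos hz]
        exact h1.div (CuspForm.discriminant.holo'.pow s) (fun z => pow_ne_zero _ (ModularForm.discriminant_ne_zero z))
      bdd_at_cusps' := by
        intro c hc
        rw [Subgroup.IsArithmetic.isCusp_iff_isCusp_SL2Z] at hc
        rw [OnePoint.isBoundedAt_iff_forall_SL2Z hc]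
        intro γ _
        rw [hg γ]
        exact hbd }
  have hG : ∀ z : ℍ, g z = 0 := by
    have : G = 0 := by
      rcases hw with h | h
      · have := ModularFormClass.levelOne_neg_weight_eq_zero (k := k) (by simp only [k]; omega) G
        ext z; exact congrFun this z
      · have hk : k = 2 := by simp only [k]; omega
        have := levelOne_weight_two_rank_zero
        rw [← hk] at this
        exact rank_zero_iff_forall_zero.1 this G
    intro z
    change G z = 0
    rw [this]; rfl
  intro τ hτ
  have := hG ⟨τ, hτ⟩
  simp only [g, div_eq_zero_iff, pow_eq_zero_iff'] at this
  exact this.resolve_right (fun h => ModularForm.discriminant_ne_zero _ h.1)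

noncomputable def Et (τ : ℂ) : ℂ := E2 (ofComplex τ)

lemma Et_diff : DifferentiableOn ℂ Et HH := UpperHalfPlane.mdifferentiable_iff.1 E2_mdifferentiable

lemma Et_coe (z : ℍ) : Et z = E2 z := by simp [Et]

lemma Et_T (τ : ℂ) (hτ : τ ∈ HH) : Et (τ + 1) = Et τ := by
  have h := congrFun G2_T_transform ⟨τ, hτ⟩
  rw [SL_slash_apply] at h
  have e : denom (T : GL (Fin 2) ℝ) (⟨τ, hτ⟩ : ℍ) = 1 := denom_T' _
  rw [e, _root_.one_zpow, mul_one] at h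
  have h1 := Et_coe (T • ⟨τ, hτ⟩)
  have h2 := Et_coe ⟨τ, hτ⟩
  rw [T_smul_coe] at h1
  simp only [E2, Pi.smul_apply] at h1 h2
  rw [h] at h1
  exact h1.trans h2.symm

lemma Et_S (τ : ℂ) (hτ : τ ∈ HH) : Et (-1 / τ) = τ ^ 2 * Et τ + 6 * τ / (Real.pi * Complex.I) := by
  have h := G2_S_transform ⟨τ, hτ⟩
  have h1 := Et_coe (S • ⟨τ, hτ⟩)
  have h2 := Et_coe ⟨τ, hτ⟩
  rw [S_smul_coe] at h1
  simp only [E2, Pi.smul_apply, smul_eq_mul, riemannZeta_two] at h1 h2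
  change Et (-1 / τ) = _ at h1
  change Et τ = _ at h2
  have hτ0 : τ ≠ 0 := fun hh => by rw [hh] at hτ; simp [HH] at hτ
  have hpi : (Real.pi : ℂ) ≠ 0 := by exact_mod_cast Real.pi_ne_zero
  rw [h1, h2, h]
  simp only
  field_simp
  ring_nf
  simp only [Complex.I_sq]
  ring

lemma Et_bdd : ∃ M A : ℝ, ∀ τ ∈ HH, A ≤ τ.im → ‖Et τ‖ ≤ M := by
  obtain ⟨M, A, h⟩ := isBoundedAtImInfty_iff.1 isBoundedAtImInfty_E2
  exact ⟨M, A, fun τ hτ hA => by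
    have := h ⟨τ, hτ⟩ hA
    rwa [← Et_coe] at this⟩

lemma Et_lim : Tendsto (fun t : ℝ => Et (t * Complex.I)) atTop (𝓝 1) := by
  have hq : ∀ t : ℝ, 0 < t → HasSum (fun m : ℕ => (if m = 0 then 1 else -24 * (ArithmeticFunction.sigma 1 m : ℂ)) * ee (t * Complex.I) ^ m) (Et (t * Complex.I)) := by
    intro t ht
    have ht' : (t * Complex.I : ℂ) ∈ HH := by simpa [HH] using ht
    have := hasSum_qExpansion_E2 (z := ⟨t * Complex.I, ht'⟩)
    rw [← Et_coe] at this
    simpa [ee, smul_eq_mul] using this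
  have hnorm : ∀ t : ℝ, ‖ee (t * Complex.I)‖ = Real.exp (-2 * Real.pi * t) := by intro t; rw [norm_ee]; simp
  have := tendsto_tsum_of_dominated_convergence (𝓕 := (atTop : Filter ℝ))
    (f := fun t (m : ℕ) => (if m = 0 then 1 else -24 * (ArithmeticFunction.sigma 1 m : ℂ)) * ee (t * Complex.I) ^ m)
    (g := fun m => if m = 0 then 1 else 0) (hq 1 one_pos).summable.norm (by
      intro m
      by_cases hm : m = 0
      · simp [hm]
      · simp only [hm, if_false]
        have h0 : Tendsto (fun t : ℝ => ee (t * Complex.I)) atTop (𝓝 0) := by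
          rw [tendsto_zero_iff_norm_tendsto_zero]
          simp only [hnorm]
          apply Real.tendsto_exp_atBot.comp
          apply Tendsto.const_mul_atTop_of_neg _ tendsto_id
          have := Real.pi_pos
          linarith
        have := (h0.pow m).const_mul (-24 * (ArithmeticFunction.sigma 1 m : ℂ))
        rwa [zero_pow hm, mul_zero] at this)
    (by
      filter_upwards [eventually_ge_atTop (1:ℝ)] with t ht m
      rw [norm_mul, norm_mul, norm_pow, norm_pow, hnorm, hnorm]
      refine mul_le_mul_of_nonneg_left (pow_le_pow_left₀ (Real.exp_pos _).le ?_ _) (norm_nonneg _)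
      refine Real.exp_le_exp.2 ?_
      have := Real.pi_pos
      nlinarith)
  rw [tsum_ite_eq] at this
  refine this.congr' ?_
  filter_upwards [eventually_gt_atTop (0:ℝ)] with t ht
  exact (hq t ht).tsum_eq
end modS
end partD1

section partE1
lemma hs_congr {ι : Type*} {f g : ι → ℂ} {a b : ℂ} (h : HasSum f a) (h1 : ∀ i, g i = f i) (h2 : b = a) :
    HasSum g b := by
  rw [h2, show g = f from funext h1]; exact h

noncomputable def eC (x : ℂ) (b : ℕ) : ℂ := if Even b then x ^ (b / 2) / ((b / 2).factorial : ℂ) else 0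

lemma eC_hasSum (x y : ℂ) : HasSum (fun b => eC x b * y ^ b) (Complex.exp (x * y ^ 2)) := by
  have h : Function.Injective (fun b : ℕ => 2 * b) := fun a b h => by simpa using h
  rw [← h.hasSum_iff]
  · have := NormedSpace.expSeries_div_hasSum_exp (x * y ^ 2)
    rw [← Complex.exp_eq_exp_ℂ] at this
    refine hs_congr this ?_ rfl
    intro b
    simp [eC, mul_pow, pow_mul]; ring
  · intro b hb
    have : ¬ Even b := fun ⟨c, hc⟩ => hb ⟨c, by simp only; omega⟩
    simp [eC, this]

lemma eC_summable (x y : ℂ) : Summable (fun b => ‖eC x b * y ^ b‖) := (eC_hasSum x y).summable.norm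

/-- The corrected Taylor coefficients. -/
noncomputable def chi (m : ℂ) (M : ℕ → ℂ) (E : ℂ) (N : ℕ) : ℂ :=
  ∑ p ∈ Finset.HasAntidiagonal.antidiagonal N, 6 ^ p.1 / (p.1.factorial : ℂ) * M p.1 * eC (-3 * m * E) p.2

lemma chi_hasSum (m : ℂ) (M : ℕ → ℂ) (E : ℂ) (Φ : ℂ → ℂ)
    (h : ∀ w, HasSum (fun a => M a * w ^ a / (a.factorial : ℂ)) (Φ w)) (y : ℂ) :
    HasSum (fun N => y ^ N * chi m M E N) (Complex.exp (-3 * m * E * y ^ 2) * Φ (6 * y)) := by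
  have h1 := h (6 * y)
  have h2 := eC_hasSum (-3 * m * E) y
  have hs := summable_norm_sum_mul_antidiagonal_of_summable_norm h1.summable.norm h2.summable.norm
  have ht := tsum_mul_tsum_eq_tsum_sum_antidiagonal_of_summable_norm h1.summable.norm h2.summable.norm
  rw [h1.tsum_eq, h2.tsum_eq, mul_comm] at ht
  rw [ht]
  refine hs_congr hs.of_norm.hasSum ?_ rfl
  intro N
  rw [chi, Finset.mul_sum]
  refine Finset.sum_congr rfl fun p hp => ?_
  rw [← Finset.HasAntidiagonal.mem_antidiagonal.1 hp, pow_add, mul_pow]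
  ring

lemma pser_uniq (a b : ℕ → ℂ) (f : ℂ → ℂ) (ha : ∀ y, HasSum (fun N => y ^ N * a N) (f y))
    (hb : ∀ y, HasSum (fun N => y ^ N * b N) (f y)) (N : ℕ) : a N = b N := by
  have h1 : HasFPowerSeriesAt f (FormalMultilinearSeries.ofScalars ℂ a) 0 := by
    rw [hasFPowerSeriesAt_iff]
    exact Filter.Eventually.of_forall fun y => by simpa [smul_eq_mul] using ha y
  have h2 : HasFPowerSeriesAt f (FormalMultilinearSeries.ofScalars ℂ b) 0 := by
    rw [hasFPowerSeriesAt_iff]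
    exact Filter.Eventually.of_forall fun y => by simpa [smul_eq_mul] using hb y
  have := h1.eq_formalMultilinearSeries h2
  have := congrArg (fun p => p.coeff N) this
  simpa using this

lemma chi_trans (m : ℂ) (k : ℕ) (ε : ℂ) (M1 M2 : ℕ → ℂ) (E1 E2 τ : ℂ) (hτ : τ ≠ 0)
    (Φ1 Φ2 : ℂ → ℂ)
    (h1 : ∀ w, HasSum (fun a => M1 a * w ^ a / (a.factorial : ℂ)) (Φ1 w))
    (h2 : ∀ w, HasSum (fun a => M2 a * w ^ a / (a.factorial : ℂ)) (Φ2 w))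
    (hE : E1 = τ ^ 2 * E2 + 6 * τ / (Real.pi * Complex.I))
    (hΦ : ∀ z, Φ1 (2 * Real.pi * Complex.I * (z / τ)) =
      ε * τ ^ k * ee (m * z ^ 2 / τ) * Φ2 (2 * Real.pi * Complex.I * z)) (N : ℕ) :
    chi m M1 E1 N = ε * τ ^ (k + N) * chi m M2 E2 N := by
  have hpi : (Real.pi : ℂ) ≠ 0 := by exact_mod_cast Real.pi_ne_zero
  have key := pser_uniq (fun N => chi m M1 E1 N / τ ^ N) (fun N => ε * τ ^ k * chi m M2 E2 N)
    (fun y => Complex.exp (-3 * m * E1 * (y / τ) ^ 2) * Φ1 (6 * (y / τ))) (by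
      intro y
      refine hs_congr (chi_hasSum m M1 E1 Φ1 h1 (y / τ)) ?_ rfl
      intro N
      rw [div_pow]; ring) (by
      intro y
      have := (chi_hasSum m M2 E2 Φ2 h2 y).mul_left (ε * τ ^ k)
      refine hs_congr this ?_ ?_
      · intro N; ring
      · have hz := hΦ (6 * y / (2 * Real.pi * Complex.I))
        have e1 : 2 * Real.pi * Complex.I * (6 * y / (2 * Real.pi * Complex.I) / τ) = 6 * (y / τ) := by
          field_simp
        have e2 : 2 * Real.pi * Complex.I * (6 * y / (2 * Real.pi * Complex.I)) = 6 * y := by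
          field_simp
        rw [e1, e2] at hz
        rw [hz]
        have : Complex.exp (-3 * m * E1 * (y / τ) ^ 2) * ee (m * (6 * y / (2 * Real.pi * Complex.I)) ^ 2 / τ)
            = Complex.exp (-3 * m * E2 * y ^ 2) := by
          rw [ee, ← Complex.exp_add, hE]
          congr 1
          field_simp
          ring_nf
        rw [← this]; ring) N
  rw [div_eq_iff (pow_ne_zero _ hτ)] at key
  rw [key, pow_add]; ring

section hrec
open PowerSeries
lemma chi_rec (m r E : ℂ) (N : ℕ) :
    ((N + 1).factorial : ℂ) * chi m (fun a => r ^ a) E (N + 1) = 6 * r * (N.factorial * chi m (fun a => r ^ a) E N)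
      + (if N = 0 then 0 else -6 * m * E * N * ((N - 1).factorial * chi m (fun a => r ^ a) E (N - 1))) := by
  let U : ℂ⟦X⟧ := PowerSeries.mk fun a => 6 ^ a / (a.factorial : ℂ) * r ^ a
  let V : ℂ⟦X⟧ := PowerSeries.mk fun b => eC (-3 * m * E) b
  have hc : ∀ N, chi m (fun a => r ^ a) E N = coeff N (U * V) := by
    intro N
    rw [coeff_mul]
    simp only [chi, U, V, coeff_mk]
  have hU : d⁄dX ℂ U = C (6 * r) * U := by
    ext a
    simp only [U, coeff_derivative, coeff_mk, coeff_C_mul, Nat.factorial_succ]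
    have : ((a : ℂ) + 1) ≠ 0 := by exact_mod_cast Nat.succ_ne_zero a
    push_cast
    field_simp
    ring
  have hV : d⁄dX ℂ V = C (-6 * m * E) * (X * V) := by
    ext a
    rcases a with _ | a
    · simp [V, eC, coeff_derivative]
    · simp only [V, coeff_derivative, coeff_mk, coeff_C_mul, coeff_succ_X_mul]
      by_cases he : Even a
      · have he2 : Even (a + 1 + 1) := by rw [add_assoc]; exact he.add (by decide)
        obtain ⟨b, hb⟩ := he
        have e1 : (a + 1 + 1) / 2 = b + 1 := by omega
        have e2 : a / 2 = b := by omega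
        simp only [eC, he2, show Even a from ⟨b, hb⟩, if_true, e1, e2, Nat.factorial_succ]
        have : ((b : ℂ) + 1) ≠ 0 := by exact_mod_cast Nat.succ_ne_zero b
        subst hb
        push_cast
        field_simp
        ring
      · have he2 : ¬ Even (a + 1 + 1) := by rw [Nat.even_iff] at *; omega
        simp [eC, he, he2]
  have hd : d⁄dX ℂ (U * V) = C (6 * r) * (U * V) + C (-6 * m * E) * (X * (U * V)) := by
    rw [Derivation.leibniz, hU, hV]
    simp only [smul_eq_mul]; ring
  have := congrArg (coeff N) hd
  rw [coeff_derivative, map_add, coeff_C_mul, coeff_C_mul] at this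
  rw [hc, hc, hc, Nat.factorial_succ]
  push_cast
  rcases N with _ | N
  · simp at this ⊢
    linear_combination this
  · rw [coeff_succ_X_mul] at this
    simp only [Nat.succ_ne_zero, if_false, Nat.add_sub_cancel, Nat.factorial_succ] at this ⊢
    push_cast at this ⊢
    linear_combination ((N:ℂ) + 1) * (N.factorial : ℂ) * this
end hrec
end partE1

section partE2
/-- A rapidly convergent family. -/
def Fam (c : ℤ × ℤ → ℂ) (α : ℤ × ℤ → ℝ) (ρ : ℤ × ℤ → ℤ) : Prop :=
  ∀ y : ℝ, 0 < y → ∀ R : ℝ, 0 ≤ R →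
    Summable fun i => ‖c i‖ * Real.exp (-2 * Real.pi * (α i * y)) * Real.exp (R * |(ρ i : ℝ)|)

noncomputable def Mo (c : ℤ × ℤ → ℂ) (α : ℤ × ℤ → ℝ) (ρ : ℤ × ℤ → ℤ) (τ : ℂ) (a : ℕ) : ℂ :=
  ∑' i, c i * (ρ i : ℂ) ^ a * ee (α i * τ)

noncomputable def Ph (c : ℤ × ℤ → ℂ) (α : ℤ × ℤ → ℝ) (ρ : ℤ × ℤ → ℤ) (τ : ℂ) (w : ℂ) : ℂ :=
  ∑' i, c i * ee (α i * τ) * Complex.exp (ρ i * w)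

lemma norm_ee_real (x : ℝ) (τ : ℂ) : ‖ee (x * τ)‖ = Real.exp (-2 * Real.pi * (x * τ.im)) := by
  rw [norm_ee]; simp

lemma pow_le_fact_exp (x : ℝ) (hx : 0 ≤ x) (a : ℕ) : x ^ a ≤ a.factorial * Real.exp x := by
  have := Real.pow_div_factorial_le_exp x hx a
  rw [div_le_iff₀ (by positivity)] at this
  linarith

variable {c : ℤ × ℤ → ℂ} {α : ℤ × ℤ → ℝ} {ρ : ℤ × ℤ → ℤ}

lemma Fam.norm_le (a : ℕ) (τ : ℂ) (i : ℤ × ℤ) : ‖c i * (ρ i : ℂ) ^ a * ee (α i * τ)‖ ≤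
    a.factorial * (‖c i‖ * Real.exp (-2 * Real.pi * (α i * τ.im)) * Real.exp (1 * |(ρ i : ℝ)|)) := by
  rw [norm_mul, norm_mul, norm_ee_real, norm_pow, Complex.norm_intCast, one_mul]
  have := pow_le_fact_exp |(ρ i : ℝ)| (abs_nonneg _) a
  calc _ ≤ ‖c i‖ * (a.factorial * Real.exp |(ρ i : ℝ)|) * Real.exp (-2 * Real.pi * (α i * τ.im)) := by
        gcongr
    _ = _ := by ring

lemma Fam.summable (h : Fam c α ρ) (a : ℕ) (τ : ℂ) (hτ : 0 < τ.im) :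
    Summable fun i => ‖c i * (ρ i : ℂ) ^ a * ee (α i * τ)‖ :=
  Summable.of_nonneg_of_le (fun _ => norm_nonneg _) (fun i => Fam.norm_le a τ i)
    ((h τ.im hτ 1 zero_le_one).mul_left _)

lemma Fam.hasSum_Mo (h : Fam c α ρ) (τ : ℂ) (hτ : 0 < τ.im) (w : ℂ) :
    HasSum (fun a => Mo c α ρ τ a * w ^ a / (a.factorial : ℂ)) (Ph c α ρ τ w) := by
  let f : (ℤ × ℤ) × ℕ → ℂ := fun p => c p.1 * ee (α p.1 * τ) * ((ρ p.1 * w) ^ p.2 / (p.2.factorial : ℂ))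
  have hrow : ∀ i, HasSum (fun a => f (i, a)) (c i * ee (α i * τ) * Complex.exp (ρ i * w)) := by
    intro i
    have : HasSum (fun a : ℕ => ((ρ i : ℂ) * w) ^ a / (a.factorial : ℂ)) (Complex.exp (ρ i * w)) := by
      rw [Complex.exp_eq_exp_ℂ]; exact NormedSpace.expSeries_div_hasSum_exp _
    exact hs_congr (this.mul_left (c i * ee (α i * τ))) (fun a => by simp only [f]) rfl
  have hrown : ∀ i, HasSum (fun a => ‖f (i, a)‖) (‖c i‖ * Real.exp (-2 * Real.pi * (α i * τ.im)) * Real.exp (‖w‖ * |(ρ i : ℝ)|)) := by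
    intro i
    have := NormedSpace.expSeries_div_hasSum_exp (‖w‖ * |(ρ i : ℝ)|)
    rw [← Real.exp_eq_exp_ℝ] at this
    have := this.mul_left (‖c i‖ * Real.exp (-2 * Real.pi * (α i * τ.im)))
    refine (congrArg (fun g => HasSum g _) (funext fun a => ?_)).mp this
    symm
    simp only [f, norm_mul, norm_ee_real, norm_div, norm_pow, Complex.norm_intCast, Complex.norm_natCast]
    rw [mul_comm |(ρ i : ℝ)|]
  have hs : Summable f := by
    apply Summable.of_norm
    rw [summable_prod_of_nonneg (fun _ => norm_nonneg _)]
    refine ⟨fun i => (hrown i).summable, ?_⟩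
    have := h τ.im hτ ‖w‖ (norm_nonneg _)
    refine this.congr fun i => ?_
    exact (hrown i).tsum_eq.symm
  have h1 : ∑' p, f p = Ph c α ρ τ w := by
    rw [hs.tsum_prod' (fun i => (hrow i).summable)]
    exact tsum_congr fun i => (hrow i).tsum_eq
  have hs2 : HasSum (fun p : ℕ × (ℤ × ℤ) => f p.swap) (Ph c α ρ τ w) := by
    rw [← h1]
    exact (Equiv.prodComm ℕ (ℤ × ℤ)).hasSum_iff.2 hs.hasSum
  refine hs2.prod_fiberwise fun a => ?_
  have := ((h.summable a τ hτ).of_norm.hasSum.mul_right (w ^ a / (a.factorial : ℂ)))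
  refine hs_congr this ?_ (by rw [Mo]; ring)
  intro i
  simp only [f, Prod.swap]
  ring

lemma Fam.diff (h : Fam c α ρ) (hα : ∀ i, c i ≠ 0 → 0 ≤ α i) (a : ℕ) :
    DifferentiableOn ℂ (fun τ => Mo c α ρ τ a) HH := by
  intro τ hτ
  have hτ' : 0 < τ.im := hτ
  have key : DifferentiableOn ℂ (fun τ => Mo c α ρ τ a) {z : ℂ | τ.im / 2 < z.im} := by
    refine differentiableOn_tsum_of_summable_norm (u := fun i =>
      a.factorial * (‖c i‖ * Real.exp (-2 * Real.pi * (α i * (τ.im / 2))) * Real.exp (1 * |(ρ i : ℝ)|))) ?_ ?_ ?_ ?_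
    · exact (h (τ.im / 2) (by linarith) 1 zero_le_one).mul_left _
    · intro i
      exact ((differentiable_ee.comp (differentiable_id.const_mul _)).const_mul _).differentiableOn
    · exact isOpen_lt continuous_const Complex.continuous_im
    · intro i z hz
      refine (Fam.norm_le a z i).trans ?_
      by_cases hc : c i = 0
      · simp [hc]
      have := hα i hc
      have hz' : τ.im / 2 < z.im := hz
      gcongr _ * (_ * Real.exp ?_ * _)
      have := Real.pi_pos
      have := mul_le_mul_of_nonneg_left hz'.le (hα i hc)
      nlinarith
  refine (key.differentiableAt ?_).differentiableWithinAt
  exact (isOpen_lt continuous_const Complex.continuous_im).mem_nhds (by simp only [Set.mem_ofPred_eq]; linarith)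

lemma Fam.exp_le (s : ℝ) (hα : ∀ i, c i ≠ 0 → s ≤ α i) (y : ℝ) (hy : 1 ≤ y) (i : ℤ × ℤ) :
    ‖c i‖ * Real.exp (-2 * Real.pi * (α i * y)) * Real.exp (1 * |(ρ i : ℝ)|) ≤
    Real.exp (-2 * Real.pi * (s * y)) * (Real.exp (2 * Real.pi * s) * (‖c i‖ * Real.exp (-2 * Real.pi * (α i * 1)) * Real.exp (1 * |(ρ i : ℝ)|))) := by
  by_cases hc : c i = 0
  · simp [hc]
  have h1 := hα i hc
  have : Real.exp (-2 * Real.pi * (α i * y)) ≤ Real.exp (-2 * Real.pi * (s * y)) * (Real.exp (2 * Real.pi * s) * Real.exp (-2 * Real.pi * (α i * 1))) := by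
    rw [← Real.exp_add, ← Real.exp_add, Real.exp_le_exp]
    have := Real.pi_pos
    have : 0 ≤ Real.pi * ((α i - s) * (y - 1)) := mul_nonneg this.le (mul_nonneg (by linarith) (by linarith))
    nlinarith
  calc _ ≤ ‖c i‖ * (Real.exp (-2 * Real.pi * (s * y)) * (Real.exp (2 * Real.pi * s) * Real.exp (-2 * Real.pi * (α i * 1)))) * Real.exp (1 * |(ρ i : ℝ)|) := by gcongr
    _ = _ := by ring

lemma Fam.bound (h : Fam c α ρ) (s : ℝ) (hα : ∀ i, c i ≠ 0 → s ≤ α i) (a : ℕ) :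
    ∃ K : ℝ, 0 ≤ K ∧ ∀ τ : ℂ, 1 ≤ τ.im → ‖Mo c α ρ τ a‖ ≤ K * Real.exp (-2 * Real.pi * (s * τ.im)) := by
  have hs := (h 1 one_pos 1 zero_le_one).mul_left (a.factorial * Real.exp (2 * Real.pi * s))
  refine ⟨∑' i, a.factorial * Real.exp (2 * Real.pi * s) * (‖c i‖ * Real.exp (-2 * Real.pi * (α i * 1)) * Real.exp (1 * |(ρ i : ℝ)|)), tsum_nonneg (fun i => by positivity) , fun τ hτ => ?_⟩
  · rw [← tsum_mul_right]
    refine tsum_of_norm_bounded (hs.mul_right _).hasSum fun i => ?_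
    refine (Fam.norm_le a τ i).trans ?_
    calc _ ≤ (a.factorial : ℝ) * _ := mul_le_mul_of_nonneg_left (Fam.exp_le s hα τ.im hτ i) (by positivity)
      _ = _ := by ring

lemma Fam.lim (h : Fam c α ρ) (s : ℝ) (hα : ∀ i, c i ≠ 0 → s ≤ α i) (a : ℕ) :
    Tendsto (fun t : ℝ => Complex.exp (2 * Real.pi * s * t) * Mo c α ρ (t * Complex.I) a) atTop
      (𝓝 (∑' i, if α i = s then c i * (ρ i : ℂ) ^ a else 0)) := by
  have hs := (h 1 one_pos 1 zero_le_one).mul_left (a.factorial * Real.exp (2 * Real.pi * s))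
  simp only [Mo, ← tsum_mul_left]
  refine tendsto_tsum_of_dominated_convergence hs ?_ ?_
  · intro i
    by_cases hc : c i = 0
    · simp [hc]
    have e : ∀ t : ℝ, Complex.exp (2 * Real.pi * s * t) * (c i * (ρ i : ℂ) ^ a * ee (α i * (t * Complex.I)))
        = (Real.exp (-(2 * Real.pi * (α i - s) * t)) : ℂ) * (c i * (ρ i : ℂ) ^ a) := by
      intro t
      rw [ee, mul_comm, mul_assoc, ← Complex.exp_add, mul_comm]
      congr 1
      rw [Complex.ofReal_exp]
      congr 1
      push_cast
      linear_combination (2 * Real.pi * α i * t) * Complex.I_sq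
    simp only [e]
    by_cases ha : α i = s
    · simp [ha]
    · have h1 : 0 < α i - s := by
        have := lt_of_le_of_ne (hα i hc) (Ne.symm ha); linarith
      simp only [ha, if_false]
      have h2 : Tendsto (fun t : ℝ => Real.exp (-(2 * Real.pi * (α i - s) * t))) atTop (𝓝 0) := by
        apply Real.tendsto_exp_neg_atTop_nhds_zero.comp
        exact Tendsto.const_mul_atTop (by have := Real.pi_pos; positivity) tendsto_id
      have h3 : Tendsto (fun t : ℝ => (Real.exp (-(2 * Real.pi * (α i - s) * t)) : ℂ)) atTop (𝓝 0) := by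
        have := (Complex.continuous_ofReal.tendsto 0).comp h2
        simp only [Complex.ofReal_zero] at this
        exact this
      simpa using h3.mul_const (c i * (ρ i : ℂ) ^ a)
  · filter_upwards [eventually_ge_atTop (1:ℝ)] with t ht i
    rw [norm_mul]
    have h1 := (Fam.norm_le (c := c) (α := α) (ρ := ρ) a (t * Complex.I) i).trans
      (mul_le_mul_of_nonneg_left (Fam.exp_le s hα (t * Complex.I : ℂ).im (by simpa using ht) i) (by positivity))
    have h2 : ‖Complex.exp (2 * Real.pi * s * t)‖ = Real.exp (2 * Real.pi * (s * t)) := by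
      rw [Complex.norm_exp]; congr 1; 
      have : (2 * Real.pi * s * t : ℂ) = ((2 * Real.pi * (s * t) : ℝ) : ℂ) := by push_cast; ring
      rw [this, Complex.ofReal_re]
    have h3 : (t * Complex.I : ℂ).im = t := by simp
    rw [h3] at h1
    rw [h2]
    have h4 : Real.exp (2 * Real.pi * (s * t)) * Real.exp (-2 * Real.pi * (s * t)) = 1 := by
      rw [← Real.exp_add]; simp
    calc _ ≤ Real.exp (2 * Real.pi * (s * t)) * _ := mul_le_mul_of_nonneg_left h1 (by positivity)
      _ = (Real.exp (2 * Real.pi * (s * t)) * Real.exp (-2 * Real.pi * (s * t))) * (a.factorial * Real.exp (2 * Real.pi * s) * (‖c i‖ * Real.exp (-2 * Real.pi * (α i * 1)) * Real.exp (1 * |(ρ i : ℝ)|))) := by ring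
      _ = _ := by rw [h4, one_mul]
end partE2

section partE3
noncomputable def XX (c : ℤ × ℤ → ℂ) (α : ℤ × ℤ → ℝ) (ρ : ℤ × ℤ → ℤ) (m : ℂ) (N : ℕ) (τ : ℂ) : ℂ :=
  chi m (Mo c α ρ τ) (Et τ) N

lemma eC_diff (x : ℂ) (b : ℕ) (f : ℂ → ℂ) (hf : DifferentiableOn ℂ f HH) :
    DifferentiableOn ℂ (fun τ => eC (x * f τ) b) HH := by
  unfold eC
  split_ifs
  · exact ((hf.const_mul x).pow _).div_const _
  · exact differentiableOn_const _

lemma eC_bound (x M : ℝ) (b : ℕ) : ∃ K : ℝ, 0 ≤ K ∧ ∀ z e : ℂ, ‖z‖ ≤ x → ‖e‖ ≤ M → ‖eC (z * e) b‖ ≤ K := by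
  by_cases hb : Even b
  · refine ⟨|x * M| ^ (b / 2), by positivity, fun z e hz he => ?_⟩
    simp only [eC, hb, if_true, norm_div, norm_pow, Complex.norm_natCast]
    have h1 : ‖z * e‖ ≤ |x * M| := by
      rw [norm_mul]
      refine le_trans ?_ (le_abs_self _)
      exact mul_le_mul hz he (norm_nonneg _) ((norm_nonneg _).trans hz)
    have h2 : (1:ℝ) ≤ (b / 2).factorial := by exact_mod_cast Nat.succ_le_of_lt (Nat.factorial_pos _)
    exact (div_le_self (by positivity) h2).trans (pow_le_pow_left₀ (norm_nonneg _) h1 _)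
  · exact ⟨0, le_rfl, fun z e _ _ => by simp [eC, hb]⟩

lemma eC_cont (b : ℕ) : Continuous (fun x => eC x b) := by
  unfold eC
  split_ifs
  · fun_prop
  · exact continuous_const

variable {c : ℤ × ℤ → ℂ} {α : ℤ × ℤ → ℝ} {ρ : ℤ × ℤ → ℤ}

lemma Fam.XX_diff (h : Fam c α ρ) (hα : ∀ i, c i ≠ 0 → 0 ≤ α i) (m : ℂ) (N : ℕ) :
    DifferentiableOn ℂ (XX c α ρ m N) HH := by
  unfold XX chi
  refine DifferentiableOn.fun_sum fun p _ => ?_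
  exact ((h.diff hα p.1).const_mul _).mul (eC_diff _ _ _ Et_diff)

lemma Fam.XX_bound (h : Fam c α ρ) (s : ℝ) (hα : ∀ i, c i ≠ 0 → s ≤ α i) (m : ℂ) (N : ℕ) :
    ∃ K Y : ℝ, 0 ≤ K ∧ ∀ τ : ℂ, 0 < τ.im → Y ≤ τ.im → ‖XX c α ρ m N τ‖ ≤ K * Real.exp (-2 * Real.pi * (s * τ.im)) := by
  obtain ⟨M, A, hM⟩ := Et_bdd
  choose K hK0 hK using fun a => h.bound s hα a
  choose L hL0 hL using fun b => eC_bound ‖-3 * m‖ M b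
  refine ⟨∑ p ∈ Finset.HasAntidiagonal.antidiagonal N, ‖(6 ^ p.1 / (p.1.factorial : ℂ) : ℂ)‖ * K p.1 * L p.2,
    max 1 A, Finset.sum_nonneg fun p _ => by have := hK0 p.1; have := hL0 p.2; positivity, fun τ hτ hy => ?_⟩
  rw [XX, chi, Finset.sum_mul]
  refine (norm_sum_le _ _).trans (Finset.sum_le_sum fun p _ => ?_)
  rw [norm_mul, norm_mul]
  have h1 := hK p.1 τ ((le_max_left _ _).trans hy)
  have h2 := hL p.2 (-3 * m) (Et τ) le_rfl (hM τ hτ ((le_max_right _ _).trans hy))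
  have := hK0 p.1
  calc _ ≤ ‖(6 ^ p.1 / (p.1.factorial : ℂ) : ℂ)‖ * (K p.1 * Real.exp (-2 * Real.pi * (s * τ.im))) * L p.2 := by gcongr
    _ = _ := by ring

lemma Fam.XX_lim (h : Fam c α ρ) (s : ℝ) (hα : ∀ i, c i ≠ 0 → s ≤ α i) (m : ℂ) (N : ℕ) :
    Tendsto (fun t : ℝ => Complex.exp (2 * Real.pi * s * t) * XX c α ρ m N (t * Complex.I)) atTop
      (𝓝 (chi m (fun a => ∑' i, if α i = s then c i * (ρ i : ℂ) ^ a else 0) 1 N)) := by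
  unfold XX chi
  simp only [Finset.mul_sum]
  refine tendsto_finsetSum _ fun p _ => ?_
  have h1 := (h.lim s hα p.1).const_mul (6 ^ p.1 / (p.1.factorial : ℂ))
  have h2 := ((eC_cont p.2).tendsto (-3 * m * 1)).comp (Et_lim.const_mul (-3 * m))
  refine (h1.mul h2).congr fun t => ?_
  simp only [Function.comp]; ring

lemma ne_zero_of_HH {τ : ℂ} (hτ : τ ∈ HH) : τ ≠ 0 := fun hh => by rw [hh] at hτ; simp [HH] at hτ

lemma XX_trans {c1 c2 : ℤ × ℤ → ℂ} {α1 α2 : ℤ × ℤ → ℝ} {ρ1 ρ2 : ℤ × ℤ → ℤ} (h1 : Fam c1 α1 ρ1)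
    (h2 : Fam c2 α2 ρ2) (m : ℂ) (k N : ℕ) (ε : ℂ) (τ : ℂ) (hτ : τ ∈ HH)
    (h : ∀ z, Ph c1 α1 ρ1 (-1 / τ) (2 * Real.pi * Complex.I * (z / τ)) =
      ε * τ ^ k * ee (m * z ^ 2 / τ) * Ph c2 α2 ρ2 τ (2 * Real.pi * Complex.I * z)) :
    XX c1 α1 ρ1 m N (-1 / τ) = ε * τ ^ (k + N) * XX c2 α2 ρ2 m N τ :=
  chi_trans m k ε _ _ _ _ τ (ne_zero_of_HH hτ) _ _ (h1.hasSum_Mo _ (neg_inv_mem hτ)) (h2.hasSum_Mo _ hτ)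
    (Et_S τ hτ) h N

lemma XX_T (c c' : ℤ × ℤ → ℂ) (α : ℤ × ℤ → ℝ) (ρ : ℤ × ℤ → ℤ) (ε : ℂ) (h : ∀ i, c i * ee (α i) = ε * c' i) (m : ℂ) (N : ℕ) (τ : ℂ)
    (hτ : τ ∈ HH) : XX c α ρ m N (τ + 1) = ε * XX c' α ρ m N τ := by
  rw [XX, XX, Et_T τ hτ, chi, chi, Finset.mul_sum]
  refine Finset.sum_congr rfl fun p _ => ?_
  have : Mo c α ρ (τ + 1) p.1 = ε * Mo c' α ρ τ p.1 := by
    rw [Mo, Mo, ← tsum_mul_left]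
    refine tsum_congr fun i => ?_
    rw [mul_add, ee_add, mul_one]
    linear_combination (ρ i : ℂ) ^ p.1 * ee (α i * τ) * h i
  rw [this]; ring

noncomputable def psi (c : ℤ × ℤ → ℂ) (τ z : ℂ) : ℂ := ∑' q : ℤ × ℤ, c q * ee (q.1 * τ + q.2 * z)

lemma ee_mul_exp (r : ℤ) (z : ℂ) : Complex.exp (r * (2 * Real.pi * Complex.I * z)) = ee (r * z) := by
  rw [ee]; congr 1; ring

/-- Jacobi-type functional equation. -/
def JacS (c : ℤ × ℤ → ℂ) (k m : ℕ) : Prop :=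
  ∀ τ ∈ HH, ∀ z, psi c (-1 / τ) (z / τ) = τ ^ k * ee (m * z ^ 2 / τ) * psi c τ z

def Fam0 (c : ℤ × ℤ → ℂ) : Prop := Fam c (fun i => i.1) (fun i => i.2)

lemma Ph0 (c : ℤ × ℤ → ℂ) (τ z : ℂ) : Ph c (fun i => i.1) (fun i => i.2) τ (2 * Real.pi * Complex.I * z) = psi c τ z := by
  refine tsum_congr fun i => ?_
  rw [ee_mul_exp, ee_add]; push_cast; ring

lemma chi_zero_of_XX (h : Fam c α ρ) (s : ℝ) (hα : ∀ i, c i ≠ 0 → s ≤ α i) (m : ℂ) (N : ℕ)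
    (hX : ∀ τ ∈ HH, XX c α ρ m N τ = 0) : chi m (fun a => ∑' i, if α i = s then c i * (ρ i : ℂ) ^ a else 0) 1 N = 0 := by
  refine tendsto_nhds_unique (h.XX_lim s hα m N) (tendsto_const_nhds.congr' ?_)
  filter_upwards [eventually_gt_atTop (0:ℝ)] with t ht
  rw [hX _ (by simpa [HH] using ht), mul_zero]

lemma exp_pow_nat (s : ℕ) (y : ℝ) : Real.exp (-2 * Real.pi * y) ^ s = Real.exp (-2 * Real.pi * ((s:ℝ) * y)) := by
  rw [← Real.exp_nat_mul]; congr 1; ring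

lemma lemmaE (h : Fam0 c) (k m n0 N : ℕ) (hS : JacS c k m) (hn : ∀ i, c i ≠ 0 → (n0 : ℤ) ≤ i.1)
    (hw : k + N < 12 * n0 ∨ k + N = 12 * n0 + 2) :
    chi m (fun a => ∑' i : ℤ × ℤ, if (i.1 : ℝ) = n0 then c i * (i.2 : ℂ) ^ a else 0) 1 N = 0 := by
  have hn' : ∀ i : ℤ × ℤ, c i ≠ 0 → (n0 : ℝ) ≤ (i.1 : ℝ) := fun i hi => by exact_mod_cast hn i hi
  refine chi_zero_of_XX h n0 hn' m N ?_
  refine modS _ (h.XX_diff (fun i hi => le_trans (by positivity) (hn' i hi)) m N) (k + N) n0 ?_ ?_ ?_ hw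
  · intro τ hτ
    rw [XX_T c c _ _ 1 (fun i => ?_) m N τ hτ, one_mul]
    have := ee_int i.1
    rw [one_mul]
    push_cast
    rw [this, mul_one]
  · intro τ hτ
    rw [XX_trans h h m k N 1 τ hτ, one_mul]
    intro z
    rw [Ph0, Ph0, hS τ hτ z, one_mul]
  · obtain ⟨K, Y, _, hK⟩ := h.XX_bound n0 hn' m N
    refine ⟨K, Y, fun τ h1 h2 => ?_⟩
    rw [exp_pow_nat]
    exact hK τ h1 h2
end partE3

section partE4
section M1
variable {c : ℤ × ℤ → ℂ}

noncomputable def cs (c : ℤ × ℤ → ℂ) (i : ℤ × ℤ) : ℂ := ee (i.2 / 2) * c i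
noncomputable def al (m : ℕ) (i : ℤ × ℤ) : ℝ := i.1 + i.2 / 2 + m / 4
def rh (m : ℕ) (i : ℤ × ℤ) : ℤ := i.2 + m

lemma norm_cs (i : ℤ × ℤ) : ‖cs c i‖ = ‖c i‖ := by
  rw [cs, norm_mul, norm_ee]
  have : ((i.2 : ℂ) / 2).im = 0 := by
    have : ((i.2 : ℂ) / 2) = ((i.2 / 2 : ℝ) : ℂ) := by push_cast; rfl
    rw [this, Complex.ofReal_im]
  simp [this]

lemma cs_ne {i : ℤ × ℤ} (h : cs c i ≠ 0) : c i ≠ 0 := fun h0 => h (by simp [cs, h0])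

lemma Fam.cs {α : ℤ × ℤ → ℝ} {ρ : ℤ × ℤ → ℤ} (h : Fam c α ρ) : Fam (cs c) α ρ := by
  intro y hy R hR
  simpa only [norm_cs] using h y hy R hR

lemma Fam0.al (h : Fam0 c) (m : ℕ) : Fam c (al m) (rh m) := by
  intro y hy R hR
  have hpi := Real.pi_pos
  have := (h y hy (R + Real.pi * y) (by positivity)).mul_left (Real.exp (R * m))
  refine Summable.of_nonneg_of_le (fun _ => by positivity) (fun i => ?_) this
  simp only [_root_.al, rh]
  have e : Real.exp (-2 * Real.pi * ((i.1 + i.2 / 2 + m / 4 : ℝ) * y)) * Real.exp (R * |((i.2 + m : ℤ) : ℝ)|)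
      ≤ Real.exp (R * m) * (Real.exp (-2 * Real.pi * (i.1 * y)) * Real.exp ((R + Real.pi * y) * |(i.2 : ℝ)|)) := by
    rw [← Real.exp_add, ← Real.exp_add, ← Real.exp_add, Real.exp_le_exp]
    push_cast
    have h1 : |(i.2 + m : ℝ)| ≤ |(i.2 : ℝ)| + m := by
      refine (abs_add_le _ _).trans ?_
      rw [Nat.abs_cast]
    have h2 := mul_le_mul_of_nonneg_left h1 hR
    have h3 := mul_le_mul_of_nonneg_left (neg_abs_le (i.2 : ℝ)) (mul_pos hpi hy).le
    have h4 : 0 ≤ Real.pi * y * m := by positivity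
    nlinarith
  calc _ = ‖c i‖ * (Real.exp (-2 * Real.pi * ((i.1 + i.2 / 2 + m / 4 : ℝ) * y)) * Real.exp (R * |((i.2 + m : ℤ) : ℝ)|)) := by ring
    _ ≤ ‖c i‖ * (Real.exp (R * m) * (Real.exp (-2 * Real.pi * (i.1 * y)) * Real.exp ((R + Real.pi * y) * |(i.2 : ℝ)|))) := by gcongr
    _ = _ := by ring

lemma Ph1 (τ z : ℂ) : Ph (cs c) (fun i => i.1) (fun i => i.2) τ (2 * Real.pi * Complex.I * z) = psi c τ (z + 1 / 2) := by
  refine tsum_congr fun i => ?_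
  rw [ee_mul_exp, cs, show (i.1 * τ + i.2 * (z + 1 / 2) : ℂ) = i.2 / 2 + (i.1 * τ + i.2 * z) by ring, ee_add, ee_add]
  push_cast; ring

lemma Ph2 (m : ℕ) (τ z : ℂ) : Ph c (al m) (rh m) τ (2 * Real.pi * Complex.I * z) = ee (m * τ / 4 + m * z) * psi c τ (z + τ / 2) := by
  rw [psi, ← tsum_mul_left]
  refine tsum_congr fun i => ?_
  rw [ee_mul_exp, mul_assoc, ← ee_add, mul_left_comm, ← ee_add]
  congr 2
  simp only [al, rh]; push_cast; ring

lemma Ph3 (m : ℕ) (τ z : ℂ) : Ph (cs c) (al m) (rh m) τ (2 * Real.pi * Complex.I * z) = ee (m * τ / 4 + m * z) * psi c τ (z + τ / 2 + 1 / 2) := by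
  rw [psi, ← tsum_mul_left]
  refine tsum_congr fun i => ?_
  rw [ee_mul_exp, cs, mul_comm (ee _) (c i), mul_assoc, mul_assoc, ← ee_add, ← ee_add, mul_left_comm, ← ee_add]
  congr 2
  simp only [al, rh]; push_cast; ring

lemma psi_per (τ z : ℂ) : psi c τ (z + 1) = psi c τ z := by
  refine tsum_congr fun i => ?_
  rw [show (i.1 * τ + i.2 * (z + 1) : ℂ) = i.1 * τ + i.2 * z + i.2 by ring, ee_add_int]

lemma neg_inv_inv {τ : ℂ} (h : τ ≠ 0) : -1 / (-1 / τ) = τ := by field_simp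

lemma lemmaM1 (h : Fam0 c) (k m n0 N e : ℕ) (hS : JacS c k m) (hn : ∀ i, c i ≠ 0 → (n0 : ℤ) ≤ i.1)
    (he : ∀ i, c i ≠ 0 → (e : ℤ) ≤ 4 * i.1 + 2 * i.2 + m) (hev : Even (k + N))
    (hw : k + N < 4 * n0 + 2 * e) :
    chi m (fun a => ∑' i : ℤ × ℤ, if (i.1 : ℝ) = n0 then cs c i * (i.2 : ℂ) ^ a else 0) 1 N = 0 := by
  have hn' : ∀ i : ℤ × ℤ, cs c i ≠ 0 → (n0 : ℝ) ≤ (i.1 : ℝ) := fun i hi => by exact_mod_cast hn i (cs_ne hi)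
  have he' : ∀ i : ℤ × ℤ, c i ≠ 0 → (e / 4 : ℝ) ≤ al m i := fun i hi => by
    have : ((e : ℤ) : ℝ) ≤ ((4 * i.1 + 2 * i.2 + m : ℤ) : ℝ) := by exact_mod_cast he i hi
    push_cast at this
    simp only [al]; linarith
  have he3 : ∀ i : ℤ × ℤ, cs c i ≠ 0 → (e / 4 : ℝ) ≤ al m i := fun i hi => he' i (cs_ne hi)
  have h1 : Fam (cs c) (fun i => i.1) (fun i => i.2) := Fam.cs h
  have h2 := h.al m
  have h3 := h2.cs
  refine chi_zero_of_XX h1 n0 hn' m N ?_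
  set X1 := XX (cs c) (fun i => i.1) (fun i => i.2) m N with hX1
  set X2 := XX c (al m) (rh m) m N with hX2
  set X3 := XX (cs c) (al m) (rh m) m N with hX3
  have S2 : ∀ τ ∈ HH, X2 (-1 / τ) = τ ^ (k + N) * X1 τ := by
    intro τ hτ
    have h0 := ne_zero_of_HH hτ
    rw [hX2, XX_trans h2 h1 m k N 1 τ hτ, one_mul]
    intro z
    rw [Ph2, Ph1, show z / τ + -1 / τ / 2 = (z - 1 / 2) / τ by ring, hS τ hτ, ← psi_per τ (z - 1 / 2),
      show z - 1 / 2 + 1 = z + 1 / 2 by ring]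
    have : ee (m * (-1 / τ) / 4 + m * (z / τ)) * ee (m * (z - 1 / 2) ^ 2 / τ) = ee (m * z ^ 2 / τ) := by
      rw [← ee_add]; congr 1; field_simp; ring
    rw [← this]; ring
  have S1 : ∀ τ ∈ HH, X1 (-1 / τ) = τ ^ (k + N) * X2 τ := by
    intro τ hτ
    have h0 := ne_zero_of_HH hτ
    have := S2 (-1 / τ) (neg_inv_mem hτ)
    rw [neg_inv_inv h0] at this
    rw [this, ← mul_assoc, ← mul_pow, mul_div_cancel₀ _ h0, hev.neg_one_pow, one_mul]
  have S3 : ∀ τ ∈ HH, X3 (-1 / τ) = ee (-m / 2) * τ ^ (k + N) * X3 τ := by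
    intro τ hτ
    have h0 := ne_zero_of_HH hτ
    rw [hX3, XX_trans h3 h3 m k N (ee (-m / 2)) τ hτ]
    intro z
    rw [Ph3, Ph3, show z / τ + -1 / τ / 2 + 1 / 2 = (z - 1 / 2 + τ / 2) / τ by field_simp; ring, hS τ hτ,
      ← psi_per τ (z - 1 / 2 + τ / 2), show z - 1 / 2 + τ / 2 + 1 = z + τ / 2 + 1 / 2 by ring]
    have : ee (m * (-1 / τ) / 4 + m * (z / τ)) * ee (m * (z - 1 / 2 + τ / 2) ^ 2 / τ) =
        ee (-m / 2) * ee (m * z ^ 2 / τ) * ee (m * τ / 4 + m * z) := by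
      rw [← ee_add, ← ee_add, ← ee_add]; congr 1; field_simp; ring
    linear_combination τ ^ k * psi c τ (z + τ / 2 + 1 / 2) * this
  have T1 : ∀ τ ∈ HH, X1 (τ + 1) = X1 τ := by
    intro τ hτ
    rw [hX1, XX_T (cs c) (cs c) _ _ 1 (fun i => ?_) m N τ hτ, one_mul]
    have := ee_int i.1
    rw [one_mul]; push_cast; rw [this, mul_one]
  have T2 : ∀ τ ∈ HH, X2 (τ + 1) = ee (m / 4) * X3 τ := by
    intro τ hτ
    refine XX_T c (cs c) _ _ _ (fun i => ?_) m N τ hτ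
    simp only [al, cs]; push_cast
    rw [show (i.1 + i.2 / 2 + m / 4 : ℂ) = i.2 / 2 + m / 4 + i.1 by ring, ee_add_int, ee_add]; ring
  have T3 : ∀ τ ∈ HH, X3 (τ + 1) = ee (m / 4) * X2 τ := by
    intro τ hτ
    refine XX_T (cs c) c _ _ _ (fun i => ?_) m N τ hτ
    simp only [al, cs]; push_cast
    rw [mul_comm (ee _) (c i), mul_assoc, ← ee_add, show (i.2 / 2 + (i.1 + i.2 / 2 + m / 4) : ℂ) = m / 4 + i.2 + i.1 by ring, ee_add_int, ee_add_int]; ring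
  have D1 := h1.XX_diff (fun i hi => le_trans (by positivity) (hn' i hi)) m N
  have D2 := h2.XX_diff (fun i hi => le_trans (by positivity) (he' i hi)) m N
  have D3 := h3.XX_diff (fun i hi => le_trans (by positivity) (he3 i hi)) m N
  have hprod : ∀ τ ∈ HH, (X1 τ * X2 τ * X3 τ) ^ 2 = 0 := by
    refine modS _ (((D1.mul D2).mul D3).pow 2) (6 * (k + N)) (2 * n0 + e) ?_ ?_ ?_ (Or.inl (by omega))
    · intro τ hτ
      rw [T1 τ hτ, T2 τ hτ, T3 τ hτ]
      have : ee (m / 4) ^ 4 = 1 := by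
        rw [ee_pow]
        have := ee_int m
        rw [← this]; congr 1; push_cast; ring
      linear_combination (X1 τ * X2 τ * X3 τ) ^ 2 * this
    · intro τ hτ
      rw [S1 τ hτ, S2 τ hτ, S3 τ hτ]
      have : ee (-m / 2) ^ 2 = 1 := by
        rw [ee_pow]
        have := ee_int (-m)
        rw [← this]; congr 1; push_cast; ring
      rw [show 6 * (k + N) = (k + N) * 6 by ring, pow_mul]
      linear_combination (τ ^ (k + N)) ^ 6 * (X1 τ * X2 τ * X3 τ) ^ 2 * this
    · obtain ⟨K1, Y1, hp1, hK1⟩ := h1.XX_bound n0 hn' m N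
      obtain ⟨K2, Y2, hp2, hK2⟩ := h2.XX_bound _ he' m N
      obtain ⟨K3, Y3, hp3, hK3⟩ := h3.XX_bound _ he3 m N
      refine ⟨(K1 * K2 * K3) ^ 2, max Y1 (max Y2 Y3), fun τ g1 g2 => ?_⟩
      have b1 := hK1 τ g1 ((le_max_left _ _).trans g2)
      have b2 := hK2 τ g1 ((le_max_left _ _).trans ((le_max_right _ _).trans g2))
      have b3 := hK3 τ g1 ((le_max_right _ _).trans ((le_max_right _ _).trans g2))
      rw [exp_pow_nat, norm_pow, norm_mul, norm_mul]
      have e1 : Real.exp (-2 * Real.pi * (((2 * n0 + e : ℕ) : ℝ) * τ.im)) = (Real.exp (-2 * Real.pi * (n0 * τ.im)) *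
          Real.exp (-2 * Real.pi * (e / 4 * τ.im)) * Real.exp (-2 * Real.pi * (e / 4 * τ.im))) ^ 2 := by
        rw [← Real.exp_add, ← Real.exp_add, ← Real.exp_nat_mul]; congr 1; push_cast; ring
      rw [e1, ← mul_pow]
      refine pow_le_pow_left₀ (by positivity) ?_ 2
      calc _ ≤ (K1 * Real.exp (-2 * Real.pi * (n0 * τ.im))) * (K2 * Real.exp (-2 * Real.pi * (e / 4 * τ.im))) *
            (K3 * Real.exp (-2 * Real.pi * (e / 4 * τ.im))) := by gcongr
        _ = _ := by ring
  have hopen : IsOpen HH := isOpen_lt continuous_const Complex.continuous_im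
  have hconn : IsPreconnected HH := (convex_halfSpace_im_gt 0).isPreconnected
  have A1 := D1.analyticOnNhd hopen
  have A2 := D2.analyticOnNhd hopen
  have A3 := D3.analyticOnNhd hopen
  have hz : ∀ τ ∈ HH, X1 τ • (X2 τ • X3 τ) = 0 := fun τ hτ => by
    have := pow_eq_zero_iff (n := 2) (by norm_num) |>.1 (hprod τ hτ)
    rw [smul_eq_mul, smul_eq_mul, ← mul_assoc]; exact this
  have f21 : (∀ τ ∈ HH, X2 τ = 0) → ∀ τ ∈ HH, X1 τ = 0 := by
    intro h τ hτ
    have := S2 τ hτ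
    rw [h _ (neg_inv_mem hτ)] at this
    exact (mul_eq_zero.1 this.symm).resolve_left (pow_ne_zero _ (ne_zero_of_HH hτ))
  have f32 : (∀ τ ∈ HH, X3 τ = 0) → ∀ τ ∈ HH, X2 τ = 0 := by
    intro h τ hτ
    have := T3 τ hτ
    rw [h _ (by simpa [HH] using hτ)] at this
    exact (mul_eq_zero.1 this.symm).resolve_left (ee_ne_zero _)
  rcases A1.eq_zero_or_eq_zero_of_smul_eq_zero (A2.smul A3) hz hconn with g | g
  · exact g
  · rcases A2.eq_zero_or_eq_zero_of_smul_eq_zero A3 g hconn with g | g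
    · exact f21 g
    · exact f21 (f32 g)
end M1
end partE4

section partG1
structure JData (c : ℤ × ℤ → ℂ) (k m : ℕ) : Prop where
  fam : Fam0 c
  S : JacS c k m
  supp : ∀ n r : ℤ, c (n, r) ≠ 0 → 1 ≤ n ∧ r * r < 4 * n * m
  par : ∀ n r : ℤ, c (n, -r) = (-1) ^ k * c (n, r)
  tr : ∀ n r : ℤ, c (n - r + m, r - 2 * m) = c (n, r)

section lead
variable {j : ℕ} {F : (Fin 2 → Fin 2 → ℂ) → (Fin (j + 1) → ℂ)} {a : ℤ → ℤ → ℤ → Fin (j + 1) → ℂ}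

def OrdGE (a : ℤ → ℤ → ℤ → Fin (j + 1) → ℂ) (m : ℤ) (i : ℕ) : Prop :=
  ∀ n r (l : Fin (j + 1)), j - (l : ℕ) < i → a n r m l = 0

lemma lead_data (hF : IsSiegelCuspForm j 2 Sp4Z (fun _ => 1) F) (ha : IsCoef F a) (hj : Even j) (m : ℕ)
    (i : ℕ) (l0 : Fin (j + 1)) (hi : i = j - l0) (ho : OrdGE a m i) :
    JData (fun q => a q.1 q.2 m l0) (2 + i) m where
  fam := by
    intro y hy R hR
    have hτ : 0 < ((y : ℂ) * Complex.I).im := by simpa using hy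
    have hpi := Real.pi_pos
    have h1 := ha.summable2 m l0 (y * Complex.I) ((R / (2 * Real.pi) : ℝ) * Complex.I) hτ
    have h2 := ha.summable2 m l0 (y * Complex.I) ((-(R / (2 * Real.pi)) : ℝ) * Complex.I) hτ
    refine Summable.of_nonneg_of_le (fun _ => by positivity) (fun q => ?_) (h1.add h2)
    have e : ∀ s : ℝ, ‖a q.1 q.2 m l0 * ee (q.1 * (y * Complex.I) + q.2 * ((s : ℝ) * Complex.I))‖ =
        ‖a q.1 q.2 m l0‖ * Real.exp (-2 * Real.pi * (q.1 * y)) * Real.exp (-2 * Real.pi * (q.2 * s)) := by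
      intro s
      rw [norm_mul, norm_ee, mul_assoc ‖a q.1 q.2 m l0‖, ← Real.exp_add]
      congr 2
      have : ((q.1 : ℂ) * (y * Complex.I) + q.2 * ((s : ℝ) * Complex.I)).im = q.1 * y + q.2 * s := by
        simp
      rw [this]; ring
    rw [e, e, ← mul_add]
    gcongr
    have e1 : -2 * Real.pi * (q.2 * (R / (2 * Real.pi))) = R * -q.2 := by field_simp
    have e2 : -2 * Real.pi * (q.2 * -(R / (2 * Real.pi))) = R * q.2 := by field_simp
    rw [e1, e2]
    rcases abs_cases (q.2 : ℝ) with h | h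
    · rw [h.1]; linarith [Real.exp_pos (R * -q.2)]
    · rw [h.1]; linarith [Real.exp_pos (R * q.2)]
  S := by
    intro τ hτ z
    have h := lead_vec (fun x y => ha.phi_S hF m τ z hτ x y) i l0 hi (by
      intro l hl
      simp only [phi]
      simp [ho _ _ l hl])
    simp only [phi] at h
    simp only [psi]
    rw [h, pow_add]
    push_cast
    ring
  supp := by
    intro n r h
    have h0 : a n r m ≠ 0 := fun hh => h (by simp [hh])
    have := ha.supp hF n r m h0
    exact ⟨by omega, this.2.2⟩
  par := by
    intro n r
    have h := ha.equiv hF 1 0 0 (-1) (by norm_num) n r m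
    have h2 := lead_vec (j := j) (τ := -1) (z := 0) (c := 1) (A := a n (-r) m) (B := a n r m) (fun x y => by
      have := h x y
      rw [show n * 1 * 1 + r * 1 * 0 + (m:ℤ) * 0 * 0 = n by ring,
        show 2 * n * 1 * 0 + r * (1 * -1 + 0 * 0) + 2 * (m:ℤ) * 0 * -1 = -r by ring,
        show n * 0 * 0 + r * 0 * -1 + (m:ℤ) * -1 * -1 = m by ring] at this
      rw [this, one_mul]
      simp only [hom]
      refine Finset.sum_congr rfl fun l _ => ?_
      push_cast
      have hl : (l : ℕ) ≤ j := Nat.lt_succ_iff.1 l.2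
      have e : (-1 : ℂ) ^ (l : ℕ) = (-1) ^ (j - (l : ℕ)) := by
        have h1 : Even (l : ℕ) ↔ Even (j - (l : ℕ)) := by
          rw [Nat.even_sub hl]; simp [hj]
        rcases Nat.even_or_odd (l : ℕ) with h2 | h2
        · rw [h2.neg_one_pow, (h1.1 h2).neg_one_pow]
        · have : Odd (j - (l : ℕ)) := by rw [← Nat.not_even_iff_odd, ← h1, Nat.not_even_iff_odd]; exact h2
          rw [h2.neg_one_pow, this.neg_one_pow]
      rw [show (1 * x + 0 * y : ℂ) = x by ring, show (0 * x + -1 * y : ℂ) = -1 * y by ring,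
        show (0 * x + y : ℂ) = y by ring, mul_pow, mul_pow, e]; ring) i l0 hi (fun l hl => ho _ _ l hl)
    simp only
    rw [h2, pow_add]; norm_num
  tr := by
    intro n r
    have h := ha.equiv hF 1 0 (-1) 1 (by norm_num) n r m
    have h2 := lead_vec (j := j) (τ := 1) (z := -1) (c := 1) (A := a (n - r + m) (r - 2 * m) m) (B := a n r m) (fun x y => by
      have := h x y
      rw [show n * 1 * 1 + r * 1 * -1 + (m:ℤ) * -1 * -1 = n - r + m by ring,
        show 2 * n * 1 * 0 + r * (1 * 1 + 0 * -1) + 2 * (m:ℤ) * -1 * 1 = r - 2 * m by ring,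
        show n * 0 * 0 + r * 0 * 1 + (m:ℤ) * 1 * 1 = m by ring] at this
      rw [this, one_mul]; congr 1 <;> (push_cast; ring)) i l0 hi (fun l hl => ho _ _ l hl)
    simp only
    rw [h2]; simp
end lead
end partG1

section partG2
def hp (m r : ℤ) : ℕ → ℤ × ℤ
  | 0 => (1, 6 * r)
  | N + 1 => ((hp m r N).2, 6 * r * (hp m r N).2 - 6 * m * (N + 1) * (hp m r N).1)

def Hh (m r : ℤ) (N : ℕ) : ℤ := (hp m r N).1

lemma hp_snd (m r : ℤ) (N : ℕ) : (hp m r N).2 = Hh m r (N + 1) := rfl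

lemma Hh_rec (m r : ℤ) (N : ℕ) : Hh m r (N + 2) = 6 * r * Hh m r (N + 1) - 6 * m * (N + 1) * Hh m r N := rfl

lemma Hh_chi (m r : ℤ) (N : ℕ) : (Hh m r N : ℂ) = N.factorial * chi m (fun a => (r : ℂ) ^ a) 1 N ∧
    (Hh m r (N + 1) : ℂ) = (N + 1).factorial * chi m (fun a => (r : ℂ) ^ a) 1 (N + 1) := by
  induction N with
  | zero =>
    have h0 : (0 : ℕ).factorial * chi m (fun a => (r : ℂ) ^ a) 1 0 = 1 := by simp [chi, eC]
    have h1 := chi_rec m r 1 0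
    rw [h0] at h1
    refine ⟨by rw [h0]; simp [Hh, hp], ?_⟩
    rw [h1]; simp [Hh, hp]
  | succ N ih =>
    refine ⟨ih.2, ?_⟩
    have h3 := chi_rec m r 1 (N + 1)
    simp only [Nat.add_eq_zero_iff, one_ne_zero, and_false, if_false, Nat.add_sub_cancel] at h3
    rw [h3, Hh_rec]
    push_cast
    rw [ih.1, ih.2]
    push_cast
    ring

lemma Hh_neg (m r : ℤ) (N : ℕ) : Hh m (-r) N = (-1) ^ N * Hh m r N ∧ Hh m (-r) (N + 1) = (-1) ^ (N + 1) * Hh m r (N + 1) := by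
  induction N with
  | zero => simp [Hh, hp]
  | succ N ih =>
    refine ⟨ih.2, ?_⟩
    rw [Hh_rec, Hh_rec, ih.1, ih.2]; ring

lemma fold_sum (f : ℤ → ℂ) (hf : ∀ r, f (-r) = f r) (m : ℕ) :
    ∑ r ∈ Finset.Icc (-(m:ℤ)) m, f r = ∑ r ∈ Finset.range (m + 1), (if r = 0 then 1 else 2) * f r := by
  induction m with
  | zero => simp
  | succ m ih =>
    rw [Finset.sum_range_succ, ← ih]
    have : Finset.Icc (-((m + 1 : ℕ):ℤ)) ((m + 1 : ℕ) : ℤ) = insert (-((m + 1 : ℕ):ℤ)) (insert (((m + 1 : ℕ):ℤ)) (Finset.Icc (-(m:ℤ)) m)) := by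
      ext x; simp only [Finset.mem_Icc, Finset.mem_insert]; push_cast; omega
    rw [this, Finset.sum_insert, Finset.sum_insert, hf]
    · simp; ring
    · simp
    · simp; omega

lemma chi_lin (m : ℂ) (s : Finset ℤ) (c : ℤ → ℂ) (N : ℕ) :
    chi m (fun a => ∑ r ∈ s, c r * (r : ℂ) ^ a) 1 N = ∑ r ∈ s, c r * chi m (fun a => (r : ℂ) ^ a) 1 N := by
  simp only [chi, Finset.mul_sum, Finset.sum_mul]
  rw [Finset.sum_comm]
  refine Finset.sum_congr rfl fun r _ => Finset.sum_congr rfl fun p _ => ?_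
  ring

section jd
variable {c : ℤ × ℤ → ℂ} {k m : ℕ}

lemma JData.small (h : JData c k m) (n0 : ℤ) (hmin : ∀ n < n0, ∀ r, c (n, r) = 0) (r : ℤ) (hr : c (n0, r) ≠ 0) :
    -(m:ℤ) ≤ r ∧ r ≤ m := by
  constructor
  · by_contra hlt
    push Not at hlt
    have h1 := h.tr n0 (-r)
    rw [h.par, hmin _ (by omega)] at h1
    have := mul_eq_zero.1 h1.symm
    exact this.elim (pow_ne_zero _ (by norm_num)) hr
  · by_contra hlt
    push Not at hlt
    have h1 := h.tr n0 r
    rw [hmin _ (by omega)] at h1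
    exact hr h1.symm

lemma JData.tsum (h : JData c k m) (n0 : ℕ) (hmin : ∀ n < (n0 : ℤ), ∀ r, c (n, r) = 0) (g : ℤ → ℂ) (a : ℕ) :
    (∑' i : ℤ × ℤ, if (i.1 : ℝ) = n0 then g i.2 * c i * (i.2 : ℂ) ^ a else 0)
      = ∑ r ∈ Finset.Icc (-(m:ℤ)) m, (g r * c (n0, r)) * (r : ℂ) ^ a := by
  rw [tsum_eq_sum (s := {(n0 : ℤ)} ×ˢ Finset.Icc (-(m:ℤ)) m), Finset.sum_product, Finset.sum_singleton]
  · simp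
  · rintro ⟨n, r⟩ hi
    simp only
    split_ifs with h1
    · have h1' : n = n0 := by exact_mod_cast h1
      subst h1'
      have : c (n0, r) = 0 := by
        by_contra h2
        apply hi
        simp only [Finset.mem_product, Finset.mem_singleton, Finset.mem_Icc, true_and]
        exact h.small n0 hmin r h2
      simp [this]
    · rfl

lemma JData.fold (h : JData c k m) (n0 : ℕ) (g : ℤ → ℂ) (hg : ∀ r, g (-r) = g r) (N : ℕ) (he : Even (k + N))
    (h0 : chi m (fun a => ∑ r ∈ Finset.Icc (-(m:ℤ)) m, (g r * c (n0, r)) * (r : ℂ) ^ a) 1 N = 0) :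
    ∑ r ∈ Finset.range (m + 1), ((if r = 0 then 1 else 2) * c (n0, (r : ℤ))) * (g (r : ℤ) * Hh m r N) = 0 := by
  rw [chi_lin] at h0
  have h1 : ∑ r ∈ Finset.Icc (-(m:ℤ)) m, g r * c (n0, r) * (Hh m r N : ℂ) = 0 := by
    have : ∀ r ∈ Finset.Icc (-(m:ℤ)) m, g r * c (n0, r) * (Hh m r N : ℂ) = N.factorial * (g r * c (n0, r) * chi m (fun a => (r : ℂ) ^ a) 1 N) := by
      intro r _
      rw [(Hh_chi m r N).1]; push_cast; ring
    rw [Finset.sum_congr rfl this, ← Finset.mul_sum, h0, mul_zero]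
  rw [fold_sum] at h1
  · rw [← h1]
    refine Finset.sum_congr rfl fun r _ => ?_
    ring
  · intro r
    rw [hg, h.par, (Hh_neg m r N).1]
    push_cast
    have : ((-1 : ℂ)) ^ k * (-1) ^ N = 1 := by rw [← pow_add, he.neg_one_pow]
    linear_combination g r * c (n0, r) * Hh m r N * this

lemma JData.hn (n0 : ℕ) (hmin : ∀ n < (n0 : ℤ), ∀ r, c (n, r) = 0) : ∀ i, c i ≠ 0 → (n0 : ℤ) ≤ i.1 := by
  intro i hi
  by_contra h1
  push Not at h1
  exact hi (hmin i.1 h1 i.2)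

lemma JData.rowE0 (h : JData c k m) (n0 N : ℕ) (hmin : ∀ n < (n0 : ℤ), ∀ r, c (n, r) = 0)
    (hw : k + N < 12 * n0 ∨ k + N = 12 * n0 + 2) :
    chi m (fun a => ∑ r ∈ Finset.Icc (-(m:ℤ)) m, c (n0, r) * (r : ℂ) ^ a) 1 N = 0 := by
  have := lemmaE h.fam k m n0 N h.S (JData.hn n0 hmin) hw
  have e := fun a => h.tsum n0 hmin (fun _ => 1) a
  simp only [one_mul] at e
  simpa only [e] using this

lemma JData.rowE (h : JData c k m) (n0 N : ℕ) (hmin : ∀ n < (n0 : ℤ), ∀ r, c (n, r) = 0)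
    (hw : k + N < 12 * n0 ∨ k + N = 12 * n0 + 2) (he : Even (k + N)) :
    ∑ r ∈ Finset.range (m + 1), ((if r = 0 then 1 else 2) * c (n0, (r : ℤ))) * ((Hh m r N : ℤ) : ℂ) = 0 := by
  have h0 := h.rowE0 n0 N hmin hw
  have := h.fold n0 (fun _ => 1) (fun _ => rfl) N he (by simpa only [one_mul] using h0)
  simpa only [one_mul] using this

lemma ee_half_neg (r : ℤ) : ee (((-r : ℤ) : ℂ) / 2) = ee (r / 2) := by
  rw [← ee_add_int (((-r : ℤ) : ℂ) / 2) r]; congr 1; push_cast; ring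

lemma ee_half_nat (r : ℕ) : ee (((r : ℤ) : ℂ) / 2) = (((-1) ^ r : ℤ) : ℂ) := by
  push_cast
  rw [← ee_zero_re, ee_pow]; congr 1; ring

lemma JData.rowM (h : JData c k m) (n0 N e : ℕ) (hm : 0 < m) (hmin : ∀ n < (n0 : ℤ), ∀ r, c (n, r) = 0)
    (hee : e = 1 ∨ (e = 2 ∧ Even m))
    (hw : k + N < 4 * n0 + 2 * e) (he : Even (k + N)) :
    ∑ r ∈ Finset.range (m + 1), ((if r = 0 then 1 else 2) * c (n0, (r : ℤ))) * (((-1) ^ r * Hh m r N : ℤ) : ℂ) = 0 := by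
  have h0 := lemmaM1 h.fam k m n0 N e h.S (JData.hn n0 hmin) (by
    rintro ⟨n, r⟩ hi
    have h1 := (h.supp n r hi).2
    simp only
    have h2 : 0 < 4 * n + 2 * r + m := by
      have h3 : 0 < (m : ℤ) * (4 * n + 2 * r + m) := by nlinarith [sq_nonneg (r + m)]
      exact pos_of_mul_pos_right h3 (by positivity)
    rcases hee with h3 | ⟨h3, ⟨b, hb⟩⟩
    · omega
    · omega) he hw
  have h1 := fun a => h.tsum n0 hmin (fun r => ee (r / 2)) a
  have := h.fold n0 (fun r => ee (r / 2)) ee_half_neg N he (by simpa only [cs, h1] using h0)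
  rw [← this]
  refine Finset.sum_congr rfl fun r _ => ?_
  rw [ee_half_nat]; push_cast; ring

lemma JData.big (h : JData c k m) (n0 : ℕ) (hmin : ∀ n < (n0 : ℤ), ∀ r, c (n, r) = 0) (hw : k + 2 * m < 12 * n0) (r : ℤ) :
    c (n0, r) = 0 := by
  have hM : ∀ N ≤ 2 * m, ∑ r ∈ Finset.Icc (-(m:ℤ)) m, c (n0, r) * (r : ℂ) ^ N = 0 := by
    intro N
    induction N using Nat.strong_induction_on with
    | _ N ih =>
      intro hN
      have h0 := h.rowE0 n0 N hmin (Or.inl (by omega))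
      rw [chi, Finset.sum_eq_single (N, 0)] at h0
      · simp only [eC] at h0
        simp only [Even.zero, if_true, Nat.zero_div, pow_zero, Nat.factorial_zero, Nat.cast_one, div_one, mul_one] at h0
        exact (mul_eq_zero.1 h0).resolve_left (div_ne_zero (pow_ne_zero _ (by norm_num)) (by exact_mod_cast Nat.factorial_ne_zero N))
      · rintro ⟨p, q⟩ hp hne
        have hp' := Finset.HasAntidiagonal.mem_antidiagonal.1 hp
        simp only at hp'
        have hq : q ≠ 0 := fun hq => hne (by rw [hq] at hp' ⊢; simp at hp'; rw [hp'])
        simp only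
        rw [ih p (by omega) (by omega)]; ring
      · intro hh; exact absurd (Finset.HasAntidiagonal.mem_antidiagonal.2 (by simp)) hh
  have hv := Matrix.eq_zero_of_forall_pow_sum_mul_pow_eq_zero (n := 2 * m + 1) (R := ℂ)
    (f := fun i : Fin (2 * m + 1) => (((i : ℤ) - m : ℤ) : ℂ)) (v := fun i => c (n0, (i : ℤ) - m)) (by
      intro x y hxy
      have : (x : ℤ) - m = (y : ℤ) - m := Int.cast_injective (α := ℂ) hxy
      exact Fin.ext (by omega)) (by
      intro i
      rw [← hM i (by omega)]
      refine Finset.sum_bij (fun (x : Fin (2 * m + 1)) _ => (x : ℤ) - m) ?_ ?_ ?_ ?_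
      · intro x _; simp only [Finset.mem_Icc]; omega
      · intro x _ y _ hxy; exact Fin.ext (by omega)
      · intro b hb
        rw [Finset.mem_Icc] at hb
        exact ⟨⟨(b + m).toNat, by omega⟩, Finset.mem_univ _, by simp only; omega⟩
      · intro x _; rfl)
  by_contra hr
  have h3 := h.small n0 hmin r hr
  have := congrFun hv ⟨(r + m).toNat, by omega⟩
  simp only [Pi.zero_apply] at this
  rw [show (((r + m).toNat : ℤ) - m) = r by omega] at this
  exact hr this
end jd
end partG2

section partG3
def dot : List ℤ → List ℂ → ℂ
  | [], _ => 0
  | _ :: _, [] => 0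
  | a :: as, x :: xs => a * x + dot as xs

def comb (p : ℤ) : List ℤ → ℤ → List ℤ → List ℤ
  | [], h, ps => ps.map (fun b => -h * b)
  | a :: t, _, [] => (a :: t).map (fun b => p * b)
  | a :: t, h, b :: ps => (p * a - h * b) :: comb p t h ps

lemma dot_nil (l : List ℤ) : dot l [] = 0 := by cases l <;> rfl

lemma dot_map (p : ℤ) (l : List ℤ) (xs : List ℂ) : dot (l.map (fun b => p * b)) xs = p * dot l xs := by
  induction l generalizing xs with
  | nil => simp [dot]
  | cons a l ih =>
    cases xs with
    | nil => simp [dot]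
    | cons x xs => simp only [List.map_cons, dot, ih]; push_cast; ring

lemma dot_comb (p : ℤ) (t : List ℤ) (h : ℤ) (ps : List ℤ) (xs : List ℂ) :
    dot (comb p t h ps) xs = p * dot t xs - h * dot ps xs := by
  induction t generalizing ps xs with
  | nil => rw [comb, dot_map]; simp [dot]
  | cons a t ih =>
    cases ps with
    | nil => rw [comb, dot_map]; simp [dot]
    | cons b ps =>
      cases xs with
      | nil => simp [dot_nil]
      | cons x xs => simp only [comb, dot, ih]; push_cast; ring

def lgcd : List ℤ → ℕ
  | [] => 0
  | a :: l => Nat.gcd a.natAbs (lgcd l)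

def nrm (l : List ℤ) : List ℤ :=
  let g : ℤ := lgcd l
  let l' := l.map (fun x => x / g)
  if g ≠ 0 ∧ l'.map (fun x => g * x) = l then l' else l

lemma dot_nrm (l : List ℤ) (xs : List ℂ) (h : dot l xs = 0) : dot (nrm l) xs = 0 := by
  unfold nrm
  simp only
  split_ifs with h1
  · rw [← h1.2, dot_map] at h
    exact (mul_eq_zero.1 h).resolve_left (by exact_mod_cast h1.1)
  · exact h

def piv : List (List ℤ) → Option (ℤ × List ℤ)
  | [] => none
  | [] :: R => piv R
  | (h :: t) :: R => if h = 0 then piv R else some (h, t)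

lemma piv_mem (R : List (List ℤ)) (q : ℤ × List ℤ) (h : piv R = some q) : q.1 ≠ 0 ∧ (q.1 :: q.2) ∈ R := by
  induction R with
  | nil => simp [piv] at h
  | cons r R ih =>
    cases r with
    | nil => exact ⟨(ih h).1, List.mem_cons_of_mem _ (ih h).2⟩
    | cons a t =>
      rw [piv] at h
      split_ifs at h with h1
      · exact ⟨(ih h).1, List.mem_cons_of_mem _ (ih h).2⟩
      · simp only [Option.some.injEq] at h
        subst h
        exact ⟨h1, List.mem_cons_self⟩

def redu (p : ℤ) (ps : List ℤ) : List ℤ → List ℤ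
  | [] => []
  | h :: t => if h = 0 then t else nrm (comb p t h ps)

def elm : ℕ → List (List ℤ) → Bool
  | 0, _ => true
  | n + 1, R => match piv R with
    | none => false
    | some (p, ps) => elm n (R.map (redu p ps))

lemma elm_sound (n : ℕ) (R : List (List ℤ)) (h : elm n R = true) (xs : List ℂ) (hl : xs.length = n)
    (hR : ∀ r ∈ R, dot r xs = 0) : ∀ x ∈ xs, x = 0 := by
  induction n generalizing R xs with
  | zero => simp [List.length_eq_zero_iff.1 hl]
  | succ n ih =>
    cases xs with
    | nil => simp
    | cons x xs =>
      rw [elm] at h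
      cases hq : piv R with
      | none => rw [hq] at h; simp at h
      | some q =>
        rw [hq] at h
        simp only at h
        obtain ⟨hp, hm⟩ := piv_mem R q hq
        have hd := hR _ hm
        simp only [dot] at hd
        have hx := ih _ h xs (by simpa using hl) (by
          intro r hr
          obtain ⟨r', hr', rfl⟩ := List.mem_map.1 hr
          have h2 := hR r' hr'
          cases r' with
          | nil => simp [redu, dot]
          | cons b t =>
            simp only [dot] at h2
            simp only [redu]
            split_ifs with h0
            · rw [h0] at h2; simpa using h2
            · apply dot_nrm
              rw [dot_comb]
              linear_combination q.1 * h2 - b * hd)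
        have hz : ∀ l : List ℤ, dot l xs = 0 := by
          intro l
          have : ∀ (xs : List ℂ), (∀ x ∈ xs, x = 0) → ∀ l, dot l xs = 0 := by
            intro xs
            induction xs with
            | nil => intro _ l; exact dot_nil l
            | cons y ys ihy =>
              intro hh l
              cases l with
              | nil => rfl
              | cons b l => 
                rw [dot, ihy (fun z hz => hh z (List.mem_cons_of_mem _ hz)), hh y List.mem_cons_self]; simp
          exact this xs hx l
        rw [hz, add_zero] at hd
        intro y hy
        rcases List.mem_cons.1 hy with rfl | hy
        · exact (mul_eq_zero.1 hd).resolve_left (by exact_mod_cast hp)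
        · exact hx y hy

def keep (D0 n k m r : ℕ) : Bool :=
  (k % 2 == 0 || (r != 0 && r != m)) && (decide (r * r < 4 * n * m)) &&
    !((n == 1 || m == 1) && decide (4 * n * m < D0 + r * r))

def hstep (m : ℤ) (N : ℕ) (q : ℤ × ℤ × ℤ) : ℤ × ℤ × ℤ :=
  (q.1, q.2.2, 6 * q.1 * q.2.2 - 6 * m * (N + 1) * q.2.1)

def emm (m : ℕ) : ℕ := if m % 2 = 0 then 2 else 1

def gen (n k m : ℕ) : ℕ → ℕ → List (ℤ × ℤ × ℤ) → List (List ℤ)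
  | 0, _, _ => []
  | f + 1, N, S =>
    let R := gen n k m f (N + 1) (S.map (hstep m N))
    if (k + N) % 2 = 0 then
      (if k + N < 12 * n ∨ k + N = 12 * n + 2 then [S.map (fun q => q.2.1)] else []) ++
      (if k + N < 4 * n + 2 * emm m then
        [S.map (fun q => if q.1 % 2 = 0 then q.2.1 else - q.2.1)] else []) ++ R
    else R

def triv (D0 n k m : ℕ) : Bool :=
  let rs := (List.range (m + 1)).filter (keep D0 n k m)
  elm rs.length (gen n k m (12 * n + 3 - k) 0 (rs.map (fun r : ℕ => ((r : ℤ), (1 : ℤ), 6 * (r : ℤ)))))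

def ordCheck (D0 m i : ℕ) : Bool :=
  (List.range i).all fun i0 => (List.range ((2 + i0 + 2 * m) / 12)).all fun n => triv D0 (n + 1) (2 + i0) m

lemma gen_mem (n k m f N : ℕ) (rs : List ℕ) (ρ : List ℤ)
    (h : ρ ∈ gen n k m f N (rs.map (fun r : ℕ => ((r : ℤ), Hh m r N, Hh m r (N + 1))))) :
    (∃ N', (k + N' < 12 * n ∨ k + N' = 12 * n + 2) ∧ Even (k + N') ∧ ρ = rs.map (fun r : ℕ => Hh m r N')) ∨
    (∃ N', (k + N' < 4 * n + 2 * emm m) ∧ Even (k + N') ∧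
      ρ = rs.map (fun r : ℕ => (-1) ^ r * Hh m r N')) := by
  induction f generalizing N with
  | zero => simp [gen] at h
  | succ f ih =>
    rw [gen] at h
    have hS : (rs.map (fun r : ℕ => ((r : ℤ), Hh m r N, Hh m r (N + 1)))).map (hstep m N)
        = rs.map (fun r : ℕ => ((r : ℤ), Hh m r (N + 1), Hh m r (N + 1 + 1))) := by
      rw [List.map_map]; rfl
    rw [hS] at h
    split_ifs at h with h1 h2 h3 h3
    · simp only [List.mem_append, List.mem_singleton] at h
      rcases h with (h | h) | h
      · exact Or.inl ⟨N, h2, Nat.even_iff.2 h1, by rw [h, List.map_map]; rfl⟩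
      · refine Or.inr ⟨N, h3, Nat.even_iff.2 h1, ?_⟩
        rw [h, List.map_map]
        refine List.map_congr_left fun r _ => ?_
        simp only [Function.comp]
        rcases Nat.even_or_odd r with h5 | h5
        · rw [if_pos (by have := Nat.even_iff.1 h5; omega), h5.neg_one_pow, one_mul]
        · rw [if_neg (by have := Nat.odd_iff.1 h5; omega), h5.neg_one_pow]; ring
      · exact ih _ h
    · simp only [List.mem_append, List.mem_singleton] at h
      rcases h with (h | h) | h
      · exact Or.inl ⟨N, h2, Nat.even_iff.2 h1, by rw [h, List.map_map]; rfl⟩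
      · simp at h
      · exact ih _ h
    · simp only [List.mem_append, List.mem_singleton] at h
      rcases h with (h | h) | h
      · simp at h
      · refine Or.inr ⟨N, h3, Nat.even_iff.2 h1, ?_⟩
        rw [h, List.map_map]
        refine List.map_congr_left fun r _ => ?_
        simp only [Function.comp]
        rcases Nat.even_or_odd r with h5 | h5
        · rw [if_pos (by have := Nat.even_iff.1 h5; omega), h5.neg_one_pow, one_mul]
        · rw [if_neg (by have := Nat.odd_iff.1 h5; omega), h5.neg_one_pow]; ring
      · exact ih _ h
    · simp only [List.mem_append] at h
      rcases h with (h | h) | h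
      · simp at h
      · simp at h
      · exact ih _ h
    · exact ih _ h

lemma dot_filter (p : ℕ → Bool) (l : List ℕ) (f : ℕ → ℤ) (g : ℕ → ℂ) (hg : ∀ r ∈ l, p r = false → g r = 0) :
    dot ((l.filter p).map f) ((l.filter p).map g) = (l.map (fun r => g r * f r)).sum := by
  induction l with
  | nil => simp [dot]
  | cons a l ih =>
    have ih' := ih fun r hr => hg r (List.mem_cons_of_mem _ hr)
    by_cases h : p a = true
    · rw [List.filter_cons_of_pos h]
      simp only [List.map_cons, dot, ih', List.sum_cons]; ring
    · rw [List.filter_cons_of_neg h]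
      simp only [List.map_cons, ih', List.sum_cons]
      rw [hg a List.mem_cons_self (by simpa using h)]; simp

lemma list_sum_range (f : ℕ → ℂ) (n : ℕ) : ((List.range n).map f).sum = ∑ r ∈ Finset.range n, f r := by
  induction n with
  | zero => simp
  | succ n ih => rw [List.range_succ, Finset.sum_range_succ]; simp [ih]

lemma triv_sound {c : ℤ × ℤ → ℂ} {k m : ℕ} (h : JData c k m) (hm : 0 < m) (D0 n0 : ℕ)
    (hmin : ∀ n < (n0 : ℤ), ∀ r, c (n, r) = 0)
    (hz : ∀ r : ℕ, r ≤ m → keep D0 n0 k m r = false → c (n0, r) = 0) (ht : triv D0 n0 k m = true) (r : ℤ) :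
    c (n0, r) = 0 := by
  have key : ∀ r : ℕ, r ≤ m → c (n0, r) = 0 := by
    unfold triv at ht
    simp only at ht
    set rs := (List.range (m + 1)).filter (keep D0 n0 k m) with hrs
    let g : ℕ → ℂ := fun r => (if r = 0 then 1 else 2) * c (n0, (r : ℤ))
    have hg : ∀ r ∈ List.range (m + 1), keep D0 n0 k m r = false → g r = 0 := by
      intro r hr hk
      simp only [g]
      rw [hz r (by have := List.mem_range.1 hr; omega) hk, mul_zero]
    have hs := elm_sound _ _ ht (rs.map g) (by simp) (by
      intro ρ hρ
      have e : (rs.map (fun r : ℕ => ((r : ℤ), (1 : ℤ), 6 * (r : ℤ)))) = rs.map (fun r : ℕ => ((r : ℤ), Hh m r 0, Hh m r (0 + 1))) := rfl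
      rw [e] at hρ
      rcases gen_mem _ _ _ _ _ _ _ hρ with ⟨N', h1, h2, h3⟩ | ⟨N', h1, h2, h3⟩
      · rw [h3, hrs, dot_filter _ _ _ _ hg, list_sum_range]
        exact h.rowE n0 N' hmin h1 h2
      · rw [h3, hrs, dot_filter _ _ _ _ hg, list_sum_range]
        refine h.rowM n0 N' _ hm hmin ?_ h1 h2
        unfold emm
        split_ifs with h4
        · exact Or.inr ⟨rfl, Nat.even_iff.2 h4⟩
        · exact Or.inl rfl)
    intro r hr
    by_cases hk : keep D0 n0 k m r = true
    · have := hs (g r) (List.mem_map.2 ⟨r, by rw [hrs]; exact List.mem_filter.2 ⟨List.mem_range.2 (by omega), hk⟩, rfl⟩)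
      simp only [g] at this
      refine (mul_eq_zero.1 this).resolve_left ?_
      split_ifs <;> norm_num
    · exact hz r hr (by simpa using hk)
  by_contra hr
  have hs := h.small n0 hmin r hr
  rcases le_total 0 r with h0 | h0
  · apply hr
    have := key r.toNat (by omega)
    rwa [show ((r.toNat : ℕ) : ℤ) = r by omega] at this
  · apply hr
    have := key (-r).toNat (by omega)
    rw [show (((-r).toNat : ℕ) : ℤ) = -r by omega, h.par] at this
    exact (mul_eq_zero.1 this).resolve_left (pow_ne_zero _ (by norm_num))
end partG3

section partG4
section ordc
variable {j : ℕ} {F : (Fin 2 → Fin 2 → ℂ) → (Fin (j + 1) → ℂ)} {a : ℤ → ℤ → ℤ → Fin (j + 1) → ℂ}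

def Dz (a : ℤ → ℤ → ℤ → Fin (j + 1) → ℂ) (D0 : ℕ) : Prop :=
  ∀ n r m : ℤ, (n = 1 ∨ m = 1) → 4 * n * m - r * r < D0 → a n r m = 0

lemma ord_zero (m : ℤ) : OrdGE a m 0 := fun _ _ _ h => absurd h (Nat.not_lt_zero _)

lemma ord_step (hF : IsSiegelCuspForm j 2 Sp4Z (fun _ => 1) F) (ha : IsCoef F a) (hj : Even j) (m i : ℕ)
    (ho : OrdGE a m i)
    (H : ∀ l0 : Fin (j + 1), JData (fun q => a q.1 q.2 m l0) (2 + i) m →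
      ∀ n0 : ℕ, 1 ≤ n0 → (∀ n < (n0 : ℤ), ∀ r, a n r m l0 = 0) → ∀ r, a n0 r m l0 = 0) : OrdGE a m (i + 1) := by
  intro n r l hl
  rcases Nat.lt_succ_iff_lt_or_eq.1 hl with h | h
  · exact ho n r l h
  have hd := lead_data hF ha hj m i l h.symm ho
  have hneg : ∀ n : ℤ, n < 1 → ∀ r, a n r m l = 0 := by
    intro n hn r
    by_contra hh
    have := (hd.supp n r hh).1
    omega
  have key : ∀ n0 : ℕ, ∀ r, a n0 r m l = 0 := by
    intro n0
    induction n0 using Nat.strong_induction_on with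
    | _ n0 ih =>
      rcases Nat.eq_zero_or_pos n0 with h0 | h0
      · intro r; subst h0; exact hneg _ (by norm_num) r
      · refine H l hd n0 h0 ?_
        intro n hn r
        by_cases hn0 : n < 1
        · exact hneg n hn0 r
        · have := ih n.toNat (by omega) r
          rwa [show ((n.toNat : ℕ) : ℤ) = n by omega] at this
  by_cases hn0 : n < 1
  · exact hneg n hn0 r
  · have := key n.toNat r
    rwa [show ((n.toNat : ℕ) : ℤ) = n by omega] at this

lemma ord_of_check (hF : IsSiegelCuspForm j 2 Sp4Z (fun _ => 1) F) (ha : IsCoef F a) (hj : Even j) (D0 : ℕ)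
    (hD : Dz a D0) (m : ℕ) (hm : 0 < m) (i : ℕ) (hc : ordCheck D0 m i = true) : OrdGE a m i := by
  unfold ordCheck at hc
  rw [List.all_eq_true] at hc
  have : ∀ i0 ≤ i, OrdGE a m i0 := by
    intro i0
    induction i0 with
    | zero => intro _; exact ord_zero _
    | succ i0 ih =>
      intro hi
      refine ord_step hF ha hj m i0 (ih (by omega)) ?_
      intro l0 hd n0 h0 hmin
      by_cases hbig : 2 + i0 + 2 * m < 12 * n0
      · exact fun r => hd.big n0 hmin hbig r
      · have h1 := hc i0 (List.mem_range.2 (by omega))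
        rw [List.all_eq_true] at h1
        have h2 := h1 (n0 - 1) (List.mem_range.2 (by omega))
        rw [show n0 - 1 + 1 = n0 by omega] at h2
        refine fun r => triv_sound hd hm D0 n0 hmin ?_ h2 r
        intro r hr hk
        simp only
        by_contra hne
        have hs := (hd.supp n0 r hne).2
        have hne' : a n0 r m ≠ 0 := fun hh => hne (by rw [hh]; rfl)
        have h3 : ¬ (((n0 : ℤ) = 1 ∨ (m : ℤ) = 1) ∧ 4 * (n0 : ℤ) * m - r * r < D0) :=
          fun hh => hne' (hD n0 r m hh.1 hh.2)
        have h4 : (2 + i0) % 2 = 0 ∨ (r ≠ 0 ∧ r ≠ m) := by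
          by_contra h5
          push Not at h5
          have hodd : Odd (2 + i0) := Nat.odd_iff.2 (by omega)
          have hpar : ∀ n r : ℤ, a n (-r) m l0 = - a n r m l0 := by
            intro n r
            have := hd.par n r
            rw [hodd.neg_one_pow] at this
            simpa using this
          by_cases hr0 : r = 0
          · subst hr0
            have := hpar n0 0
            simp only [neg_zero] at this
            exact hne (by simpa using self_eq_neg.1 this)
          · have hrm := h5.2 hr0
            subst hrm
            have h6 := hd.tr n0 r
            simp only at h6
            rw [show (n0 : ℤ) - r + r = n0 by ring, show (r : ℤ) - 2 * r = -r by ring, hpar] at h6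
            exact hne (self_eq_neg.1 h6.symm)
        have h5 : r * r < 4 * n0 * m := by exact_mod_cast hs
        have h7 : ¬ ((n0 = 1 ∨ m = 1) ∧ 4 * n0 * m < D0 + r * r) := by
          rintro ⟨h8, h9⟩
          have h9' : 4 * (n0 : ℤ) * m < D0 + r * r := by exact_mod_cast h9
          exact h3 ⟨by exact_mod_cast h8, by linarith⟩
        have : keep D0 n0 (2 + i0) m r = true := by
          unfold keep
          simp only [Bool.and_eq_true, Bool.or_eq_true, beq_iff_eq, bne_iff_ne, decide_eq_true_eq,
            Bool.not_eq_true', Bool.and_eq_false_iff, Bool.or_eq_false_iff, beq_eq_false_iff_ne, decide_eq_false_iff_not]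
          refine ⟨⟨h4, h5⟩, ?_⟩
          tauto
        rw [this] at hk
        exact absurd hk (by simp)
  exact this i le_rfl

lemma ord_of_low (hF : IsSiegelCuspForm j 2 Sp4Z (fun _ => 1) F) (ha : IsCoef F a) (hj : Even j) (m s : ℕ)
    (hlow : ∀ n < (s : ℤ), ∀ r, a n r m = 0) (i : ℕ) (hi : i + 2 * m + 2 ≤ 12 * s) : OrdGE a m i := by
  induction i with
  | zero => exact ord_zero _
  | succ i ih =>
    refine ord_step hF ha hj m i (ih (by omega)) ?_
    intro l0 hd n0 h0 hmin r
    by_cases hs : n0 < s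
    · rw [hlow n0 (by exact_mod_cast hs)]; rfl
    · exact hd.big n0 hmin (by omega) r

lemma ord_all (m : ℤ) (i : ℕ) (hi : j < i) (ho : OrdGE a m i) (n r : ℤ) : a n r m = 0 := by
  funext l
  exact ho n r l (by omega)
end ordc
end partG4

section partF1
noncomputable def PT {j : ℕ} (v : Fin (j + 1) → ℂ) : Polynomial ℂ :=
  ∑ l : Fin (j + 1), Polynomial.C (v l) * (Polynomial.X ^ (j - (l : ℕ)) *
    (1 + Polynomial.C Complex.I * Polynomial.X) ^ (l : ℕ))

noncomputable def LL (b d : ℤ) : Polynomial ℂ := Polynomial.C ((d : ℂ) - Complex.I * b) * Polynomial.X - Polynomial.C (b : ℂ)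

lemma PT_eval {j : ℕ} (v : Fin (j + 1) → ℂ) (t : ℂ) : (PT v).eval t = hom v t (1 + Complex.I * t) := by
  simp [PT, hom, Polynomial.eval_finsetSum]

lemma hom_scale {j : ℕ} (v : Fin (j + 1) → ℂ) (c x y : ℂ) : hom v (c * x) (c * y) = c ^ j * hom v x y := by
  simp only [hom, Finset.mul_sum]
  refine Finset.sum_congr rfl fun l _ => ?_
  have hl : (l : ℕ) ≤ j := Nat.lt_succ_iff.1 l.2
  rw [mul_pow, mul_pow]
  have : c ^ j = c ^ (j - (l : ℕ)) * c ^ (l : ℕ) := by rw [← pow_add]; congr 1; omega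
  rw [this]; ring

lemma PT_zero {j : ℕ} (v : Fin (j + 1) → ℂ) (h : PT v = 0) : v = 0 := by
  apply hom_zero_all
  intro x y
  have hc : Continuous (fun y => hom v x y) := by unfold hom; fun_prop
  refine congrFun (hc.ext_on (dense_compl_singleton (Complex.I * x)) (continuous_const (y := (0:ℂ))) ?_) y
  intro y hy
  have hy' : y - Complex.I * x ≠ 0 := sub_ne_zero.2 hy
  have h1 := PT_eval v (x / (y - Complex.I * x))
  rw [h, Polynomial.eval_zero] at h1
  have h2 := hom_scale v (y - Complex.I * x) (x / (y - Complex.I * x)) (1 + Complex.I * (x / (y - Complex.I * x)))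
  rw [← h1, mul_zero, mul_div_cancel₀ _ hy'] at h2
  have e : (y - Complex.I * x) * (1 + Complex.I * (x / (y - Complex.I * x))) = y := by
    field_simp; ring
  rw [e] at h2
  exact h2

lemma PT_deg {j : ℕ} (v : Fin (j + 1) → ℂ) : (PT v).natDegree ≤ j := by
  unfold PT
  refine Polynomial.natDegree_sum_le_of_forall_le _ _ fun l _ => ?_
  have hl : (l : ℕ) ≤ j := Nat.lt_succ_iff.1 l.2
  refine (Polynomial.natDegree_C_mul_le _ _).trans ?_
  have h1 : (1 + Polynomial.C Complex.I * Polynomial.X : Polynomial ℂ).natDegree ≤ 1 := by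
    compute_degree
  refine Polynomial.natDegree_mul_le.trans ?_
  have h2 : ((1 + Polynomial.C Complex.I * Polynomial.X : Polynomial ℂ) ^ (l : ℕ)).natDegree ≤ l * 1 :=
    Polynomial.natDegree_pow_le_of_le _ h1
  have h3 : ((Polynomial.X : Polynomial ℂ) ^ (j - (l : ℕ))).natDegree ≤ j - l := Polynomial.natDegree_X_pow_le _
  omega

lemma cpx_ne (b d : ℤ) (h : ¬ (b = 0 ∧ d = 0)) : (d : ℂ) - Complex.I * b ≠ 0 := by
  intro h0
  have h1 := congrArg Complex.re h0
  have h2 := congrArg Complex.im h0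
  simp at h1 h2
  exact h ⟨by exact_mod_cast h2, by exact_mod_cast h1⟩

lemma LL_coprime (b d b' d' : ℤ) (h : b * d' - b' * d ≠ 0) : IsCoprime (LL b d) (LL b' d') := by
  have h' : ((b : ℂ) * d' - b' * d) ≠ 0 := by exact_mod_cast h
  refine ⟨Polynomial.C (-((d' : ℂ) - Complex.I * b') / (b * d' - b' * d)), Polynomial.C (((d : ℂ) - Complex.I * b) / (b * d' - b' * d)), ?_⟩
  apply Polynomial.funext
  intro t
  simp only [LL, Polynomial.eval_add, Polynomial.eval_mul, Polynomial.eval_C, Polynomial.eval_sub, Polynomial.eval_X, Polynomial.eval_one]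
  rw [div_mul_eq_mul_div, div_mul_eq_mul_div, ← add_div, div_eq_one_iff_eq h']; ring

lemma LL_deg (b d : ℤ) (h : ¬ (b = 0 ∧ d = 0)) : (LL b d).natDegree = 1 := by
  unfold LL
  rw [Polynomial.natDegree_sub_C, Polynomial.natDegree_C_mul_X _ (cpx_ne b d h)]

lemma LL_ne (b d : ℤ) (h : ¬ (b = 0 ∧ d = 0)) : LL b d ≠ 0 := by
  intro h0
  have := LL_deg b d h
  rw [h0] at this; simp at this

lemma LL_root {j : ℕ} (v : Fin (j + 1) → ℂ) (b d : ℤ) (h : ¬ (b = 0 ∧ d = 0)) (hz : hom v b d = 0) :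
    LL b d ∣ PT v := by
  have hc := cpx_ne b d h
  have e : LL b d = Polynomial.C ((d : ℂ) - Complex.I * b) * (Polynomial.X - Polynomial.C (b / ((d : ℂ) - Complex.I * b))) := by
    rw [LL, mul_sub, ← Polynomial.C_mul, mul_div_cancel₀ _ hc]
  rw [e]
  have hu : IsUnit (Polynomial.C ((d : ℂ) - Complex.I * b)) := Polynomial.isUnit_C.2 hc.isUnit
  rw [hu.mul_left_dvd, Polynomial.dvd_iff_isRoot, Polynomial.IsRoot, PT_eval]
  have h1 : (b / ((d : ℂ) - Complex.I * b)) = ((d : ℂ) - Complex.I * b)⁻¹ * b := by field_simp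
  have h2 : 1 + Complex.I * (b / ((d : ℂ) - Complex.I * b)) = ((d : ℂ) - Complex.I * b)⁻¹ * d := by
    field_simp; ring
  rw [h2, h1, hom_scale, hz, mul_zero]

section dvd
variable {j : ℕ} {F : (Fin 2 → Fin 2 → ℂ) → (Fin (j + 1) → ℂ)} {a : ℤ → ℤ → ℤ → Fin (j + 1) → ℂ}

lemma LL_pow (hF : IsSiegelCuspForm j 2 Sp4Z (fun _ => 1) F) (ha : IsCoef F a) (n r m b d : ℤ) (hp : IsCoprime b d)
    (I : ℕ) (ho : OrdGE a (n * b * b + r * b * d + m * d * d) I) : LL b d ^ I ∣ PT (a n r m) := by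
  obtain ⟨u, w, huw⟩ := hp
  have hdet : (w * d - b * (-u)) * (w * d - b * (-u)) = 1 := by
    rw [show w * d - b * (-u) = 1 by linarith]; norm_num
  have he := ha.equiv hF w b (-u) d hdet n r m
  set v' := a (n * w * w + r * w * (-u) + m * (-u) * (-u)) (2 * n * w * b + r * (w * d + b * (-u)) + 2 * m * (-u) * d)
      (n * b * b + r * b * d + m * d * d) with hv'
  have huw' : (u * b + w * d : ℂ) = 1 := by exact_mod_cast huw
  have e : PT (a n r m) = ∑ l : Fin (j + 1), Polynomial.C (v' l) * (LL b d ^ (j - (l : ℕ)) *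
      (Polynomial.C (u : ℂ) * Polynomial.X + Polynomial.C (w : ℂ) * (1 + Polynomial.C Complex.I * Polynomial.X)) ^ (l : ℕ)) := by
    apply Polynomial.funext
    intro t
    have h1 := he (d * t - b * (1 + Complex.I * t)) (u * t + w * (1 + Complex.I * t))
    rw [PT_eval]
    have e1 : (w * (d * t - b * (1 + Complex.I * t)) + b * (u * t + w * (1 + Complex.I * t)) : ℂ) = t := by
      linear_combination t * huw'
    have e2 : (((-u : ℤ) : ℂ) * (d * t - b * (1 + Complex.I * t)) + d * (u * t + w * (1 + Complex.I * t)) : ℂ) = 1 + Complex.I * t := by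
      push_cast
      linear_combination (1 + Complex.I * t) * huw'
    rw [e1, e2] at h1
    rw [← h1]
    simp only [hom, Polynomial.eval_finsetSum]
    refine Finset.sum_congr rfl fun l _ => ?_
    simp only [LL, Polynomial.eval_mul, Polynomial.eval_pow, Polynomial.eval_C, Polynomial.eval_sub, Polynomial.eval_X, Polynomial.eval_one, Polynomial.eval_add]
    rw [show (d * t - b * (1 + Complex.I * t) : ℂ) = (d - Complex.I * b) * t - b by ring]
  rw [e]
  refine Finset.dvd_sum fun l _ => ?_
  by_cases hl : j - (l : ℕ) < I
  · rw [hv', ho _ _ l hl]; simp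
  · exact Dvd.dvd.mul_left (Dvd.dvd.mul_right (pow_dvd_pow _ (by omega)) _) _

def npar (v w : ℤ × ℤ × ℕ) : Prop := v.1 * w.2.1 - w.1 * v.2.1 ≠ 0

instance : DecidableRel npar := fun v w =>
  inferInstanceAs (Decidable (v.1 * w.2.1 - w.1 * v.2.1 ≠ 0))

lemma prod_dvd (P : Polynomial ℂ) (vs : List (ℤ × ℤ × ℕ)) (hp : vs.Pairwise npar)
    (hd : ∀ v ∈ vs, LL v.1 v.2.1 ^ v.2.2 ∣ P) : (vs.map (fun v => LL v.1 v.2.1 ^ v.2.2)).prod ∣ P := by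
  induction vs with
  | nil => simp
  | cons v vs ih =>
    rw [List.pairwise_cons] at hp
    rw [List.map_cons, List.prod_cons]
    refine IsCoprime.mul_dvd ?_ (hd v List.mem_cons_self) (ih hp.2 fun w hw => hd w (List.mem_cons_of_mem _ hw))
    have : ∀ ws : List (ℤ × ℤ × ℕ), (∀ w ∈ ws, npar v w) →
        IsCoprime (LL v.1 v.2.1 ^ v.2.2) (ws.map (fun v => LL v.1 v.2.1 ^ v.2.2)).prod := by
      intro ws
      induction ws with
      | nil => intro _; simpa using isCoprime_one_right
      | cons w ws ihw =>
        intro h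
        rw [List.map_cons, List.prod_cons]
        exact ((LL_coprime _ _ _ _ (h w List.mem_cons_self)).pow).mul_right (ihw fun x hx => h x (List.mem_cons_of_mem _ hx))
    exact this vs hp.1

lemma prod_deg (vs : List (ℤ × ℤ × ℕ)) (h : ∀ v ∈ vs, ¬ (v.1 = 0 ∧ v.2.1 = 0)) :
    (vs.map (fun v => LL v.1 v.2.1 ^ v.2.2)).prod ≠ 0 ∧
    (vs.map (fun v => LL v.1 v.2.1 ^ v.2.2)).prod.natDegree = (vs.map (fun v => v.2.2)).sum := by
  induction vs with
  | nil => simp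
  | cons v vs ih =>
    have ih' := ih fun w hw => h w (List.mem_cons_of_mem _ hw)
    have h1 := h v List.mem_cons_self
    have h2 := pow_ne_zero v.2.2 (LL_ne _ _ h1)
    simp only [List.map_cons, List.prod_cons, List.sum_cons]
    refine ⟨mul_ne_zero h2 ih'.1, ?_⟩
    rw [Polynomial.natDegree_mul h2 ih'.1, ih'.2, Polynomial.natDegree_pow, LL_deg _ _ h1, mul_one]

lemma kill (w : Fin (j + 1) → ℂ) (vs : List (ℤ × ℤ × ℕ)) (hp : vs.Pairwise npar)
    (h0 : ∀ v ∈ vs, ¬ (v.1 = 0 ∧ v.2.1 = 0))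
    (hd : ∀ v ∈ vs, LL v.1 v.2.1 ^ v.2.2 ∣ PT w) (hs : j < (vs.map (fun v => v.2.2)).sum) : w = 0 := by
  apply PT_zero
  by_contra hne
  have h1 := Polynomial.natDegree_le_of_dvd (prod_dvd _ vs hp hd) hne
  rw [(prod_deg vs h0).2] at h1
  have := PT_deg w
  omega
end dvd
end partF1

section partF2
def boxB (B : ℕ) : List (ℤ × ℤ) :=
  (List.range (B + 1)).flatMap fun x => (List.range (2 * B + 1)).map fun y => ((x : ℤ), (y : ℤ) - (B : ℤ))

def vfind (n r m : ℤ) (tbl : List (ℕ × ℕ)) (v : ℤ × ℤ) : Option (ℤ × ℤ × ℕ) :=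
  if Int.gcd v.1 v.2 = 1 ∧ (v.1 ≠ 0 ∨ v.2 = 1) then
    (tbl.find? fun e => decide ((e.1 : ℤ) = n * v.1 * v.1 + r * v.1 * v.2 + m * v.2 * v.2)).map
      fun e => (v.1, v.2, e.2)
  else none

def stageVs (n r m : ℤ) (tbl : List (ℕ × ℕ)) : List (ℤ × ℤ × ℕ) := (boxB 5).filterMap (vfind n r m tbl)

lemma stageVs_mem (n r m : ℤ) (tbl : List (ℕ × ℕ)) (w : ℤ × ℤ × ℕ) (hw : w ∈ stageVs n r m tbl) :
    IsCoprime w.1 w.2.1 ∧ ∃ e ∈ tbl, (e.1 : ℤ) = n * w.1 * w.1 + r * w.1 * w.2.1 + m * w.2.1 * w.2.1 ∧ e.2 = w.2.2 := by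
  obtain ⟨v, _, hv⟩ := List.mem_filterMap.1 hw
  unfold vfind at hv
  split_ifs at hv with h1
  obtain ⟨e, he, rfl⟩ := Option.map_eq_some_iff.1 hv
  have h2 := List.find?_some he
  refine ⟨Int.isCoprime_iff_gcd_eq_one.2 h1.1, e, List.mem_of_find?_eq_some he, ?_, rfl⟩
  simpa using h2

lemma cop_ne {b d : ℤ} (h : IsCoprime b d) : ¬ (b = 0 ∧ d = 0) := by
  rintro ⟨rfl, rfl⟩
  exact not_isCoprime_zero_zero h

def pchk (n r m : ℤ) (tbl : List (ℕ × ℕ)) (s : ℕ) : Bool :=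
  decide ((stageVs n r m tbl).Pairwise npar) && decide (s ≤ ((stageVs n r m tbl).map (fun v => v.2.2)).sum)

def tchk (D0 : ℕ) (tbl : List (ℕ × ℕ)) : Bool := tbl.all fun e => decide (0 < e.1) && ordCheck D0 e.1 e.2

section stg
variable {j : ℕ} {F : (Fin 2 → Fin 2 → ℂ) → (Fin (j + 1) → ℂ)} {a : ℤ → ℤ → ℤ → Fin (j + 1) → ℂ}

lemma stage_dvd (hF : IsSiegelCuspForm j 2 Sp4Z (fun _ => 1) F) (ha : IsCoef F a) (n r m : ℤ)
    (tbl : List (ℕ × ℕ)) (hT : ∀ e ∈ tbl, OrdGE a e.1 e.2) (v : ℤ × ℤ × ℕ) (hv : v ∈ stageVs n r m tbl) :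
    LL v.1 v.2.1 ^ v.2.2 ∣ PT (a n r m) := by
  obtain ⟨h1, e, he, h2, h3⟩ := stageVs_mem _ _ _ _ _ hv
  apply LL_pow hF ha _ _ _ _ _ h1
  rw [← h2, ← h3]
  exact hT e he

lemma kill_pchk (hF : IsSiegelCuspForm j 2 Sp4Z (fun _ => 1) F) (ha : IsCoef F a) (n r m : ℤ)
    (tbl : List (ℕ × ℕ)) (hT : ∀ e ∈ tbl, OrdGE a e.1 e.2) (s : ℕ) (hs : j < s) (hc : pchk n r m tbl s = true) :
    a n r m = 0 := by
  simp only [pchk, Bool.and_eq_true, decide_eq_true_eq] at hc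
  exact kill _ _ hc.1 (fun v hv => cop_ne (stageVs_mem _ _ _ _ _ hv).1) (stage_dvd hF ha n r m tbl hT) (by omega)

lemma tbl_ord (hF : IsSiegelCuspForm j 2 Sp4Z (fun _ => 1) F) (ha : IsCoef F a) (hj : Even j) (D0 : ℕ)
    (hD : Dz a D0) (tbl : List (ℕ × ℕ)) (hc : tchk D0 tbl = true) : ∀ e ∈ tbl, OrdGE a e.1 e.2 := by
  intro e he
  have := List.all_eq_true.1 hc e he
  simp only [Bool.and_eq_true, decide_eq_true_eq] at this
  exact ord_of_check hF ha hj D0 hD _ this.1 _ this.2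

lemma swap_zero (hF : IsSiegelCuspForm j 2 Sp4Z (fun _ => 1) F) (ha : IsCoef F a) (n r m : ℤ) (h : a m r n = 0) :
    a n r m = 0 := by
  apply ha.equiv_zero hF 0 1 1 0 (by norm_num) n r m
  rw [show n * 0 * 0 + r * 0 * 1 + m * 1 * 1 = m by ring, show 2 * n * 0 * 1 + r * (0 * 0 + 1 * 1) + 2 * m * 1 * 0 = r by ring,
    show n * 1 * 1 + r * 1 * 0 + m * 0 * 0 = n by ring]
  exact h

lemma Dz_step (hF : IsSiegelCuspForm j 2 Sp4Z (fun _ => 1) F) (ha : IsCoef F a) (D : ℕ) (hD : Dz a D)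
    (h : ∀ n b : ℤ, b = 0 ∨ b = 1 → 4 * n - b = D → a 1 b n = 0) : Dz a (D + 1) := by
  have key : ∀ r m : ℤ, 4 * m - r * r = D → a 1 r m = 0 := by
    intro r m hr
    apply ha.equiv_zero hF 1 (-(r / 2)) 0 1 (by norm_num) 1 r m
    have hb : r % 2 = 0 ∨ r % 2 = 1 := by omega
    have hr2 : r = 2 * (r / 2) + r % 2 := by omega
    set s := r / 2
    set b := r % 2
    rw [show (1 : ℤ) * 1 * 1 + r * 1 * 0 + m * 0 * 0 = 1 by ring, show 2 * 1 * 1 * -s + r * (1 * 1 + -s * 0) + 2 * m * 0 * 1 = b by rw [hr2]; ring]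
    apply h _ _ hb
    have hbb : b * b = b := by rcases hb with h | h <;> rw [h] <;> norm_num
    rw [← hr, hr2]; ring_nf
    rw [pow_two b, hbb]
  intro n r m hnm hlt
  rcases lt_or_ge (4 * n * m - r * r) D with h1 | h1
  · exact hD n r m hnm h1
  have h2 : 4 * n * m - r * r = D := by push_cast at hlt; omega
  rcases hnm with h3 | h3
  · subst h3
    exact key r m (by linarith)
  · subst h3
    exact swap_zero hF ha _ _ _ (key r n (by linarith))

lemma Dz_one (hF : IsSiegelCuspForm j 2 Sp4Z (fun _ => 1) F) (ha : IsCoef F a) : Dz a 1 := by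
  intro n r m _ hlt
  by_contra hne
  have := (ha.supp hF n r m hne).2.2
  push_cast at hlt
  omega

lemma Dz_three (hF : IsSiegelCuspForm j 2 Sp4Z (fun _ => 1) F) (ha : IsCoef F a) : Dz a 3 := by
  have h2 := Dz_step hF ha 1 (Dz_one hF ha) (by intro n b hb h; exfalso; push_cast at h; omega)
  exact Dz_step hF ha 2 h2 (by intro n b hb h; exfalso; push_cast at h; omega)

lemma stage (hF : IsSiegelCuspForm j 2 Sp4Z (fun _ => 1) F) (ha : IsCoef F a) (hj : Even j) (hj2 : j < 65) (D : ℕ) (hD : Dz a D)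
    (n b : ℤ) (hb : b = 0 ∨ b = 1) (hn : 4 * n - b = D) (tbl : List (ℕ × ℕ)) (hc : tchk D tbl = true)
    (hp : pchk 1 b n tbl 65 = true) : Dz a (D + 1) := by
  apply Dz_step hF ha D hD
  intro n' b' hb' h'
  obtain ⟨rfl, rfl⟩ : b' = b ∧ n' = n := by omega
  exact kill_pchk hF ha _ _ _ tbl (tbl_ord hF ha hj D hD tbl hc) 65 hj2 hp

lemma Dz_skip (hF : IsSiegelCuspForm j 2 Sp4Z (fun _ => 1) F) (ha : IsCoef F a) (D : ℕ) (hD : Dz a D) (h : D % 4 = 1) :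
    Dz a (D + 2) := by
  have h2 := Dz_step hF ha D hD (by intro n b hb h; exfalso; omega)
  exact Dz_step hF ha (D + 1) h2 (by intro n b hb h; exfalso; push_cast at h; omega)

def tb3 : List (ℕ × ℕ) := [(1,8),(3,4),(7,2),(13,1)]

lemma tchk3 : tchk 3 tb3 = true := by decide +kernel

lemma stages (hF : IsSiegelCuspForm j 2 Sp4Z (fun _ => 1) F) (ha : IsCoef F a) (hj : Even j) (hj2 : j < 65)
    (h0 : a 1 1 1 = 0) : Dz a 23 := by
  have d4 : Dz a 4 := Dz_step hF ha 3 (Dz_three hF ha) (by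
    intro n b hb h
    obtain ⟨rfl, rfl⟩ : b = 1 ∧ n = 1 := by push_cast at h; omega
    exact h0)
  have d5 := stage hF ha hj hj2 4 d4 1 0 (by norm_num) (by norm_num) [(1,14),(2,6),(5,3),(10,2),(13,2)]
    (by decide +kernel) (by decide +kernel)
  have d7 := Dz_skip hF ha 5 d5 (by norm_num)
  have d8 := stage hF ha hj hj2 7 d7 2 1 (by norm_num) (by norm_num) [(1,20),(2,9),(4,5),(7,4),(8,3),(11,2),(14,2)]
    (by decide +kernel) (by decide +kernel)
  have d9 := stage hF ha hj hj2 8 d8 2 0 (by norm_num) (by norm_num) [(1,26),(2,14),(3,7),(6,4),(9,3)]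
    (by decide +kernel) (by decide +kernel)
  have d11 := Dz_skip hF ha 9 d9 (by norm_num)
  have d12 := stage hF ha hj hj2 11 d11 3 1 (by norm_num) (by norm_num) [(1,32),(3,10),(5,6),(9,3)]
    (by decide +kernel) (by decide +kernel)
  have d13 := stage hF ha hj hj2 12 d12 3 0 (by norm_num) (by norm_num) [(1,38),(3,14),(4,8)]
    (by decide +kernel) (by decide +kernel)
  have d15 := Dz_skip hF ha 13 d13 (by norm_num)
  have d16 := stage hF ha hj hj2 15 d15 4 1 (by norm_num) (by norm_num) [(1,44),(4,10),(6,6)]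
    (by decide +kernel) (by decide +kernel)
  have d17 := stage hF ha hj hj2 16 d16 4 0 (by norm_num) (by norm_num) [(1,50),(4,14),(5,8)]
    (by decide +kernel) (by decide +kernel)
  have d19 := Dz_skip hF ha 17 d17 (by norm_num)
  have d20 := stage hF ha hj hj2 19 d19 5 1 (by norm_num) (by norm_num) [(1,56),(5,10)]
    (by decide +kernel) (by decide +kernel)
  have d21 := stage hF ha hj hj2 20 d20 5 0 (by norm_num) (by norm_num) [(1,62),(5,12)]
    (by decide +kernel) (by decide +kernel)
  exact Dz_skip hF ha 21 d21 (by norm_num)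

lemma phi1_zero (hF : IsSiegelCuspForm j 2 Sp4Z (fun _ => 1) F) (ha : IsCoef F a) (hj : Even j) (hj2 : j < 65)
    (hD : Dz a 23) (n r : ℤ) : a n r 1 = 0 := by
  have := ord_of_low hF ha hj 1 6 (fun n hn r => hD n r 1 (Or.inr rfl) (by push_cast at hn ⊢; nlinarith [mul_self_nonneg r])) 68 (by norm_num)
  exact ord_all 1 68 (by omega) (by exact_mod_cast this) n r

def tb2 (μ n0 : ℕ) : List (ℕ × ℕ) :=
  (μ, 12 * n0 - 2 * μ - 2) :: ((List.range (6 * μ)).map fun v => (v, 12 * μ - 2 * v - 2))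

lemma smallchk : (([(2,2),(2,3),(2,4),(3,3)] : List (ℕ × ℕ)).all fun q =>
    (List.range (2 * q.1 + 1)).all fun r => pchk q.2 ((r : ℤ) - q.1) q.1 (tb2 q.1 q.2) 65) = true := by decide +kernel

lemma induct_step (hF : IsSiegelCuspForm j 2 Sp4Z (fun _ => 1) F) (ha : IsCoef F a) (hj : Even j) (hj2 : j < 65)
    (μ : ℕ) (hμ : 2 ≤ μ) (hlow : ∀ m < (μ : ℤ), ∀ n r, a n r m = 0) (n0 : ℕ) : ∀ r, a n0 r μ = 0 := by
  induction n0 using Nat.strong_induction_on with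
  | _ n0 ih =>
    intro r
    have hlow' : ∀ n < (μ : ℤ), ∀ r m, a n r m = 0 := fun n hn r m => swap_zero hF ha _ _ _ (hlow n hn m r)
    by_cases hn : n0 < μ
    · exact hlow' _ (by exact_mod_cast hn) _ _
    have ihz : ∀ n < (n0 : ℤ), ∀ r, a n r μ = 0 := by
      intro n hn r
      by_cases h : n < 0
      · exact hlow' n (by omega) r _
      · have := ih n.toNat (by omega) r
        rwa [show ((n.toNat : ℕ) : ℤ) = n by omega] at this
    have O1 : ∀ m' : ℕ, OrdGE a m' (12 * μ - 2 * m' - 2) := by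
      intro m'
      by_cases h : 2 * m' + 2 ≤ 12 * μ
      · exact ord_of_low hF ha hj m' μ (fun n hn r => hlow' n hn r _) _ (by omega)
      · rw [show 12 * μ - 2 * m' - 2 = 0 by omega]; exact ord_zero _
    have O2 : OrdGE a μ (12 * n0 - 2 * μ - 2) := ord_of_low hF ha hj μ n0 ihz _ (by omega)
    by_cases hr1 : (μ : ℤ) < r
    · apply ha.equiv_zero hF 1 0 (-1) 1 (by norm_num) n0 r μ
      rw [show (n0 : ℤ) * 0 * 0 + r * 0 * 1 + (μ:ℤ) * 1 * 1 = μ by ring]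
      exact ihz _ (by linarith) _
    by_cases hr2 : r < -(μ : ℤ)
    · apply ha.equiv_zero hF 1 0 1 1 (by norm_num) n0 r μ
      rw [show (n0 : ℤ) * 0 * 0 + r * 0 * 1 + (μ:ℤ) * 1 * 1 = μ by ring]
      exact ihz _ (by linarith) _
    by_cases h7 : 7 ≤ μ + n0
    · refine kill _ [(0, 1, 12 * n0 - 2 * μ - 2), (1, 0, 12 * μ - 2 * n0 - 2)] (by simp [npar]) (by simp) ?_ (by simp; omega)
      intro v hv
      rcases List.mem_cons.1 hv with rfl | hv
      · apply LL_pow hF ha _ _ _ _ _ isCoprime_one_right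
        convert O2 using 1; ring
      · rw [List.mem_singleton.1 hv]
        apply LL_pow hF ha _ _ _ _ _ isCoprime_one_left
        convert O1 n0 using 1; ring
    · have hmem : (μ, n0) ∈ ([(2,2),(2,3),(2,4),(3,3)] : List (ℕ × ℕ)) := by
        have : (μ = 2 ∧ n0 = 2) ∨ (μ = 2 ∧ n0 = 3) ∨ (μ = 2 ∧ n0 = 4) ∨ (μ = 3 ∧ n0 = 3) := by omega
        simpa using this
      have h1 := List.all_eq_true.1 (List.all_eq_true.1 smallchk _ hmem) (r + μ).toNat (List.mem_range.2 (by simp only; omega))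
      simp only at h1
      rw [show (((r + μ).toNat : ℕ) : ℤ) - μ = r by omega] at h1
      refine kill_pchk hF ha _ _ _ (tb2 μ n0) ?_ 65 hj2 h1
      intro e he
      rcases List.mem_cons.1 he with rfl | he
      · exact O2
      · obtain ⟨v, _, rfl⟩ := List.mem_map.1 he
        exact O1 v

lemma all_zero (hF : IsSiegelCuspForm j 2 Sp4Z (fun _ => 1) F) (ha : IsCoef F a) (hj : Even j) (hj2 : j < 65)
    (h0 : a 1 1 1 = 0) : F = 0 := by
  have hneg : ∀ n r m, m < 1 ∨ n < 1 → a n r m = 0 := by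
    intro n r m h
    by_contra hne
    have := ha.supp hF n r m hne
    omega
  have key : ∀ μ : ℕ, ∀ n r, a n r μ = 0 := by
    intro μ
    induction μ using Nat.strong_induction_on with
    | _ μ ih =>
      intro n r
      rcases Nat.lt_or_ge μ 2 with h | h
      · by_cases h1 : μ = 0
        · exact hneg _ _ _ (Or.inl (by omega))
        · rw [show μ = 1 by omega]
          exact phi1_zero hF ha hj hj2 (stages hF ha hj hj2 h0) n r
      · by_cases hn : n < 1
        · exact hneg _ _ _ (Or.inr hn)
        · have := induct_step hF ha hj hj2 μ h (fun m hm n r => by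
            by_cases h1 : m < 1
            · exact hneg _ _ _ (Or.inl h1)
            · have := ih m.toNat (by omega) n r
              rwa [show ((m.toNat : ℕ) : ℤ) = m by omega] at this) n.toNat r
          rwa [show ((n.toNat : ℕ) : ℤ) = n by omega] at this
  apply zero_of_coef hF ha
  intro n r m
  by_cases h1 : m < 1
  · exact hneg _ _ _ (Or.inl h1)
  · have := key m.toNat n r
    rwa [show ((m.toNat : ℕ) : ℤ) = m by omega] at this

lemma a2_zero (hF : IsSiegelCuspForm j 2 Sp4Z (fun _ => 1) F) (ha : IsCoef F a) (hj : Even j) (hj2 : j < 54) : a 1 1 1 = 0 :=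
  kill_pchk hF ha _ _ _ tb3 (tbl_ord hF ha hj 3 (Dz_three hF ha) tb3 tchk3) 54 hj2 (by decide +kernel)

lemma a2_zero' (hF : IsSiegelCuspForm j 2 Sp4Z (fun _ => 1) F) (ha : IsCoef F a) (hj : Even j) (hj2 : j < 65)
    (h1 : hom (a 1 1 1) 1 10 = 0) (h2 : hom (a 1 1 1) 1 20 = 0) : a 1 1 1 = 0 := by
  have R : ∀ x y : ℂ, hom (a 1 1 1) x y = 0 → hom (a 1 1 1) (-y) (x + y) = 0 := by
    intro x y h
    have := ha.equiv hF 0 (-1) 1 1 (by norm_num) 1 1 1 x y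
    norm_num at this
    rw [← this]; exact h
  have S : ∀ x y : ℂ, hom (a 1 1 1) x y = 0 → hom (a 1 1 1) y x = 0 := by
    intro x y h
    have := ha.equiv hF 0 1 1 0 (by norm_num) 1 1 1 x y
    norm_num at this
    rw [← this]; exact h
  have six : ∀ t : ℤ, hom (a 1 1 1) 1 t = 0 → ∀ v ∈ ([(1,t,1),(-t,1+t,1),(-(1+t),1,1),(t,1,1),(1+t,-t,1),(1,-(1+t),1)] : List (ℤ × ℤ × ℕ)),
      hom (a 1 1 1) v.1 v.2.1 = 0 ∧ v.2.2 = 1 := by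
    intro t ht v hv
    have r1 := R _ _ ht
    have r2 := R _ _ r1
    rw [show (-(t : ℂ) + (1 + t)) = 1 by ring] at r2
    have s0 := S _ _ ht
    have s1 := S _ _ r1
    have s2 := S _ _ r2
    simp only [List.mem_cons, List.not_mem_nil, or_false] at hv
    rcases hv with rfl | rfl | rfl | rfl | rfl | rfl <;> refine ⟨?_, rfl⟩ <;> push_cast <;> assumption
  have six1 := six 10 (by exact_mod_cast h1)
  have six2 := six 20 (by exact_mod_cast h2)
  refine kill _ (stageVs 1 1 1 tb3 ++ ([(1,10,1),(-10,1+10,1),(-(1+10),1,1),(10,1,1),(1+10,-10,1),(1,-(1+10),1)] ++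
    [(1,20,1),(-20,1+20,1),(-(1+20),1,1),(20,1,1),(1+20,-20,1),(1,-(1+20),1)])) (by decide +kernel) (by decide +kernel) ?_
    (lt_of_lt_of_le hj2 (by decide +kernel))
  intro v hv
  have hgen : (hom (a 1 1 1) v.1 v.2.1 = 0 ∧ v.2.2 = 1) → ¬ (v.1 = 0 ∧ v.2.1 = 0) → LL v.1 v.2.1 ^ v.2.2 ∣ PT (a 1 1 1) := by
    rintro ⟨h3, h4⟩ h5
    rw [h4, pow_one]
    exact LL_root _ _ _ h5 h3
  have hnz : ∀ v ∈ ([(1,10,1),(-10,1+10,1),(-(1+10),1,1),(10,1,1),(1+10,-10,1),(1,-(1+10),1)] ++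
    [(1,20,1),(-20,1+20,1),(-(1+20),1,1),(20,1,1),(1+20,-20,1),(1,-(1+20),1)] : List (ℤ × ℤ × ℕ)), ¬ (v.1 = 0 ∧ v.2.1 = 0) := by
    decide +kernel
  rcases List.mem_append.1 hv with h | h
  · exact stage_dvd hF ha 1 1 1 tb3 (tbl_ord hF ha hj 3 (Dz_three hF ha) tb3 tchk3) v h
  · refine hgen ?_ (hnz v h)
    rcases List.mem_append.1 h with h | h
    · exact six1 v h
    · exact six2 v h
end stg
end partF2

section partH1
section fin
variable {j : ℕ}

lemma vanish {F : (Fin 2 → Fin 2 → ℂ) → (Fin (j + 1) → ℂ)} {a : ℤ → ℤ → ℤ → Fin (j + 1) → ℂ}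
    (hF : IsSiegelCuspForm j 2 Sp4Z (fun _ => 1) F) (ha : IsCoef F a) (hj2 : j < 66)
    (h : j < 54 ∨ (hom (a 1 1 1) 1 10 = 0 ∧ hom (a 1 1 1) 1 20 = 0)) : F = 0 := by
  rcases Nat.even_or_odd j with hj | hj
  · have hj3 : j < 65 := by have := Nat.even_iff.1 hj; omega
    rcases h with h | h
    · exact all_zero hF ha hj hj3 (a2_zero hF ha hj h)
    · exact all_zero hF ha hj hj3 (a2_zero' hF ha hj hj3 h.1 h.2)
  · exact zero_of_coef hF ha (odd_zero hF ha hj)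

noncomputable def cf (F : SiegelCusp j 2 Sp4Z (fun _ => 1)) : ℤ → ℤ → ℤ → Fin (j + 1) → ℂ :=
  Classical.choose (exists_coef F.2)

lemma cf_spec (F : SiegelCusp j 2 Sp4Z (fun _ => 1)) : IsCoef F.1 (cf F) := Classical.choose_spec (exists_coef F.2)

lemma cf_add (F G : SiegelCusp j 2 Sp4Z (fun _ => 1)) : cf (F + G) = cf F + cf G := by
  refine IsCoef.unique (cf_spec _) ?_
  intro l p hp
  have h1 := cf_spec F l p hp
  have h2 := cf_spec G l p hp
  have e : ∀ t : ℤ × ℤ × ℤ, (cf F + cf G) t.2.1 t.2.2 t.1 l * ex3 t p =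
      cf F t.2.1 t.2.2 t.1 l * ex3 t p + cf G t.2.1 t.2.2 t.1 l * ex3 t p := by
    intro t; simp only [Pi.add_apply]; ring
  simp only [e]
  exact ⟨Summable.of_nonneg_of_le (fun _ => norm_nonneg _) (fun t => norm_add_le _ _) (h1.1.add h2.1), h1.2.add h2.2⟩

lemma cf_smul (c : ℂ) (F : SiegelCusp j 2 Sp4Z (fun _ => 1)) : cf (c • F) = c • cf F := by
  refine IsCoef.unique (cf_spec _) ?_
  intro l p hp
  have h1 := cf_spec F l p hp
  have e : ∀ t : ℤ × ℤ × ℤ, (c • cf F) t.2.1 t.2.2 t.1 l * ex3 t p =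
      c * (cf F t.2.1 t.2.2 t.1 l * ex3 t p) := by
    intro t; simp only [Pi.smul_apply, smul_eq_mul]; ring
  simp only [e, norm_mul c]
  exact ⟨h1.1.mul_left _, h1.2.mul_left c⟩

lemma hom_add (v w : Fin (j + 1) → ℂ) (x y : ℂ) : hom (v + w) x y = hom v x y + hom w x y := by
  simp [hom, add_mul, Finset.sum_add_distrib]

noncomputable def evm : SiegelCusp j 2 Sp4Z (fun _ => 1) →ₗ[ℂ] (Fin 2 → ℂ) where
  toFun F := ![hom (cf F 1 1 1) 1 10, hom (cf F 1 1 1) 1 20]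
  map_add' F G := by
    rw [cf_add]
    funext i; fin_cases i <;> simp [hom_add]
  map_smul' c F := by
    rw [cf_smul]
    funext i; fin_cases i <;> simp [hom_smul]
end fin
end partH1

/-- For every integer `j` with `0 ≤ j < 54` one has `dim S_{j,2}(Γ₂) ≤ 1`, and for every
integer `j` with `0 ≤ j < 66` one has `dim S_{j,2}(Γ₂) ≤ 2`. -/
theorem dim_bounds_Sj2_level_one :
    (∀ j : ℕ, j < 54 → Module.rank ℂ ↥(SiegelCusp j 2 Sp4Z (fun _ => 1)) ≤ 1) ∧
    (∀ j : ℕ, j < 66 → Module.rank ℂ ↥(SiegelCusp j 2 Sp4Z (fun _ => 1)) ≤ 2) := by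
  constructor
  · intro j hj
    have : Subsingleton ↥(SiegelCusp j 2 Sp4Z (fun _ => 1)) := ⟨fun F G => by
      apply Subtype.ext
      rw [vanish F.2 (cf_spec F) (by omega) (Or.inl hj), vanish G.2 (cf_spec G) (by omega) (Or.inl hj)]⟩
    rw [rank_subsingleton']
    exact zero_le_one
  · intro j hj
    have hinj : Function.Injective (evm (j := j)) := by
      rw [injective_iff_map_eq_zero]
      intro F hF
      apply Subtype.ext
      have h0 := congrFun hF 0
      have h1 := congrFun hF 1
      exact vanish F.2 (cf_spec F) hj (Or.inr ⟨h0, h1⟩)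
    have := LinearMap.rank_le_of_injective _ hinj
    rw [rank_fin_fun] at this
    exact_mod_cast this
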